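/- Let 0 < γ ≤ 1 and δ > 0 satisfy 1714(1−γ) + 1725δ < 46. Then there exist ε > 0 and C > 0, depending only on γ and δ, such that for every integer N ≥ 2 and every real α one has |T₃(N,α) − S₃(N,α)| ≤ C·P^{1−δ−ε}, where P = N^{1/3}. -/

import Mathlib

open scoped Classical

/-- `e(x) = exp(2πix)`. -/
noncomputable def eexp (x : ℝ) : ℂ := Complex.exp (2 * Real.pi * Complex.I * x)

/-- The Piatetski-Shapiro prime set `𝒫_γ = {p prime : p = ⌊n^{1/γ}⌋ for some n ∈ ℕ, n ≥ 1}`. -/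
def PiatetskiShapiroSet (γ : ℝ) : Set ℕ :=
  {p | Nat.Prime p ∧ ∃ n : ℕ, 0 < n ∧ p = ⌊(n : ℝ) ^ ((1 : ℝ) / γ)⌋₊}

/-- `S₃(N,α) = Σ_{p ≤ N^{1/3}, p prime} e(αp³)`. -/
noncomputable def S₃ (N : ℕ) (α : ℝ) : ℂ :=
  ∑ p ∈ (Finset.range (N + 1)).filter
      (fun p => Nat.Prime p ∧ (p : ℝ) ≤ (N : ℝ) ^ ((1 : ℝ) / 3)),
    eexp (α * (p : ℝ) ^ 3)

/-- `T₃(N,α) = γ⁻¹ Σ_{p ≤ N^{1/3}, p ∈ 𝒫_γ} p^{1-γ} e(αp³)`. -/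
noncomputable def T₃ (γ : ℝ) (N : ℕ) (α : ℝ) : ℂ :=
  (γ⁻¹ : ℝ) * ∑ p ∈ (Finset.range (N + 1)).filter
      (fun p => p ∈ PiatetskiShapiroSet γ ∧ (p : ℝ) ≤ (N : ℝ) ^ ((1 : ℝ) / 3)),
    (((p : ℝ) ^ (1 - γ) : ℝ) : ℂ) * eexp (α * (p : ℝ) ^ 3)


lemma eexp_add (x y : ℝ) : eexp (x + y) = eexp x * eexp y := by
  unfold eexp
  rw [← Complex.exp_add]
  congr 1
  push_cast
  ring

lemma eexp_norm (x : ℝ) : ‖eexp x‖ = 1 := by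
  unfold eexp
  rw [show (2 * Real.pi * Complex.I * x : ℂ) = ((2 * Real.pi * x : ℝ) : ℂ) * Complex.I by
    push_cast; ring]
  exact Complex.norm_exp_ofReal_mul_I _

lemma eexp_zero : eexp 0 = 1 := by simp [eexp]

lemma eexp_conj (x : ℝ) : (starRingEnd ℂ) (eexp x) = eexp (-x) := by
  unfold eexp
  rw [← Complex.exp_conj]
  congr 1
  simp [Complex.conj_ofNat]

lemma eexp_eq_cos_sin (x : ℝ) :
    eexp x = (Real.cos (2 * Real.pi * x) : ℂ) + (Real.sin (2 * Real.pi * x) : ℂ) * Complex.I := by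
  unfold eexp
  rw [show (2 * Real.pi * Complex.I * x : ℂ) = ((2 * Real.pi * x : ℝ) : ℂ) * Complex.I by
    push_cast; ring, Complex.exp_mul_I]
  simp

/-- weight `1/(1-e(d))` written with the cotangent -/
noncomputable def klw (d : ℝ) : ℂ :=
  1 / 2 + (Real.cos (Real.pi * d) / Real.sin (Real.pi * d) : ℝ) / 2 * Complex.I

lemma klw_mul {d : ℝ} (h : Real.sin (Real.pi * d) ≠ 0) : klw d * (1 - eexp d) = 1 := by
  rw [eexp_eq_cos_sin, show 2 * Real.pi * d = 2 * (Real.pi * d) by ring, Real.cos_two_mul,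
    Real.sin_two_mul]
  unfold klw
  set s := Real.sin (Real.pi * d)
  set c := Real.cos (Real.pi * d)
  have hsc : s ^ 2 + c ^ 2 = 1 := Real.sin_sq_add_cos_sq _
  apply Complex.ext
  · simp [pow_two]
    field_simp
    nlinarith
  · simp [pow_two]
    field_simp
    linear_combination (-2 * c) * hsc

lemma cot_bounds {d : ℝ} (h0 : 0 < d) (h1 : d ≤ 1 / 2) :
    0 < Real.sin (Real.pi * d) ∧ 0 ≤ Real.cos (Real.pi * d) / Real.sin (Real.pi * d) ∧
    Real.cos (Real.pi * d) / Real.sin (Real.pi * d) ≤ 1 / (2 * d) := by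
  have hpi := Real.pi_pos
  have h2 : Real.pi * d ≤ Real.pi / 2 := by nlinarith
  have hs : 2 * d ≤ Real.sin (Real.pi * d) := by
    have := Real.mul_le_sin (x := Real.pi * d) (by positivity) h2
    calc 2 * d = 2 / Real.pi * (Real.pi * d) := by field_simp
      _ ≤ _ := this
  have hs0 : 0 < Real.sin (Real.pi * d) := by linarith
  have hc0 : 0 ≤ Real.cos (Real.pi * d) :=
    Real.cos_nonneg_of_neg_pi_div_two_le_of_le (by nlinarith) h2
  refine ⟨hs0, by positivity, ?_⟩
  exact div_le_div₀ (by norm_num) (Real.cos_le_one _) (by positivity) hs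

lemma cot_anti {d e : ℝ} (h0 : 0 < d) (hde : d ≤ e) (h1 : e ≤ 1 / 2) :
    Real.cos (Real.pi * e) / Real.sin (Real.pi * e) ≤
      Real.cos (Real.pi * d) / Real.sin (Real.pi * d) := by
  have hpi := Real.pi_pos
  have h2 : Real.pi * e ≤ Real.pi / 2 := by nlinarith
  have hde' : Real.pi * d ≤ Real.pi * e := by nlinarith
  have hd0 : 0 < Real.pi * d := by positivity
  have b := cot_bounds h0 (hde.trans h1)
  apply div_le_div₀
  · exact Real.cos_nonneg_of_neg_pi_div_two_le_of_le (by nlinarith) (by nlinarith)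
  · exact Real.cos_le_cos_of_nonneg_of_le_pi (by linarith) (by nlinarith) hde'
  · exact b.1
  · exact Real.sin_le_sin_of_le_of_le_pi_div_two (by nlinarith) h2 hde'

lemma klw_norm {d : ℝ} (h0 : 0 < d) (h1 : d ≤ 1 / 2) : ‖klw d‖ ≤ 1 / (2 * d) := by
  obtain ⟨_, b, c⟩ := cot_bounds h0 h1
  unfold klw
  set t := Real.cos (Real.pi * d) / Real.sin (Real.pi * d)
  have h2 : (1 : ℝ) / 2 ≤ 1 / (4 * d) := by
    apply div_le_div₀ <;> linarith
  have h3 : 1 / (2 * d) = 1 / (4 * d) + 1 / (4 * d) := by field_simp; norm_num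
  have h4 : 1 / (2 * d) / 2 = 1 / (4 * d) := by field_simp; norm_num
  calc _ ≤ ‖(1 / 2 : ℂ)‖ + ‖(t : ℂ) / 2 * Complex.I‖ := norm_add_le _ _
    _ = 1 / 2 + t / 2 := by simp [abs_of_nonneg b]
    _ ≤ _ := by linarith

/-- Kusmin–Landau -/
lemma kl_range (g : ℕ → ℝ) (K : ℕ) (lo : ℝ) (hlo : 0 < lo)
    (hd : ∀ i, i + 1 < K → lo ≤ g (i + 1) - g i ∧ g (i + 1) - g i ≤ 1 / 2)
    (hanti : ∀ i, i + 2 < K → g (i + 2) - g (i + 1) ≤ g (i + 1) - g i) :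
    ‖∑ i ∈ Finset.range K, eexp (g i)‖ ≤ 2 / lo + 1 := by
  rcases Nat.lt_or_ge K 2 with hK | hK
  · have : ‖∑ i ∈ Finset.range K, eexp (g i)‖ ≤ ∑ i ∈ Finset.range K, 1 :=
      norm_sum_le_of_le _ (fun i _ => (eexp_norm _).le)
    have h2 : (K : ℝ) ≤ 1 := by exact_mod_cast (by omega : K ≤ 1)
    have h3 : 0 < 2 / lo := by positivity
    simp at this
    linarith
  set d : ℕ → ℝ := fun i => g (i + 1) - g i with hdd
  set t : ℕ → ℝ := fun i => Real.cos (Real.pi * d i) / Real.sin (Real.pi * d i) with ht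
  have hz : ∀ i, i + 1 < K → eexp (g i) = klw (d i) * (eexp (g i) - eexp (g (i + 1))) := by
    intro i hi
    have h1 := klw_mul (d := d i) (cot_bounds (by linarith [(hd i hi).1]) (hd i hi).2).1.ne'
    have : eexp (g (i + 1)) = eexp (g i) * eexp (d i) := by
      rw [← eexp_add]; congr 1; simp [hdd]
    rw [this]
    linear_combination (-eexp (g i)) * h1
  have key : ∀ k, k + 1 < K → ‖∑ i ∈ Finset.range (k + 1), eexp (g i) +
      klw (d k) * eexp (g (k + 1))‖ ≤ ‖klw (d 0)‖ + (t k - t 0) / 2 := by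
    intro k
    induction k with
    | zero =>
      intro h
      have := hz 0 h
      simp only [zero_add, Finset.sum_range_one]
      have e1 : eexp (g 0) + klw (d 0) * eexp (g 1) = klw (d 0) * eexp (g 0) := by
        linear_combination this
      rw [e1, norm_mul, eexp_norm]
      simp
    | succ k ih =>
      intro h
      have ih := ih (by omega)
      have h1 := hz (k + 1) h
      rw [Finset.sum_range_succ]
      have e1 : ∑ i ∈ Finset.range (k + 1), eexp (g i) + eexp (g (k + 1)) +
          klw (d (k + 1)) * eexp (g (k + 1 + 1)) =
          (∑ i ∈ Finset.range (k + 1), eexp (g i) + klw (d k) * eexp (g (k + 1))) +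
          (((t (k + 1) - t k) / 2 : ℝ) : ℂ) * Complex.I * eexp (g (k + 1)) := by
        have : klw (d (k + 1)) - klw (d k) = (((t (k + 1) - t k) / 2 : ℝ) : ℂ) * Complex.I := by
          simp only [klw, ht]; push_cast; ring
        rw [← this]
        linear_combination h1
      rw [e1]
      have h2 : t k ≤ t (k + 1) :=
        cot_anti (by linarith [(hd (k + 1) h).1]) (hanti k (by omega)) (hd k (by omega)).2
      have h3 : ‖(((t (k + 1) - t k) / 2 : ℝ) : ℂ) * Complex.I * eexp (g (k + 1))‖ =
          (t (k + 1) - t k) / 2 := by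
        rw [norm_mul, norm_mul, eexp_norm, Complex.norm_I, Complex.norm_real, Real.norm_eq_abs,
          abs_of_nonneg (by linarith)]
        ring
      refine (norm_add_le _ _).trans ?_
      rw [h3]
      linarith
  obtain ⟨k, rfl⟩ : ∃ k, K = k + 2 := ⟨K - 2, by omega⟩
  have h1 := key k (by omega)
  have hdk := hd k (by omega)
  have hd0 := hd 0 (by omega)
  have e1 : ∑ i ∈ Finset.range (k + 2), eexp (g i) =
      (∑ i ∈ Finset.range (k + 1), eexp (g i) + klw (d k) * eexp (g (k + 1))) +
      (-(klw (d k) * eexp (g (k + 1))) + eexp (g (k + 1))) := by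
    rw [Finset.sum_range_succ]; ring
  have h2 : ‖-(klw (d k) * eexp (g (k + 1))) + eexp (g (k + 1))‖ ≤ ‖klw (d k)‖ + 1 := by
    refine (norm_add_le _ _).trans ?_
    rw [norm_neg, norm_mul, eexp_norm, mul_one]
  have hb : ∀ x, lo ≤ x → 1 / (2 * x) ≤ 1 / (2 * lo) := fun x hx =>
    div_le_div_of_nonneg_left (by norm_num) (by positivity) (by linarith)
  have w0 := (klw_norm (by linarith : 0 < d 0) hd0.2).trans (hb _ hd0.1)
  have wk := (klw_norm (by linarith : 0 < d k) hdk.2).trans (hb _ hdk.1)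
  have t0 := (cot_bounds (by linarith : 0 < d 0) hd0.2).2.1
  have tk := (cot_bounds (by linarith : 0 < d k) hdk.2).2.2.trans (hb _ hdk.1)
  have e2 : 2 / lo = 4 * (1 / (2 * lo)) := by field_simp; norm_num
  have e3 : 0 < 1 / (2 * lo) := by positivity
  rw [e1]
  refine (norm_add_le _ _).trans ?_
  change 0 ≤ t 0 at t0
  change t k ≤ _ at tk
  linarith



lemma sum_image_le (c : ℕ → ℝ) (hc : ∀ n, 0 ≤ c n) (s t : Finset ℕ) (φ : ℕ → ℕ)
    (hinj : Set.InjOn φ s) (hst : ∀ i ∈ s, φ i ∈ t) :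
    ∑ i ∈ s, c (φ i) ≤ ∑ q ∈ t, c q := by
  rw [← Finset.sum_image hinj]
  apply Finset.sum_le_sum_of_subset_of_nonneg
  · intro x hx
    obtain ⟨i, hi, rfl⟩ := Finset.mem_image.mp hx
    exact hst i hi
  · intro i _ _
    exact hc i

lemma sum_dist_le (c : ℕ → ℝ) (hc : ∀ n, 0 ≤ c n) (Q i : ℕ) (hi : i < Q) :
    ∑ j ∈ Finset.range Q, c (if i ≤ j then j - i else i - j) ≤
      c 0 + 2 * ∑ q ∈ Finset.Ioo 0 Q, c q := by
  have h1 : ∑ j ∈ Finset.range Q, c (if i ≤ j then j - i else i - j) =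
      c 0 + ∑ j ∈ (Finset.range Q).erase i, c (if i ≤ j then j - i else i - j) := by
    rw [← Finset.add_sum_erase _ _ (Finset.mem_range.mpr hi)]
    simp
  rw [h1, ← Finset.sum_filter_add_sum_filter_not _ (fun j => i ≤ j)]
  have h2 : ∑ j ∈ ((Finset.range Q).erase i).filter (fun j => i ≤ j),
      c (if i ≤ j then j - i else i - j) ≤ ∑ q ∈ Finset.Ioo 0 Q, c q := by
    apply sum_image_le c hc _ _ (fun j => if i ≤ j then j - i else i - j)
    · intro x hx y hy hxy
      simp at hx hy hxy
      grind
    · intro x hx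
      simp at hx ⊢
      grind
  have h3 : ∑ j ∈ ((Finset.range Q).erase i).filter (fun j => ¬ i ≤ j),
      c (if i ≤ j then j - i else i - j) ≤ ∑ q ∈ Finset.Ioo 0 Q, c q := by
    apply sum_image_le c hc _ _ (fun j => if i ≤ j then j - i else i - j)
    · intro x hx y hy hxy
      simp at hx hy hxy
      grind
    · intro x hx
      simp at hx ⊢
      grind
  linarith

lemma norm_sum_sq_le {ι : Type*} (s : Finset ι) (f : ι → ℂ) :
    ‖∑ i ∈ s, f i‖ ^ 2 ≤ (s.card : ℝ) * ∑ i ∈ s, ‖f i‖ ^ 2 := by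
  have h1 : ‖∑ i ∈ s, f i‖ ≤ ∑ i ∈ s, ‖f i‖ := norm_sum_le _ _
  calc ‖∑ i ∈ s, f i‖ ^ 2 ≤ (∑ i ∈ s, ‖f i‖) ^ 2 := by gcongr
    _ ≤ _ := sq_sum_le_card_mul_sum_sq

lemma sum_norm_sq_le {ι κ : Type*} (s : Finset ι) (t : Finset κ) (F : ι → κ → ℂ) :
    ∑ k ∈ s, ‖∑ j ∈ t, F k j‖ ^ 2 ≤
      ∑ i ∈ t, ∑ j ∈ t, ‖∑ k ∈ s, F k i * (starRingEnd ℂ) (F k j)‖ := by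
  have h : ((∑ k ∈ s, ‖∑ j ∈ t, F k j‖ ^ 2 : ℝ) : ℂ) =
      ∑ i ∈ t, ∑ j ∈ t, ∑ k ∈ s, F k i * (starRingEnd ℂ) (F k j) := by
    push_cast
    have : ∀ k ∈ s, ((‖∑ j ∈ t, F k j‖ : ℝ) : ℂ) ^ 2 =
        ∑ i ∈ t, ∑ j ∈ t, F k i * (starRingEnd ℂ) (F k j) := by
      intro k _
      rw [← Complex.mul_conj', map_sum, Finset.sum_mul_sum]
    rw [Finset.sum_congr rfl this, Finset.sum_comm]
    refine Finset.sum_congr rfl fun i _ => ?_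
    rw [Finset.sum_comm]
  have h0 : 0 ≤ ∑ k ∈ s, ‖∑ j ∈ t, F k j‖ ^ 2 := by positivity
  have h1 : ∑ k ∈ s, ‖∑ j ∈ t, F k j‖ ^ 2 =
      ‖((∑ k ∈ s, ‖∑ j ∈ t, F k j‖ ^ 2 : ℝ) : ℂ)‖ := by
    rw [Complex.norm_real, Real.norm_of_nonneg h0]
  rw [h1, h]
  refine (norm_sum_le _ _).trans (Finset.sum_le_sum fun i _ => norm_sum_le _ _)

lemma shift_sum (F : ℕ → ℂ) (a b B j : ℕ) (hB : b + j ≤ B) :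
    ∑ k ∈ Finset.Ioc a B, (if a + j < k ∧ k ≤ b + j then F (k - j) else 0) =
      ∑ n ∈ Finset.Ioc a b, F n := by
  rw [← Finset.sum_filter]
  symm
  apply Finset.sum_nbij' (fun n => n + j) (fun k => k - j)
  · intro n hn; simp at hn ⊢; omega
  · intro n hn; simp at hn ⊢; omega
  · intro n hn; simp
  · intro n hn; simp at hn ⊢; omega
  · intro n hn; simp

/-- van der Corput / Weyl differencing -/
lemma weyl_vdc (z : ℕ → ℂ) (a b N Q : ℕ) (hz : ∀ n, ‖z n‖ ≤ 1) (hab : b ≤ a + N)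
    (hQ : 1 ≤ Q) (hQN : Q ≤ N) :
    ‖∑ n ∈ Finset.Ioc a b, z n‖ ^ 2 ≤ 2 * (N : ℝ) / Q *
      (N + 2 * ∑ q ∈ Finset.Ioo 0 Q,
        ‖∑ n ∈ Finset.Ioc a (b - q), z (n + q) * (starRingEnd ℂ) (z n)‖) := by
  set c : ℕ → ℝ := fun q => ‖∑ n ∈ Finset.Ioc a (b - q), z (n + q) * (starRingEnd ℂ) (z n)‖
    with hc
  have hc0 : ∀ q, 0 ≤ c q := fun q => norm_nonneg _
  set Y : ℕ → ℕ → ℂ := fun k j => if a + j < k ∧ k ≤ b + j then z (k - j) else 0 with hY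
  set S := ∑ n ∈ Finset.Ioc a b, z n with hS
  have h1 : (Q : ℂ) * S = ∑ k ∈ Finset.Ioc a (b + Q), ∑ j ∈ Finset.range Q, Y k j := by
    rw [Finset.sum_comm]
    have : ∀ j ∈ Finset.range Q, ∑ k ∈ Finset.Ioc a (b + Q), Y k j = S := by
      intro j hj
      simp only [Finset.mem_range] at hj
      exact shift_sum z a b (b + Q) j (by omega)
    rw [Finset.sum_congr rfl this]
    simp
  have hcorr : ∀ i ∈ Finset.range Q, ∀ j ∈ Finset.range Q,
      ‖∑ k ∈ Finset.Ioc a (b + Q), Y k i * (starRingEnd ℂ) (Y k j)‖ =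
        c (if i ≤ j then j - i else i - j) := by
    have main : ∀ i j, i ≤ j → j < Q →
        ∑ k ∈ Finset.Ioc a (b + Q), Y k i * (starRingEnd ℂ) (Y k j) =
        ∑ n ∈ Finset.Ioc a (b - (j - i)), z (n + (j - i)) * (starRingEnd ℂ) (z n) := by
      intro i j hij hj
      rw [← shift_sum (fun n => z (n + (j - i)) * (starRingEnd ℂ) (z n)) a (b - (j - i))
        (b + Q + (j - i)) j (by omega)]
      have hsub : Finset.Ioc a (b + Q) ⊆ Finset.Ioc a (b + Q + (j - i)) :=
        Finset.Ioc_subset_Ioc_right (by omega)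
      rw [← Finset.sum_subset hsub]
      · refine Finset.sum_congr rfl fun k hk => ?_
        simp only [Finset.mem_Ioc] at hk
        simp only [hY]
        by_cases h1 : a + j < k ∧ k ≤ b - (j - i) + j
        · have e1 : a + i < k ∧ k ≤ b + i := by omega
          have e2 : a + j < k ∧ k ≤ b + j := by omega
          have e3 : k - j + (j - i) = k - i := by omega
          rw [if_pos h1, if_pos e1, if_pos e2, e3]
        · rw [if_neg h1]
          by_cases e1 : a + i < k ∧ k ≤ b + i
          · have e2 : ¬ (a + j < k ∧ k ≤ b + j) := by omega
            rw [if_neg e2]; simp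
          · rw [if_neg e1]; simp
      · intro k hk hk'
        simp only [Finset.mem_Ioc] at hk hk'
        rw [if_neg (by omega)]
    intro i hi j hj
    simp only [Finset.mem_range] at hi hj
    by_cases hij : i ≤ j
    · rw [if_pos hij, main i j hij hj]
    · rw [if_neg hij]
      simp only [hc]
      rw [← main j i (by omega) hi, ← Complex.norm_conj, map_sum]
      congr 1
      refine Finset.sum_congr rfl fun k _ => ?_
      rw [map_mul, Complex.conj_conj, mul_comm]
  have h2 : ‖(Q : ℂ) * S‖ ^ 2 ≤ (2 * N : ℝ) * (Q * (c 0 + 2 * ∑ q ∈ Finset.Ioo 0 Q, c q)) := by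
    rw [h1]
    refine (norm_sum_sq_le _ _).trans ?_
    have hcard : ((Finset.Ioc a (b + Q)).card : ℝ) ≤ 2 * N := by
      rw [Nat.card_Ioc]
      exact_mod_cast (by omega : b + Q - a ≤ 2 * N)
    refine mul_le_mul hcard ?_ (by positivity) (by positivity)
    refine (sum_norm_sq_le _ _ _).trans ?_
    calc _ = ∑ i ∈ Finset.range Q, ∑ j ∈ Finset.range Q, c (if i ≤ j then j - i else i - j) :=
          Finset.sum_congr rfl fun i hi => Finset.sum_congr rfl fun j hj => hcorr i hi j hj
      _ ≤ ∑ i ∈ Finset.range Q, (c 0 + 2 * ∑ q ∈ Finset.Ioo 0 Q, c q) :=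
          Finset.sum_le_sum fun i hi => sum_dist_le c hc0 Q i (Finset.mem_range.mp hi)
      _ = _ := by rw [Finset.sum_const, Finset.card_range, nsmul_eq_mul]
  have hcN : c 0 ≤ N := by
    simp only [hc]
    calc _ ≤ ∑ n ∈ Finset.Ioc a (b - 0), (1 : ℝ) := by
          refine norm_sum_le_of_le _ fun n _ => ?_
          rw [norm_mul, Complex.norm_conj]
          exact mul_le_one₀ (hz _) (norm_nonneg _) (hz _)
      _ = ((b - a : ℕ) : ℝ) := by simp
      _ ≤ N := by exact_mod_cast (by omega)
  have hQ0 : (0 : ℝ) < Q := by exact_mod_cast hQ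
  rw [norm_mul, mul_pow, Complex.norm_natCast] at h2
  have h3 : ‖S‖ ^ 2 ≤ 2 * (N : ℝ) / Q * (c 0 + 2 * ∑ q ∈ Finset.Ioo 0 Q, c q) := by
    have e : 2 * (N : ℝ) / Q * (c 0 + 2 * ∑ q ∈ Finset.Ioo 0 Q, c q) =
      (2 * N : ℝ) * (Q * (c 0 + 2 * ∑ q ∈ Finset.Ioo 0 Q, c q)) / (Q : ℝ) ^ 2 := by
      field_simp
    rw [e, le_div_iff₀ (by positivity)]
    linarith
  refine h3.trans ?_
  gcongr


/-- `f` has a `k`-th derivative on `[a,b]` which is antitone with values in `[lo,hi]`. -/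
def Nice : ℕ → (ℝ → ℝ) → ℝ → ℝ → ℝ → ℝ → Prop
  | 0, g, lo, hi, a, b => AntitoneOn g (Set.Icc a b) ∧ ∀ x ∈ Set.Icc a b, lo ≤ g x ∧ g x ≤ hi
  | (k + 1), f, lo, hi, a, b =>
      ∃ f' : ℝ → ℝ, (∀ x ∈ Set.Icc a b, HasDerivAt f (f' x) x) ∧ Nice k f' lo hi a b

lemma nice_diff (k : ℕ) (lo hi a b q : ℝ) (hq : 0 < q) : ∀ f : ℝ → ℝ, Nice (k + 1) f lo hi a b →
    Nice k (fun x => f (x + q) - f x) (q * lo) (q * hi) a (b - q) := by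
  have hder : ∀ f f' : ℝ → ℝ, (∀ x ∈ Set.Icc a b, HasDerivAt f (f' x) x) →
      ∀ x ∈ Set.Icc a (b - q), HasDerivAt (fun x => f (x + q) - f x) (f' (x + q) - f' x) x := by
    intro f f' h x hx
    have h1 := h (x + q) ⟨by linarith [hx.1], by linarith [hx.2]⟩
    have h2 := h x ⟨hx.1, by linarith [hx.2]⟩
    exact (h1.comp_add_const x q).sub h2
  induction k with
  | zero =>
    rintro f ⟨f', hf, hanti, hbd⟩
    have hd := hder f f' hf
    refine ⟨?_, ?_⟩
    · apply antitoneOn_of_deriv_nonpos (convex_Icc _ _)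
      · exact fun x hx => (hd x hx).continuousAt.continuousWithinAt
      · exact fun x hx => (hd x (interior_subset hx)).differentiableAt.differentiableWithinAt
      · intro x hx
        have hx := interior_subset hx
        rw [(hd x hx).deriv]
        have := hanti (a := x) (b := x + q) ⟨hx.1, by linarith [hx.2]⟩
          ⟨by linarith [hx.1], by linarith [hx.2]⟩ (by linarith)
        linarith
    · intro x hx
      have hsub : ∀ y ∈ Set.Icc x (x + q), y ∈ Set.Icc a b := fun y hy =>
        ⟨hx.1.trans hy.1, by linarith [hx.2, hy.2]⟩
      obtain ⟨c, hc, hc2⟩ := exists_hasDerivAt_eq_slope f f' (by linarith : x < x + q)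
        (fun y hy => (hf y (hsub y hy)).continuousAt.continuousWithinAt)
        (fun y hy => hf y (hsub y (Set.Ioo_subset_Icc_self hy)))
      have hb := hbd c (hsub c (Set.Ioo_subset_Icc_self hc))
      rw [show x + q - x = q by ring, eq_div_iff hq.ne'] at hc2
      constructor <;> simp only <;> nlinarith
  | succ k ih =>
    rintro f ⟨f', hf, hn⟩
    exact ⟨fun x => f' (x + q) - f' x, hder f f' hf, ih f' hn⟩

lemma sum_Ioc_range {M : Type*} [AddCommMonoid M] (F : ℕ → M) (a b : ℕ) :
    ∑ n ∈ Finset.Ioc a b, F n = ∑ i ∈ Finset.range (b - a), F (a + 1 + i) := by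
  rw [← Finset.Ico_add_one_add_one_eq_Ioc, Finset.sum_Ico_eq_sum_range]
  congr 2
  omega

lemma T1 (f : ℝ → ℝ) (lo hi : ℝ) (a b : ℕ) (hlo : 0 < lo) (hlh : lo ≤ hi) (hhi : hi ≤ 1 / 2)
    (hf : Nice 1 f lo hi a b) : ‖∑ n ∈ Finset.Ioc a b, eexp (f n)‖ ≤ 3 / lo := by
  have h0 := nice_diff 0 lo hi a b 1 one_pos f hf
  obtain ⟨hanti, hbd⟩ := h0
  rw [sum_Ioc_range]
  have h := kl_range (fun i => f ((a + 1 + i : ℕ) : ℝ)) (b - a) lo hlo ?_ ?_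
  · refine h.trans ?_
    have : 1 ≤ 1 / lo := by rw [le_div_iff₀ hlo]; linarith
    have e : 3 / lo = 2 / lo + 1 / lo := by ring
    linarith
  · intro i hi'
    have hb : ((a + 1 + i + 1 : ℕ) : ℝ) ≤ b := by exact_mod_cast (by omega)
    push_cast at hb
    have := hbd (a + 1 + i) ⟨by linarith [Nat.cast_nonneg (α := ℝ) i], by linarith⟩
    push_cast
    rw [← add_assoc]
    constructor <;> linarith [this.1, this.2]
  · intro i hi'
    have hb : ((a + 1 + i + 2 : ℕ) : ℝ) ≤ b := by exact_mod_cast (by omega)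
    push_cast at hb
    have hi0 := Nat.cast_nonneg (α := ℝ) i
    have := hanti (a := (a + 1 + i : ℝ)) (b := a + 1 + i + 1) ⟨by linarith, by linarith⟩
      ⟨by linarith, by linarith⟩ (by linarith)
    simp only at this
    push_cast
    have e1 : (a : ℝ) + 1 + (i + 2) = a + 1 + i + 1 + 1 := by ring
    have e2 : (a : ℝ) + 1 + (i + 1) = a + 1 + i + 1 := by ring
    rw [e1, e2]
    exact this

lemma sum_inv_le (Q N : ℕ) (hQN : Q ≤ N) :
    ∑ q ∈ Finset.Ioo 0 Q, (1 : ℝ) / q ≤ 1 + Real.log N := by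
  rcases Nat.eq_zero_or_pos Q with rfl | hQ
  · simp
    have := Real.log_natCast_nonneg N
    linarith
  have h1 := harmonic_le_one_add_log Q
  have h2 : ∑ q ∈ Finset.Ioo 0 Q, (1 : ℝ) / q ≤ (harmonic Q : ℝ) := by
    rw [harmonic_eq_sum_Icc]
    push_cast
    simp only [one_div]
    apply Finset.sum_le_sum_of_subset_of_nonneg
    · intro x hx; simp at hx ⊢; omega
    · intro i _ _; positivity
  have h3 : Real.log Q ≤ Real.log N :=
    Real.log_le_log (by exact_mod_cast hQ) (by exact_mod_cast hQN)
  linarith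

lemma diff_step (p : ℕ) (f : ℝ → ℝ) (a b N Q : ℕ) (hab : b ≤ a + N) (hQ : 1 ≤ Q) (hQN : Q ≤ N)
    (A B : ℝ) (hB : 0 ≤ B) (hA : 0 ≤ A)
    (h : ∀ q ∈ Finset.Ioo 0 Q, q ≤ b →
      ‖∑ n ∈ Finset.Ioc a (b - q), eexp (f (n + q) - f n)‖ ^ (p + 1) ≤ A + B / q) :
    ‖∑ n ∈ Finset.Ioc a b, eexp (f n)‖ ^ (2 * (p + 1)) ≤
      2 ^ p * ((2 * (N : ℝ) ^ 2 / Q) ^ (p + 1) +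
        (4 * N) ^ (p + 1) * (A + B * (1 + Real.log N) / Q)) := by
  have hQ0 : (0 : ℝ) < Q := by exact_mod_cast hQ
  have hN0 : (0 : ℝ) ≤ N := by positivity
  set c : ℕ → ℝ := fun q => ‖∑ n ∈ Finset.Ioc a (b - q), eexp (f (n + q) - f n)‖ with hc
  have hc0 : ∀ q, 0 ≤ c q := fun q => norm_nonneg _
  have h1 := weyl_vdc (fun n => eexp (f n)) a b N Q (fun n => (eexp_norm _).le) hab hQ hQN
  have e1 : ∀ q, ‖∑ n ∈ Finset.Ioc a (b - q), eexp (f ((n + q : ℕ) : ℝ)) *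
      (starRingEnd ℂ) (eexp (f n))‖ = c q := by
    intro q
    simp only [hc]
    congr 1
    refine Finset.sum_congr rfl fun n _ => ?_
    rw [eexp_conj, ← eexp_add]
    push_cast
    rfl
  simp only [e1] at h1
  have h2 : ∀ q ∈ Finset.Ioo 0 Q, c q ^ (p + 1) ≤ A + B / q := by
    intro q hq
    by_cases hqb : q ≤ b
    · exact h q hq hqb
    · have : c q = 0 := by
        simp only [hc]
        rw [Finset.Ioc_eq_empty (by omega)]; simp
      rw [this, zero_pow (by omega)]
      positivity
  set W := ∑ q ∈ Finset.Ioo 0 Q, c q with hW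
  have hW0 : 0 ≤ W := Finset.sum_nonneg fun q _ => hc0 q
  have h3 : (W / Q) ^ (p + 1) ≤ A + B * (1 + Real.log N) / Q := by
    have h5 : W ^ (p + 1) ≤ (Q : ℝ) ^ p * ∑ q ∈ Finset.Ioo 0 Q, c q ^ (p + 1) := by
      have hs : 0 ≤ ∑ q ∈ Finset.Ioo 0 Q, c q ^ (p + 1) :=
        Finset.sum_nonneg fun q _ => pow_nonneg (hc0 q) _
      rcases Nat.lt_or_ge 1 Q with hQ1 | hQ1
      · have hcard : (0 : ℝ) < (Finset.Ioo 0 Q).card := by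
          rw [Nat.card_Ioo]; exact_mod_cast (by omega)
        have := pow_sum_div_card_le_sum_pow (s := Finset.Ioo 0 Q) (f := c) (fun i _ => hc0 i) p
        rw [div_le_iff₀ (by positivity)] at this
        refine this.trans ?_
        rw [mul_comm]
        refine mul_le_mul_of_nonneg_right ?_ hs
        refine pow_le_pow_left₀ hcard.le ?_ _
        rw [Nat.card_Ioo]; exact_mod_cast (by omega)
      · have : W = 0 := by
          rw [hW, show Finset.Ioo 0 Q = ∅ by ext x; simp; omega]; simp
        rw [this, zero_pow (by omega)]; positivity
    have h6 : ∑ q ∈ Finset.Ioo 0 Q, c q ^ (p + 1) ≤ Q * A + B * (1 + Real.log N) := by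
      calc _ ≤ ∑ q ∈ Finset.Ioo 0 Q, (A + B * (1 / q)) :=
            Finset.sum_le_sum fun q hq => (h2 q hq).trans_eq (by ring)
        _ = ((Q - 1 : ℕ) : ℝ) * A + B * ∑ q ∈ Finset.Ioo 0 Q, (1 : ℝ) / q := by
            rw [Finset.sum_add_distrib, Finset.mul_sum]; simp
        _ ≤ _ := by
            have hh := sum_inv_le Q N hQN
            have : ((Q - 1 : ℕ) : ℝ) ≤ Q := by exact_mod_cast Nat.sub_le _ _
            gcongr
    rw [div_pow, div_le_iff₀ (by positivity)]
    calc W ^ (p + 1) ≤ (Q : ℝ) ^ p * (Q * A + B * (1 + Real.log N)) := h5.trans (by gcongr)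
      _ = _ := by field_simp; ring
  have e2 : 2 * (N : ℝ) / Q * (N + 2 * W) = 2 * (N : ℝ) ^ 2 / Q + 4 * N * (W / Q) := by
    field_simp; ring
  rw [e2] at h1
  rw [pow_mul]
  calc _ ≤ (2 * (N : ℝ) ^ 2 / Q + 4 * N * (W / Q)) ^ (p + 1) := by gcongr
    _ ≤ 2 ^ p * ((2 * (N : ℝ) ^ 2 / Q) ^ (p + 1) + (4 * N * (W / Q)) ^ (p + 1)) := by
        have := add_pow_le (a := 2 * (N : ℝ) ^ 2 / Q) (b := 4 * N * (W / Q)) (by positivity)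
          (by positivity) (p + 1)
        simpa using this
    _ ≤ _ := by
        rw [mul_pow (4 * (N : ℝ))]
        gcongr

lemma nice_shift_nat (k : ℕ) (f : ℝ → ℝ) (lo hi : ℝ) (a b q : ℕ) (hq : 0 < q) (hqb : q ≤ b)
    (h : Nice (k + 1) f lo hi a b) :
    Nice k (fun x => f (x + q) - f x) (q * lo) (q * hi) a ((b - q : ℕ) : ℝ) := by
  rw [Nat.cast_sub hqb]
  exact nice_diff k lo hi a b q (by exact_mod_cast hq) f h

lemma T2 (f : ℝ → ℝ) (lo hi : ℝ) (a b N Q : ℕ) (hlo : 0 < lo) (hlh : lo ≤ hi)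
    (hab : b ≤ a + N) (hQ : 1 ≤ Q) (hQN : Q ≤ N) (hhi : Q * hi ≤ 1 / 2)
    (hf : Nice 2 f lo hi a b) :
    ‖∑ n ∈ Finset.Ioc a b, eexp (f n)‖ ^ 2 ≤
      4 * (N : ℝ) ^ 2 / Q + 24 * N * (1 + Real.log N) / (Q * lo) := by
  have h := diff_step 0 f a b N Q hab hQ hQN 0 (3 / lo) (by positivity) le_rfl ?_
  · refine h.trans ?_
    have hQ0 : (0 : ℝ) < Q := by exact_mod_cast hQ
    have hl := Real.log_natCast_nonneg N
    simp only [zero_add, pow_zero, pow_one, one_mul]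
    have e1 : 3 / lo * (1 + Real.log N) / Q = 3 * (1 + Real.log N) / (Q * lo) := by field_simp
    have h1 : 0 ≤ (N : ℝ) ^ 2 / Q := by positivity
    have h2 : 0 ≤ N * (1 + Real.log N) / (Q * lo) := by positivity
    rw [e1]
    have e2 : 2 * (N : ℝ) ^ 2 / Q + 4 * N * (3 * (1 + Real.log N) / (Q * lo)) =
      2 * ((N : ℝ) ^ 2 / Q) + 12 * (N * (1 + Real.log N) / (Q * lo)) := by ring
    have e3 : 4 * (N : ℝ) ^ 2 / Q + 24 * N * (1 + Real.log N) / (Q * lo) =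
      4 * ((N : ℝ) ^ 2 / Q) + 24 * (N * (1 + Real.log N) / (Q * lo)) := by ring
    rw [e2, e3]
    linarith
  · intro q hq hqb
    simp only [Finset.mem_Ioo] at hq
    have hq0 : (0 : ℝ) < q := by exact_mod_cast hq.1
    have hqQ : (q : ℝ) ≤ Q := by exact_mod_cast hq.2.le
    have hn := nice_shift_nat 1 f lo hi a b q hq.1 hqb hf
    have := T1 _ _ _ a (b - q) (by positivity) (by gcongr) (by nlinarith) hn
    simp only [zero_add, pow_one]
    refine this.trans_eq ?_
    field_simp

lemma T3 (f : ℝ → ℝ) (lo hi : ℝ) (a b N Q Q2 : ℕ) (hlo : 0 < lo) (hlh : lo ≤ hi)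
    (hab : b ≤ a + N) (hQ : 1 ≤ Q) (hQN : Q ≤ N) (hQ2 : 1 ≤ Q2) (hQN2 : Q2 ≤ N)
    (hhi : Q * (Q2 * hi) ≤ 1 / 2) (hf : Nice 3 f lo hi a b) :
    ‖∑ n ∈ Finset.Ioc a b, eexp (f n)‖ ^ 4 ≤
      16 * (N : ℝ) ^ 4 / Q2 ^ 2 + 256 * (N : ℝ) ^ 4 / Q +
        1536 * N ^ 3 * (1 + Real.log N) ^ 2 / (Q * Q2 * lo) := by
  have hQ0 : (0 : ℝ) < Q := by exact_mod_cast hQ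
  have hl := Real.log_natCast_nonneg N
  have hQ20 : (0 : ℝ) < Q2 := by exact_mod_cast hQ2
  have h := diff_step 1 f a b N Q2 hab hQ2 hQN2 (4 * (N : ℝ) ^ 2 / Q)
    (24 * N * (1 + Real.log N) / (Q * lo)) (by positivity) (by positivity) ?_
  · refine h.trans ?_
    apply le_of_sub_nonneg
    have : 16 * (N : ℝ) ^ 4 / Q2 ^ 2 + 256 * (N : ℝ) ^ 4 / Q +
        1536 * N ^ 3 * (1 + Real.log N) ^ 2 / (Q * Q2 * lo) -
        2 ^ 1 * ((2 * (N : ℝ) ^ 2 / Q2) ^ (1 + 1) + (4 * (N : ℝ)) ^ (1 + 1) *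
        (4 * (N : ℝ) ^ 2 / Q + 24 * N * (1 + Real.log N) / (Q * lo) * (1 + Real.log N) / Q2)) =
        8 * (N : ℝ) ^ 4 / Q2 ^ 2 + 128 * (N : ℝ) ^ 4 / Q +
        768 * N ^ 3 * (1 + Real.log N) ^ 2 / (Q * Q2 * lo) := by
      simp only [Nat.reduceAdd, div_pow]
      field_simp
      ring
    rw [this]
    positivity
  · intro q hq hqb
    simp only [Finset.mem_Ioo] at hq
    have hq0 : (0 : ℝ) < q := by exact_mod_cast hq.1
    have hqQ : (q : ℝ) ≤ Q2 := by exact_mod_cast hq.2.le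
    have hn := nice_shift_nat 2 f lo hi a b q hq.1 hqb hf
    have := T2 _ _ _ a (b - q) N Q (by positivity) (by gcongr) (by omega) hQ hQN ?_ hn
    · refine this.trans_eq ?_
      field_simp
    · refine le_trans ?_ hhi
      have : 0 < hi := by linarith
      gcongr

lemma T4 (f : ℝ → ℝ) (lo hi : ℝ) (a b N Q Q2 Q3 : ℕ) (hlo : 0 < lo) (hlh : lo ≤ hi)
    (hab : b ≤ a + N) (hQ : 1 ≤ Q) (hQN : Q ≤ N) (hQ2 : 1 ≤ Q2) (hQN2 : Q2 ≤ N)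
    (hQ3 : 1 ≤ Q3) (hQN3 : Q3 ≤ N)
    (hhi : Q * (Q2 * (Q3 * hi)) ≤ 1 / 2) (hf : Nice 4 f lo hi a b) :
    ‖∑ n ∈ Finset.Ioc a b, eexp (f n)‖ ^ 8 ≤ 10 ^ 7 * ((N : ℝ) ^ 8 / Q3 ^ 4 +
      (N : ℝ) ^ 8 / Q2 ^ 2 + (N : ℝ) ^ 8 / Q +
        N ^ 7 * (1 + Real.log N) ^ 3 / (Q * Q2 * Q3 * lo)) := by
  have hQ0 : (0 : ℝ) < Q := by exact_mod_cast hQ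
  have hl := Real.log_natCast_nonneg N
  have hQ20 : (0 : ℝ) < Q2 := by exact_mod_cast hQ2
  have hQ30 : (0 : ℝ) < Q3 := by exact_mod_cast hQ3
  have h := diff_step 3 f a b N Q3 hab hQ3 hQN3
    (16 * (N : ℝ) ^ 4 / Q2 ^ 2 + 256 * (N : ℝ) ^ 4 / Q)
    (1536 * N ^ 3 * (1 + Real.log N) ^ 2 / (Q * Q2 * lo)) (by positivity) (by positivity) ?_
  · refine h.trans ?_
    apply le_of_sub_nonneg
    have : 10 ^ 7 * ((N : ℝ) ^ 8 / Q3 ^ 4 +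
      (N : ℝ) ^ 8 / Q2 ^ 2 + (N : ℝ) ^ 8 / Q +
        N ^ 7 * (1 + Real.log N) ^ 3 / (Q * Q2 * Q3 * lo)) -
        2 ^ 3 * ((2 * (N : ℝ) ^ 2 / Q3) ^ (3 + 1) + (4 * (N : ℝ)) ^ (3 + 1) *
        (16 * (N : ℝ) ^ 4 / Q2 ^ 2 + 256 * (N : ℝ) ^ 4 / Q +
        1536 * N ^ 3 * (1 + Real.log N) ^ 2 / (Q * Q2 * lo) * (1 + Real.log N) / Q3)) =
        (10 ^ 7 - 128) * ((N : ℝ) ^ 8 / Q3 ^ 4) + (10 ^ 7 - 32768) * ((N : ℝ) ^ 8 / Q2 ^ 2) +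
        (10 ^ 7 - 524288) * ((N : ℝ) ^ 8 / Q) +
        (10 ^ 7 - 3145728) * (N ^ 7 * (1 + Real.log N) ^ 3 / (Q * Q2 * Q3 * lo)) := by
      simp only [Nat.reduceAdd, div_pow]
      field_simp
      ring
    rw [this]
    norm_num
    positivity
  · intro q hq hqb
    simp only [Finset.mem_Ioo] at hq
    have hq0 : (0 : ℝ) < q := by exact_mod_cast hq.1
    have hqQ : (q : ℝ) ≤ Q3 := by exact_mod_cast hq.2.le
    have hn := nice_shift_nat 3 f lo hi a b q hq.1 hqb hf
    have := T3 _ _ _ a (b - q) N Q Q2 (by positivity) (by gcongr) (by omega) hQ hQN hQ2 hQN2 ?_ hn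
    · refine this.trans_eq ?_
      field_simp
    · refine le_trans ?_ hhi
      have : 0 < hi := by linarith
      gcongr


lemma log_bound (Z : ℝ) (hZ : 1 ≤ Z) (N : ℕ) (hN : 1 ≤ N) (hNZ : (N : ℝ) ≤ 4 * Z) :
    1 + Real.log N ≤ 3000 * Z ^ (1 / 2000 : ℝ) := by
  have hN0 : (0 : ℝ) < N := by exact_mod_cast hN
  have h1 : Real.log N ≤ Real.log 4 + Real.log Z := by
    rw [← Real.log_mul (by norm_num) (by linarith)]
    exact Real.log_le_log hN0 hNZ
  have h2 : Real.log 4 ≤ 3 := by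
    have := Real.log_le_sub_one_of_pos (show (0 : ℝ) < 4 by norm_num)
    linarith
  have h3 := Real.log_le_rpow_div (x := Z) (ε := 1 / 2000) (by linarith) (by norm_num)
  have h4 : 1 ≤ Z ^ (1 / 2000 : ℝ) := Real.one_le_rpow hZ (by norm_num)
  have h5 : Z ^ (1 / 2000 : ℝ) / (1 / 2000) = 2000 * Z ^ (1 / 2000 : ℝ) := by ring
  linarith

lemma floor_half {y : ℝ} (hy : 1 ≤ y) :
    1 ≤ ⌊y⌋₊ ∧ y / 2 ≤ (⌊y⌋₊ : ℝ) ∧ (⌊y⌋₊ : ℝ) ≤ y := by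
  have h1 : 1 ≤ ⌊y⌋₊ := Nat.one_le_floor_iff y |>.mpr hy
  have h2 := Nat.lt_floor_add_one y
  have h3 : (1 : ℝ) ≤ ⌊y⌋₊ := by exact_mod_cast h1
  exact ⟨h1, by linarith, Nat.floor_le (by linarith)⟩

set_option maxHeartbeats 2000000 in
/-- core estimate, large `Z` -/
lemma E_large (c1 C1 C2 : ℝ) (hc1 : 0 < c1) (hC1 : 1 ≤ C1) (hC2 : 1 ≤ C2) (Z : ℝ) (hZ : 1 ≤ Z)
    (hZ1 : 4 ≤ Z ^ (45 / 100 : ℝ)) (hZ2 : 2 * C2 ≤ Z ^ (45 / 100 : ℝ))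
    (f : ℝ → ℝ) (lo hi : ℝ) (a b N : ℕ) (hlo : 0 < lo) (hlh : lo ≤ hi) (hhl : hi ≤ C1 * lo)
    (hab : b ≤ a + N) (hNZ : Z ≤ 16 * (N : ℝ) ^ 2) (hNZ2 : (N : ℝ) ≤ 4 * Z)
    (h1 : c1 * Z ^ (-(3 / 100) : ℝ) ≤ lo * (N : ℝ) ^ 3) (h2 : hi ≤ C2 * Z ^ (-(15 / 16) : ℝ))
    (hf : Nice 4 f lo hi a b) :
    ‖∑ n ∈ Finset.Ioc a b, eexp (f n)‖ ^ 8 ≤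
      10 ^ 7 * (4 * ((10 ^ 13 * (C1 + C2 + 1 / c1)) * ((N : ℝ) ^ 8 * Z ^ (-(448 / 1000) : ℝ)))) := by
  have hZ0 : 0 < Z := by linarith
  have hN : 1 ≤ N := by
    rcases Nat.eq_zero_or_pos N with rfl | h
    · norm_num at hNZ; linarith
    · exact h
  have hN0 : (0 : ℝ) < N := by exact_mod_cast hN
  have hN1 : (1 : ℝ) ≤ N := by exact_mod_cast hN
  have hhi0 : 0 < hi := by linarith
  have mono : ∀ {s t : ℝ}, s ≤ t → Z ^ s ≤ Z ^ t := fun h => Real.rpow_le_rpow_of_exponent_le hZ h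
  -- sqrt bound on N
  have hNs : Z ^ (1 / 2 : ℝ) ≤ 4 * N := by
    rw [← Real.sqrt_eq_rpow]
    calc Real.sqrt Z ≤ Real.sqrt ((4 * N) ^ 2) := Real.sqrt_le_sqrt (by nlinarith)
      _ = _ := Real.sqrt_sq (by positivity)
  obtain ⟨a1, a2, a3⟩ := floor_half (y := Z ^ (48 / 100 : ℝ) / 4)
    (by have := mono (show (45 / 100 : ℝ) ≤ 48 / 100 by norm_num); linarith)
  set Q := ⌊Z ^ (48 / 100 : ℝ) / 4⌋₊ with hQdef
  have hQ0 : (0 : ℝ) < Q := by exact_mod_cast a1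
  have hQN : (Q : ℝ) ≤ N := by
    have := mono (show (48 / 100 : ℝ) ≤ 1 / 2 by norm_num); linarith
  -- bound hi * Q
  have hhiQ : 2 * hi * Q ≤ C2 * Z ^ (-(4575 / 10000) : ℝ) := by
    have e : Z ^ (-(15 / 16) : ℝ) * Z ^ (48 / 100 : ℝ) = Z ^ (-(4575 / 10000) : ℝ) := by
      rw [← Real.rpow_add hZ0]; norm_num
    calc 2 * hi * Q ≤ 2 * (C2 * Z ^ (-(15 / 16) : ℝ)) * (Z ^ (48 / 100 : ℝ) / 4) := by
          gcongr
      _ = C2 * (Z ^ (-(15 / 16) : ℝ) * Z ^ (48 / 100 : ℝ)) / 2 := by ring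
      _ ≤ _ := by
          rw [e]
          have : 0 < C2 * Z ^ (-(4575 / 10000) : ℝ) := by positivity
          linarith
  have hinv : Z ^ (448 / 1000 : ℝ) / C2 ≤ 1 / (2 * hi * Q) := by
    rw [div_le_div_iff₀ (by linarith) (by positivity)]
    have e : Z ^ (448 / 1000 : ℝ) * Z ^ (-(4575 / 10000) : ℝ) ≤ 1 := by
      rw [← Real.rpow_add hZ0]
      exact Real.rpow_le_one_of_one_le_of_nonpos hZ (by norm_num)
    calc Z ^ (448 / 1000 : ℝ) * (2 * hi * Q) ≤
          Z ^ (448 / 1000 : ℝ) * (C2 * Z ^ (-(4575 / 10000) : ℝ)) := by gcongr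
      _ = C2 * (Z ^ (448 / 1000 : ℝ) * Z ^ (-(4575 / 10000) : ℝ)) := by ring
      _ ≤ C2 * 1 := by gcongr
      _ = _ := by ring
  have hone : 1 ≤ 1 / (2 * hi * Q) := by
    rw [le_div_iff₀ (by positivity), one_mul]
    refine hhiQ.trans ?_
    have e : Z ^ (45 / 100 : ℝ) * Z ^ (-(4575 / 10000) : ℝ) ≤ 1 := by
      rw [← Real.rpow_add hZ0]
      exact Real.rpow_le_one_of_one_le_of_nonpos hZ (by norm_num)
    have : 0 < Z ^ (-(4575 / 10000) : ℝ) := by positivity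
    calc C2 * Z ^ (-(4575 / 10000) : ℝ) ≤ Z ^ (45 / 100 : ℝ) * Z ^ (-(4575 / 10000) : ℝ) := by
          gcongr; linarith
      _ ≤ 1 := e
  set y := min (Real.sqrt (1 / (2 * hi * Q))) N with hy
  have hy1 : 1 ≤ y := le_min (Real.one_le_sqrt.mpr hone) hN1
  obtain ⟨b1, b2, b3⟩ := floor_half hy1
  set P := ⌊y⌋₊ with hP
  have hP1 : (1 : ℝ) ≤ P := by exact_mod_cast b1
  have hy0 : 0 < y := by linarith
  have hPN : (P : ℝ) ≤ N := b3.trans (min_le_right _ _)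
  have hysq : y ^ 2 ≤ 1 / (2 * hi * Q) := by
    calc y ^ 2 ≤ (Real.sqrt (1 / (2 * hi * Q))) ^ 2 := by
          gcongr; exact min_le_left _ _
      _ = _ := Real.sq_sqrt (by positivity)
  have hP2 : (P : ℝ) ^ 2 ≤ 1 / (2 * hi * Q) := le_trans (by gcongr) hysq
  have hP4 : y ^ 2 / 4 ≤ (P : ℝ) ^ 2 := by
    calc y ^ 2 / 4 = (y / 2) ^ 2 := by ring
      _ ≤ _ := by gcongr
  have main := T4 f lo hi a b N Q P P hlo hlh hab a1 (by exact_mod_cast hQN) b1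
    (by exact_mod_cast hPN) b1 (by exact_mod_cast hPN) ?_ hf
  swap
  · rw [le_div_iff₀ (by positivity)] at hP2
    nlinarith
  refine main.trans ?_
  set D := 10 ^ 13 * (C1 + C2 + 1 / c1) with hD
  have hc1i : 0 < 1 / c1 := by positivity
  have hW : 0 < Z ^ (-(448 / 1000) : ℝ) := by positivity
  have hcases : y ^ 2 = 1 / (2 * hi * Q) ∨ y ^ 2 = (N : ℝ) ^ 2 := by
    rcases min_choice (Real.sqrt (1 / (2 * hi * Q))) (N : ℝ) with h | h
    · left; rw [hy, h, Real.sq_sqrt (by positivity)]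
    · right; rw [hy, h]
  have hWW : Z ^ (448 / 1000 : ℝ) * Z ^ (-(448 / 1000) : ℝ) = 1 := by
    rw [← Real.rpow_add hZ0]; norm_num
  -- P^2 large
  have k2 : 1 / (P : ℝ) ^ 2 ≤ D * Z ^ (-(448 / 1000) : ℝ) := by
    have hy2 : Z ^ (448 / 1000 : ℝ) ≤ (16 * C2) * y ^ 2 := by
      rcases hcases with h | h
      · rw [h]
        rw [div_le_iff₀ (by linarith)] at hinv
        have hp : 0 < 1 / (2 * hi * Q) := by positivity
        have hp2 : 0 < 1 / (2 * hi * Q) * C2 := by positivity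
        calc Z ^ (448 / 1000 : ℝ) ≤ 1 / (2 * hi * Q) * C2 := hinv
          _ ≤ 16 * (1 / (2 * hi * Q) * C2) := by linarith
          _ = _ := by ring
      · rw [h]
        calc Z ^ (448 / 1000 : ℝ) ≤ Z ^ (1 : ℝ) := mono (by norm_num)
          _ = Z := Real.rpow_one _
          _ ≤ 16 * 1 * (N : ℝ) ^ 2 := by linarith
          _ ≤ _ := by gcongr
    have h64 : Z ^ (448 / 1000 : ℝ) ≤ (64 * C2) * (P : ℝ) ^ 2 := by
      calc Z ^ (448 / 1000 : ℝ) ≤ (16 * C2) * y ^ 2 := hy2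
        _ = (64 * C2) * (y ^ 2 / 4) := by ring
        _ ≤ _ := by gcongr
    rw [div_le_iff₀ (by positivity)]
    have hD2 : 64 * C2 ≤ D := by rw [hD]; linarith
    calc 1 = Z ^ (448 / 1000 : ℝ) * Z ^ (-(448 / 1000) : ℝ) := hWW.symm
      _ ≤ (64 * C2) * (P : ℝ) ^ 2 * Z ^ (-(448 / 1000) : ℝ) := by gcongr
      _ ≤ D * (P : ℝ) ^ 2 * Z ^ (-(448 / 1000) : ℝ) := by gcongr
      _ = _ := by ring
  have k1 : 1 / (P : ℝ) ^ 4 ≤ D * Z ^ (-(448 / 1000) : ℝ) := by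
    refine le_trans ?_ k2
    apply one_div_le_one_div_of_le (by positivity)
    exact pow_le_pow_right₀ hP1 (by norm_num)
  have k3 : 1 / (Q : ℝ) ≤ D * Z ^ (-(448 / 1000) : ℝ) := by
    rw [div_le_iff₀ hQ0]
    have hD2 : 8 ≤ D := by rw [hD]; linarith
    have h8 : Z ^ (448 / 1000 : ℝ) ≤ 8 * Q := by
      have := mono (show (448 / 1000 : ℝ) ≤ 48 / 100 by norm_num); linarith
    calc 1 = Z ^ (448 / 1000 : ℝ) * Z ^ (-(448 / 1000) : ℝ) := hWW.symm
      _ ≤ 8 * Q * Z ^ (-(448 / 1000) : ℝ) := by gcongr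
      _ ≤ D * Q * Z ^ (-(448 / 1000) : ℝ) := by gcongr
      _ = _ := by ring
  have hl := Real.log_natCast_nonneg N
  have k4 : (1 + Real.log N) ^ 3 / (N * (Q * P * P * lo)) ≤ D * Z ^ (-(448 / 1000) : ℝ) := by
    have hlb := log_bound Z hZ N hN hNZ2
    have hlb3 : (1 + Real.log N) ^ 3 ≤ 3000 ^ 3 * Z ^ (3 / 2000 : ℝ) := by
      calc (1 + Real.log N) ^ 3 ≤ (3000 * Z ^ (1 / 2000 : ℝ)) ^ 3 := by gcongr
        _ = _ := by
          rw [mul_pow, ← Real.rpow_natCast (Z ^ (1 / 2000 : ℝ)), ← Real.rpow_mul hZ0.le]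
          norm_num
    have hden : Z ^ (45 / 100 : ℝ) ≤ (32 * (C1 + 1 / c1)) * (N * (Q * P * P * lo)) := by
      have hlow : Q * y ^ 2 * lo / 4 ≤ Q * P * P * lo := by
        have : Q * y ^ 2 * lo / 4 = Q * lo * (y ^ 2 / 4) := by ring
        rw [this]
        calc Q * lo * (y ^ 2 / 4) ≤ Q * lo * (P : ℝ) ^ 2 := by gcongr
          _ = _ := by ring
      rcases hcases with h | h
      · have e : Q * y ^ 2 * lo / 4 = lo / (8 * hi) := by
          rw [h]; field_simp; norm_num
        have e2 : 1 / (8 * C1) ≤ lo / (8 * hi) := by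
          rw [div_le_div_iff₀ (by positivity) (by positivity)]; linarith
        have e3 : 1 / (8 * C1) ≤ Q * P * P * lo := by linarith
        have e4 : Z ^ (45 / 100 : ℝ) ≤ 4 * N :=
          (mono (by norm_num)).trans hNs
        calc Z ^ (45 / 100 : ℝ) ≤ 4 * N := e4
          _ = (32 * C1) * (N * (1 / (8 * C1))) := by field_simp; norm_num
          _ ≤ (32 * (C1 + 1 / c1)) * (N * (Q * P * P * lo)) := by
            gcongr
            linarith
      · rw [h] at hlow
        have e1 : Z ^ (48 / 100 : ℝ) * Z ^ (-(3 / 100) : ℝ) = Z ^ (45 / 100 : ℝ) := by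
          rw [← Real.rpow_add hZ0]; norm_num
        have e2 : Z ^ (48 / 100 : ℝ) ≤ 8 * Q := by linarith
        have e3 : Z ^ (-(3 / 100) : ℝ) ≤ (1 / c1) * (lo * (N : ℝ) ^ 3) := by
          rw [one_div, ← div_eq_inv_mul, le_div_iff₀ hc1]; linarith
        calc Z ^ (45 / 100 : ℝ) = Z ^ (48 / 100 : ℝ) * Z ^ (-(3 / 100) : ℝ) := e1.symm
          _ ≤ (8 * Q) * ((1 / c1) * (lo * (N : ℝ) ^ 3)) := by gcongr
          _ = (32 * (1 / c1)) * (N * (Q * (N : ℝ) ^ 2 * lo / 4)) := by ring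
          _ ≤ (32 * (C1 + 1 / c1)) * (N * (Q * P * P * lo)) := by
            gcongr
            linarith
    rw [div_le_iff₀ (by positivity)]
    have e5 : Z ^ (3 / 2000 : ℝ) ≤ Z ^ (45 / 100 : ℝ) * Z ^ (-(448 / 1000) : ℝ) := by
      rw [← Real.rpow_add hZ0]; exact mono (by norm_num)
    calc (1 + Real.log N) ^ 3 ≤ 3000 ^ 3 * Z ^ (3 / 2000 : ℝ) := hlb3
      _ ≤ 3000 ^ 3 * (((32 * (C1 + 1 / c1)) * (N * (Q * P * P * lo))) *
            Z ^ (-(448 / 1000) : ℝ)) := by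
          gcongr
          exact e5.trans (by gcongr)
      _ = (3000 ^ 3 * 32 * (C1 + 1 / c1)) * (Z ^ (-(448 / 1000) : ℝ) * (N * (Q * P * P * lo))) := by
          ring
      _ ≤ D * (Z ^ (-(448 / 1000) : ℝ) * (N * (Q * P * P * lo))) := by
          have : 3000 ^ 3 * 32 * (C1 + 1 / c1) ≤ D := by rw [hD]; linarith
          gcongr
      _ = _ := by ring
  refine mul_le_mul_of_nonneg_left ?_ (by norm_num)
  have hN8 : 0 ≤ (N : ℝ) ^ 8 := by positivity
  have l1 := mul_le_mul_of_nonneg_left k1 hN8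
  have l2 := mul_le_mul_of_nonneg_left k2 hN8
  have l3 := mul_le_mul_of_nonneg_left k3 hN8
  have l4 := mul_le_mul_of_nonneg_left k4 hN8
  have r1 : (N : ℝ) ^ 8 / P ^ 4 = N ^ 8 * (1 / P ^ 4) := by ring
  have r2 : (N : ℝ) ^ 8 / P ^ 2 = N ^ 8 * (1 / P ^ 2) := by ring
  have r3 : (N : ℝ) ^ 8 / Q = N ^ 8 * (1 / Q) := by ring
  have r4 : (N : ℝ) ^ 7 * (1 + Real.log N) ^ 3 / (Q * P * P * lo) =
      N ^ 8 * ((1 + Real.log N) ^ 3 / (N * (Q * P * P * lo))) := by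
    field_simp
  rw [r1, r2, r3, r4]
  linarith

lemma E_bound (c1 C1 C2 : ℝ) (hc1 : 0 < c1) (hC1 : 1 ≤ C1) (hC2 : 1 ≤ C2) :
    ∃ C : ℝ, 1 ≤ C ∧ ∀ (Z : ℝ), 1 ≤ Z → ∀ (f : ℝ → ℝ) (lo hi : ℝ) (a b N : ℕ), 0 < lo → lo ≤ hi →
    hi ≤ C1 * lo → b ≤ a + N → Z ≤ 16 * (N : ℝ) ^ 2 → (N : ℝ) ≤ 4 * Z →
    c1 * Z ^ (-(3 / 100) : ℝ) ≤ lo * (N : ℝ) ^ 3 → hi ≤ C2 * Z ^ (-(15 / 16) : ℝ) →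
    Nice 4 f lo hi a b →
    ‖∑ n ∈ Finset.Ioc a b, eexp (f n)‖ ≤ C * (N * Z ^ (-(56 / 1000) : ℝ)) := by
  set D := 10 ^ 7 * (4 * (10 ^ 13 * (C1 + C2 + 1 / c1))) with hD
  have hc1i : 0 < 1 / c1 := by positivity
  have hD1 : 1 ≤ D := by rw [hD]; linarith
  set E := (4 + 2 * C2) with hE
  refine ⟨D + E, by linarith, ?_⟩
  intro Z hZ f lo hi a b N hlo hlh hhl hab hNZ hNZ2 h1 h2 hf
  have hZ0 : 0 < Z := by linarith
  have hW : 0 < Z ^ (-(56 / 1000) : ℝ) := by positivity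
  by_cases hbig : E ≤ Z ^ (45 / 100 : ℝ)
  · have h := E_large c1 C1 C2 hc1 hC1 hC2 Z hZ (by linarith) (by linarith) f lo hi a b N hlo hlh
      hhl hab hNZ hNZ2 h1 h2 hf
    have e : Z ^ (-(448 / 1000) : ℝ) = (Z ^ (-(56 / 1000) : ℝ)) ^ 8 := by
      rw [← Real.rpow_natCast, ← Real.rpow_mul hZ0.le]; norm_num
    have h3 : ‖∑ n ∈ Finset.Ioc a b, eexp (f n)‖ ^ 8 ≤ ((D + E) * (N * Z ^ (-(56 / 1000) : ℝ))) ^ 8 := by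
      refine h.trans ?_
      rw [e, mul_pow, mul_pow]
      have : D ≤ (D + E) ^ 8 := by
        calc D ≤ D + E := by linarith
          _ ≤ (D + E) ^ 8 := le_self_pow₀ (by linarith) (by norm_num)
      calc _ = D * ((N : ℝ) ^ 8 * (Z ^ (-(56 / 1000) : ℝ)) ^ 8) := by rw [hD]; ring
        _ ≤ _ := by gcongr
    exact le_of_pow_le_pow_left₀ (by norm_num) (by positivity) h3
  · push Not at hbig
    have t : ‖∑ n ∈ Finset.Ioc a b, eexp (f n)‖ ≤ N := by
      calc _ ≤ ∑ n ∈ Finset.Ioc a b, (1 : ℝ) := norm_sum_le_of_le _ fun n _ => (eexp_norm _).le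
        _ = ((b - a : ℕ) : ℝ) := by simp
        _ ≤ N := by exact_mod_cast (by omega)
    refine t.trans ?_
    have h4 : 1 ≤ E * Z ^ (-(56 / 1000) : ℝ) := by
      have : Z ^ (56 / 1000 : ℝ) * Z ^ (-(56 / 1000) : ℝ) = 1 := by
        rw [← Real.rpow_add hZ0]; norm_num
      rw [← this]
      gcongr
      exact (Real.rpow_le_rpow_of_exponent_le hZ (by norm_num)).trans hbig.le
    have hN0 : (0 : ℝ) ≤ N := by positivity
    calc (N : ℝ) = 1 * N := by ring
      _ ≤ ((D + E) * Z ^ (-(56 / 1000) : ℝ)) * N := by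
        gcongr
        refine h4.trans ?_
        gcongr
        linarith
      _ = _ := by ring


lemma hda_congr {f g : ℝ → ℝ} {f' g' x : ℝ} (h : HasDerivAt f f' x) (e : ∀ y, g y = f y)
    (e' : g' = f') : HasDerivAt g g' x := by
  have : g = f := funext e
  rw [this, e']; exact h

/-- application of the fourth derivative test -/
lemma E_apply (γ k1 k2 : ℝ) (hγ : 97 / 100 < γ) (hγ1 : γ < 1) (hk1 : 0 < k1) (hk : k1 ≤ k2) :
    ∃ C : ℝ, 1 ≤ C ∧ ∀ (Z : ℝ), 1 ≤ Z → ∀ (f : ℝ → ℝ) (h q : ℝ) (a b N : ℕ), 1 ≤ h →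
    h ≤ Z ^ (1 / 16 : ℝ) → 0 < q → b ≤ a + N → Z ≤ 16 * (N : ℝ) ^ 2 → (N : ℝ) ≤ 4 * Z →
    Z ^ 3 ≤ 8 * (q * (N : ℝ) ^ 3) → q * (N : ℝ) ^ 4 ≤ 256 * Z ^ 4 →
    Nice 4 f (k1 * (h * q * Z ^ (γ - 4))) (k2 * (h * q * Z ^ (γ - 4))) a b →
    ‖∑ n ∈ Finset.Ioc a b, eexp (f n)‖ ≤ C * (N * Z ^ (-(56 / 1000) : ℝ)) := by
  have hk2 : 0 < k2 := by linarith
  obtain ⟨C, hC, H⟩ := E_bound (k1 / 8) (k2 / k1) (1 + k2 * 256 * 256) (by positivity)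
    (by rw [le_div_iff₀ hk1]; linarith) (by linarith [mul_pos hk2 (show (0:ℝ) < 256 * 256 by norm_num)])
  refine ⟨C, hC, ?_⟩
  intro Z hZ f h q a b N h1 h2 hq hab hNZ hNZ2 hq3 hq4 hf
  have hZ0 : 0 < Z := by linarith
  have hW : 0 < Z ^ (γ - 4) := by positivity
  have hh0 : 0 < h := by linarith
  have hN0 : 0 < (N : ℝ) := by
    rcases Nat.eq_zero_or_pos N with rfl | h
    · norm_num at hNZ; linarith
    · exact_mod_cast h
  have e3 : Z ^ 3 * Z ^ (γ - 4) = Z ^ (γ - 1) := by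
    rw [← Real.rpow_natCast, ← Real.rpow_add hZ0]; congr 1; push_cast; ring
  have e4 : Z ^ 4 * Z ^ (γ - 4) = Z ^ γ := by
    rw [← Real.rpow_natCast, ← Real.rpow_add hZ0]; congr 1; push_cast; ring
  refine H Z hZ f _ _ a b N (by positivity) ?_ ?_ hab hNZ hNZ2 ?_ ?_ hf
  · gcongr
  · have : k2 / k1 * (k1 * (h * q * Z ^ (γ - 4))) = k2 * (h * q * Z ^ (γ - 4)) := by field_simp
    rw [this]
  · calc k1 / 8 * Z ^ (-(3 / 100) : ℝ) ≤ k1 / 8 * Z ^ (γ - 1) := by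
          gcongr
          linarith
      _ = k1 / 8 * (Z ^ 3 * Z ^ (γ - 4)) := by rw [e3]
      _ ≤ k1 / 8 * ((8 * (q * (N : ℝ) ^ 3)) * Z ^ (γ - 4)) := by gcongr
      _ = k1 * (1 * q * Z ^ (γ - 4)) * N ^ 3 := by ring
      _ ≤ k1 * (h * q * Z ^ (γ - 4)) * N ^ 3 := by gcongr
  · have hN4 : Z ^ 2 ≤ 256 * (N : ℝ) ^ 4 := by
      calc Z ^ 2 ≤ (16 * (N : ℝ) ^ 2) ^ 2 := by gcongr
        _ = _ := by ring
    have e5 : Z ^ (1 / 16 : ℝ) * Z ^ γ ≤ Z ^ (-(15 / 16) : ℝ) * Z ^ 2 := by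
      rw [← Real.rpow_natCast, ← Real.rpow_add hZ0, ← Real.rpow_add hZ0]
      apply Real.rpow_le_rpow_of_exponent_le hZ
      push_cast; linarith
    have e6 : (h * q * Z ^ (γ - 4)) * N ^ 4 ≤ 256 * 256 * Z ^ (-(15 / 16) : ℝ) * N ^ 4 := by
      calc (h * q * Z ^ (γ - 4)) * N ^ 4 = h * (q * N ^ 4) * Z ^ (γ - 4) := by ring
        _ ≤ Z ^ (1 / 16 : ℝ) * (256 * Z ^ 4) * Z ^ (γ - 4) := by gcongr
        _ = 256 * (Z ^ (1 / 16 : ℝ) * Z ^ γ) := by rw [← e4]; ring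
        _ ≤ 256 * (Z ^ (-(15 / 16) : ℝ) * (256 * (N : ℝ) ^ 4)) := by
            gcongr 256 * ?_
            exact e5.trans (by gcongr)
        _ = _ := by ring
    have e7 := le_of_mul_le_mul_right e6 (by positivity)
    have : 0 < Z ^ (-(15 / 16) : ℝ) := by positivity
    calc k2 * (h * q * Z ^ (γ - 4)) ≤ k2 * (256 * 256 * Z ^ (-(15 / 16) : ℝ)) := by gcongr
      _ ≤ _ := by linarith

/-- derivative of `k * l^j (x l + u)^s` -/
lemma hasDerivAt_lin_pow (k l u s x : ℝ) (j : ℕ) (hx : 0 < x * l + u) :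
    HasDerivAt (fun x : ℝ => k * (l ^ j * (x * l + u) ^ s))
      ((k * s) * (l ^ (j + 1) * (x * l + u) ^ (s - 1))) x := by
  have h1 : HasDerivAt (fun x : ℝ => x * l + u) l x := by
    simpa using ((hasDerivAt_id x).mul_const l).add_const u
  have h2 := ((h1.rpow_const (p := s) (Or.inl hx.ne')).const_mul (l ^ j)).const_mul k
  exact hda_congr h2 (fun y => by ring) (by ring)

lemma nice_phase (γ A h u l1 l2 σ lo hi : ℝ) (a b : ℝ)
    (hp1 : ∀ x ∈ Set.Icc a b, 0 < x * l1 + u) (hp2 : ∀ x ∈ Set.Icc a b, 0 < x * l2 + u)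
    (hG : ∀ x ∈ Set.Icc a b, lo ≤ h * (γ * (1 - γ) * (2 - γ) * (3 - γ)) *
        (l1 ^ 4 * (x * l1 + u) ^ (γ - 4) - σ * (l2 ^ 4 * (x * l2 + u) ^ (γ - 4))) ∧
      h * (γ * (1 - γ) * (2 - γ) * (3 - γ)) *
        (l1 ^ 4 * (x * l1 + u) ^ (γ - 4) - σ * (l2 ^ 4 * (x * l2 + u) ^ (γ - 4))) ≤ hi)
    (hanti : AntitoneOn (fun x : ℝ => h * (γ * (1 - γ) * (2 - γ) * (3 - γ)) *
        (l1 ^ 4 * (x * l1 + u) ^ (γ - 4) - σ * (l2 ^ 4 * (x * l2 + u) ^ (γ - 4)))) (Set.Icc a b)) :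
    Nice 4 (fun x => A * x ^ 3 - h * ((x * l1 + u) ^ γ - σ * (x * l2 + u) ^ γ)) lo hi a b := by
  have key : ∀ (k s x : ℝ) (j : ℕ), x ∈ Set.Icc a b → HasDerivAt
      (fun x : ℝ => h * k * (l1 ^ j * (x * l1 + u) ^ s) - σ * (h * k * (l2 ^ j * (x * l2 + u) ^ s)))
      ((h * (k * s)) * (l1 ^ (j + 1) * (x * l1 + u) ^ (s - 1)) -
        σ * (h * (k * s) * (l2 ^ (j + 1) * (x * l2 + u) ^ (s - 1)))) x := by
    intro k s x j hx
    have h1 := hasDerivAt_lin_pow (h * k) l1 u s x j (hp1 x hx)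
    have h2 := (hasDerivAt_lin_pow (h * k) l2 u s x j (hp2 x hx)).const_mul σ
    exact hda_congr (h1.sub h2) (fun y => rfl) (by ring)
  have p3 : ∀ x : ℝ, HasDerivAt (fun x : ℝ => A * x ^ 3) (3 * A * x ^ 2) x := by
    intro x
    exact hda_congr ((hasDerivAt_pow 3 x).const_mul A) (fun y => rfl) (by push_cast; ring)
  have p2 : ∀ x : ℝ, HasDerivAt (fun x : ℝ => 3 * A * x ^ 2) (6 * A * x) x := by
    intro x
    exact hda_congr ((hasDerivAt_pow 2 x).const_mul (3 * A)) (fun y => rfl) (by push_cast; ring)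
  have p1 : ∀ x : ℝ, HasDerivAt (fun x : ℝ => 6 * A * x) (6 * A) x := by
    intro x
    simpa using (hasDerivAt_id x).const_mul (6 * A)
  refine ⟨fun x => 3 * A * x ^ 2 - (h * (1 * γ) * (l1 ^ 1 * (x * l1 + u) ^ (γ - 1)) -
    σ * (h * (1 * γ) * (l2 ^ 1 * (x * l2 + u) ^ (γ - 1)))), ?_, ?_⟩
  · intro x hx
    exact hda_congr ((p3 x).sub (key 1 γ x 0 hx)) (fun y => by simp; ring) (by ring)
  refine ⟨fun x => 6 * A * x - (h * (1 * γ * (γ - 1)) * (l1 ^ 2 * (x * l1 + u) ^ (γ - 1 - 1)) -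
    σ * (h * (1 * γ * (γ - 1)) * (l2 ^ 2 * (x * l2 + u) ^ (γ - 1 - 1)))), ?_, ?_⟩
  · intro x hx
    exact (p2 x).sub (key (1 * γ) (γ - 1) x 1 hx)
  refine ⟨fun x => 6 * A - (h * (1 * γ * (γ - 1) * (γ - 1 - 1)) *
      (l1 ^ 3 * (x * l1 + u) ^ (γ - 1 - 1 - 1)) -
    σ * (h * (1 * γ * (γ - 1) * (γ - 1 - 1)) * (l2 ^ 3 * (x * l2 + u) ^ (γ - 1 - 1 - 1)))), ?_, ?_⟩
  · intro x hx
    exact (p1 x).sub (key (1 * γ * (γ - 1)) (γ - 1 - 1) x 2 hx)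
  refine ⟨fun x : ℝ => h * (γ * (1 - γ) * (2 - γ) * (3 - γ)) *
        (l1 ^ 4 * (x * l1 + u) ^ (γ - 4) - σ * (l2 ^ 4 * (x * l2 + u) ^ (γ - 4))), ?_, hanti, hG⟩
  intro x hx
  refine hda_congr ((hasDerivAt_const x (6 * A)).sub
    (key (1 * γ * (γ - 1) * (γ - 1 - 1)) (γ - 1 - 1 - 1) x 3 hx)) (fun y => rfl) ?_
  have : γ - 1 - 1 - 1 - 1 = γ - 4 := by ring
  rw [this]
  ring

lemma rpow_window (γ Z w : ℝ) (hγ : 0 < γ) (hγ1 : γ < 1) (hZ : 0 < Z) (h1 : Z / 2 ≤ w)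
    (h2 : w ≤ 3 * Z) :
    (1 / 81) * Z ^ (γ - 4) ≤ w ^ (γ - 4) ∧ w ^ (γ - 4) ≤ 16 * Z ^ (γ - 4) := by
  have hw : 0 < w := by linarith
  have hW : 0 < Z ^ (γ - 4) := by positivity
  constructor
  · have : (3 * Z) ^ (γ - 4) ≤ w ^ (γ - 4) :=
      Real.rpow_le_rpow_of_nonpos hw h2 (by linarith)
    refine le_trans ?_ this
    rw [Real.mul_rpow (by norm_num) hZ.le]
    gcongr
    have : (3 : ℝ) ^ (-4 : ℝ) ≤ 3 ^ (γ - 4) :=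
      Real.rpow_le_rpow_of_exponent_le (by norm_num) (by linarith)
    refine le_trans ?_ this
    rw [Real.rpow_neg (by norm_num)]; norm_num
  · have : w ^ (γ - 4) ≤ (Z / 2) ^ (γ - 4) :=
      Real.rpow_le_rpow_of_nonpos (by positivity) h1 (by linarith)
    refine this.trans ?_
    rw [Real.div_rpow hZ.le (by norm_num), div_le_iff₀ (by positivity)]
    have : (2 : ℝ) ^ (-4 : ℝ) ≤ 2 ^ (γ - 4) :=
      Real.rpow_le_rpow_of_exponent_le (by norm_num) (by linarith)
    have h3 : (2 : ℝ) ^ (-4 : ℝ) = 1 / 16 := by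
      rw [Real.rpow_neg (by norm_num)]; norm_num
    rw [h3] at this
    calc Z ^ (γ - 4) = 16 * Z ^ (γ - 4) * (1 / 16) := by ring
      _ ≤ _ := by gcongr

/-- The basic phase. -/
noncomputable def Fph (γ α h u : ℝ) (n : ℕ) : ℂ := eexp (α * (n : ℝ) ^ 3 - h * ((n : ℝ) + u) ^ γ)

lemma Fph_norm (γ α h u : ℝ) (n : ℕ) : ‖Fph γ α h u n‖ = 1 := eexp_norm _

/-- type I smooth sum -/
lemma typeI_core (γ : ℝ) (hγ : 97 / 100 < γ) (hγ1 : γ < 1) :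
    ∃ C : ℝ, 1 ≤ C ∧ ∀ (Z : ℝ), 1 ≤ Z → ∀ (α h u : ℝ) (l a b N : ℕ), 1 ≤ h →
    h ≤ Z ^ (1 / 16 : ℝ) → 0 ≤ u → u ≤ 1 → 0 < l → Z / 2 ≤ (a : ℝ) * l → (b : ℝ) * l ≤ 2 * Z →
    b ≤ a + N → Z ≤ 16 * (N : ℝ) ^ 2 → Z ≤ 2 * ((N : ℝ) * l) → (N : ℝ) * l ≤ 2 * Z →
    ‖∑ m ∈ Finset.Ioc a b, Fph γ α h u (m * l)‖ ≤ C * (N * Z ^ (-(56 / 1000) : ℝ)) := by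
  set K := γ * (1 - γ) * (2 - γ) * (3 - γ) with hK
  have hK0 : 0 < K := by
    have : 0 < 1 - γ := by linarith
    have : 0 < 2 - γ := by linarith
    have : 0 < 3 - γ := by linarith
    positivity
  obtain ⟨C, hC, H⟩ := E_apply γ (K * (1 / 81)) (K * 16) hγ hγ1 (by positivity)
    (by gcongr; norm_num)
  refine ⟨C, hC, ?_⟩
  intro Z hZ α h u l a b N h1 h2 hu0 hu1 hl ha hb hab hNZ hNl1 hNl2
  have hZ0 : 0 < Z := by linarith
  have hl0 : (0 : ℝ) < l := by exact_mod_cast hl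
  have hl1 : (1 : ℝ) ≤ l := by exact_mod_cast hl
  have hNn : (0 : ℝ) ≤ N := by positivity
  have hwin : ∀ x ∈ Set.Icc (a : ℝ) b, Z / 2 ≤ x * l + u ∧ x * l + u ≤ 3 * Z := by
    intro x hx
    have i1 : (a : ℝ) * l ≤ x * l := by gcongr; exact hx.1
    have i2 : x * l ≤ (b : ℝ) * l := by gcongr; exact hx.2
    constructor <;> linarith
  have hh0 : 0 < h := by linarith
  have key := H Z hZ (fun x => (α * l ^ 3) * x ^ 3 - h * ((x * l + u) ^ γ - 0 * (x * l + u) ^ γ))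
    h ((l : ℝ) ^ 4) a b N h1 h2 (by positivity) hab hNZ (by nlinarith) ?_ ?_ ?_
  · refine le_trans (le_of_eq ?_) key
    congr 1
    refine Finset.sum_congr rfl fun m _ => ?_
    unfold Fph
    congr 1
    push_cast; ring
  · calc Z ^ 3 ≤ (2 * ((N : ℝ) * l)) ^ 3 := by gcongr
      _ = 8 * (((l : ℝ) ^ 3 * 1) * N ^ 3) := by ring
      _ ≤ 8 * (((l : ℝ) ^ 3 * l) * N ^ 3) := by gcongr
      _ = _ := by ring
  · calc (l : ℝ) ^ 4 * N ^ 4 = (N * l) ^ 4 := by ring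
      _ ≤ (2 * Z) ^ 4 := by gcongr
      _ ≤ _ := by nlinarith [pow_pos hZ0 4]
  · apply nice_phase
    · intro x hx; have := (hwin x hx).1; linarith
    · intro x hx; have := (hwin x hx).1; linarith
    · intro x hx
      obtain ⟨w1, w2⟩ := hwin x hx
      obtain ⟨r1, r2⟩ := rpow_window γ Z _ (by linarith) hγ1 hZ0 w1 w2
      rw [← hK]
      constructor
      · calc K * (1 / 81) * (h * (l : ℝ) ^ 4 * Z ^ (γ - 4)) =
            h * K * (l ^ 4 * (1 / 81 * Z ^ (γ - 4))) := by ring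
          _ ≤ h * K * (l ^ 4 * (x * l + u) ^ (γ - 4)) := by gcongr
          _ = _ := by ring
      · calc _ = h * K * (l ^ 4 * (x * l + u) ^ (γ - 4)) := by ring
          _ ≤ h * K * (l ^ 4 * (16 * Z ^ (γ - 4))) := by gcongr
          _ = _ := by ring
    · rw [← hK]
      intro x hx y hy hxy
      have w1 := (hwin x hx).1
      have : ((y : ℝ) * l + u) ^ (γ - 4) ≤ (x * l + u) ^ (γ - 4) :=
        Real.rpow_le_rpow_of_nonpos (by linarith) (by gcongr) (by linarith)
      simp only [zero_mul, sub_zero]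
      gcongr

lemma phi_mono (s x u l1 l2 : ℝ) (j : ℕ) (hs : s ≤ 0) (hsj : -j ≤ s) (hx : 0 ≤ x) (hu : 0 ≤ u) (hl2 : 0 < l2)
    (hl : l2 ≤ l1) (hp : 0 < x * l2 + u) :
    l2 ^ j * (x * l2 + u) ^ s ≤ l1 ^ j * (x * l1 + u) ^ s := by
  have hl1 : 0 < l1 := by linarith
  have hp1 : 0 < x * l1 + u := by
    have : x * l2 ≤ x * l1 := by gcongr
    linarith
  have e : ∀ l : ℝ, 0 < l → 0 < x * l + u → l ^ j * (x * l + u) ^ s =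
      l ^ (j + s) * (l / (x * l + u)) ^ (-s) := by
    intro l hl hp
    rw [Real.div_rpow hl.le hp.le, Real.rpow_neg hp.le, div_eq_mul_inv, inv_inv, ← mul_assoc,
      ← Real.rpow_add hl]
    congr 1
    rw [add_assoc, add_neg_cancel, add_zero, Real.rpow_natCast]
  rw [e l2 hl2 hp, e l1 hl1 hp1]
  have : l2 / (x * l2 + u) ≤ l1 / (x * l1 + u) := by
    rw [div_le_div_iff₀ hp hp1]; nlinarith
  gcongr <;> linarith

lemma phi_diff (γ Z x u l1 l2 : ℝ) (hγ : 97 / 100 < γ) (hγ1 : γ < 1) (hZ : 1 ≤ Z) (hx : 0 ≤ x)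
    (hu : 0 ≤ u) (hl2 : 0 < l2) (hl : l2 < l1) (h1 : Z / 2 ≤ x * l2 + u) (h2 : x * l1 + u ≤ 3 * Z) :
    (1 / 162) * ((l1 - l2) * l2 ^ 3 * Z ^ (γ - 4)) ≤
      l1 ^ 4 * (x * l1 + u) ^ (γ - 4) - l2 ^ 4 * (x * l2 + u) ^ (γ - 4) ∧
    l1 ^ 4 * (x * l1 + u) ^ (γ - 4) - l2 ^ 4 * (x * l2 + u) ^ (γ - 4) ≤
      64 * ((l1 - l2) * l1 ^ 3 * Z ^ (γ - 4)) := by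
  have hZ0 : 0 < Z := by linarith
  have hW : 0 < Z ^ (γ - 4) := by positivity
  have hwin : ∀ l ∈ Set.Icc l2 l1, Z / 2 ≤ x * l + u ∧ x * l + u ≤ 3 * Z := by
    intro l hl
    have i1 : x * l2 ≤ x * l := by gcongr; exact hl.1
    have i2 : x * l ≤ x * l1 := by gcongr; exact hl.2
    constructor <;> linarith
  have hd : ∀ l ∈ Set.Icc l2 l1, HasDerivAt (fun l : ℝ => l ^ 4 * (x * l + u) ^ (γ - 4))
      (4 * l ^ 3 * (x * l + u) ^ (γ - 4) + l ^ 4 * (x * (γ - 4) * (x * l + u) ^ (γ - 4 - 1))) l := by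
    intro l hl
    have hp : 0 < x * l + u := by have := (hwin l hl).1; linarith
    have e1 : HasDerivAt (fun l : ℝ => x * l + u) x l := by
      simpa using ((hasDerivAt_id l).const_mul x).add_const u
    exact hda_congr ((hasDerivAt_pow 4 l).mul (e1.rpow_const (p := γ - 4) (Or.inl hp.ne')))
      (fun y => rfl) (by push_cast; ring)
  obtain ⟨l, hlm, hle⟩ := exists_hasDerivAt_eq_slope (fun l : ℝ => l ^ 4 * (x * l + u) ^ (γ - 4))
    _ hl (fun l hl => (hd l hl).continuousAt.continuousWithinAt)
    (fun l hl => hd l ⟨hl.1.le, hl.2.le⟩)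
  have hlm' : l ∈ Set.Icc l2 l1 := ⟨hlm.1.le, hlm.2.le⟩
  obtain ⟨w1, w2⟩ := hwin l hlm'
  have hl0 : 0 < l := by linarith [hlm.1]
  have hp : 0 < x * l + u := by linarith
  rw [eq_div_iff (by linarith)] at hle
  obtain ⟨r1, r2⟩ := rpow_window γ Z _ (by linarith) hγ1 hZ0 w1 w2
  have eD : 4 * l ^ 3 * (x * l + u) ^ (γ - 4) + l ^ 4 * (x * (γ - 4) * (x * l + u) ^ (γ - 4 - 1)) =
      l ^ 3 * (x * l + u) ^ (γ - 4) * (4 + (γ - 4) * (x * l / (x * l + u))) := by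
    rw [Real.rpow_sub_one hp.ne']; field_simp
  have hr0 : 0 ≤ x * l / (x * l + u) := by positivity
  have hr1 : x * l / (x * l + u) ≤ 1 := by rw [div_le_one hp]; linarith
  have hf1 : 1 / 2 ≤ 4 + (γ - 4) * (x * l / (x * l + u)) := by nlinarith
  have hf2 : 4 + (γ - 4) * (x * l / (x * l + u)) ≤ 4 := by nlinarith
  rw [← hle, eD]
  have hd0 : 0 < l1 - l2 := by linarith
  have hl10 : 0 < l1 := by linarith
  constructor
  · calc (1 / 162) * ((l1 - l2) * l2 ^ 3 * Z ^ (γ - 4)) =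
        l2 ^ 3 * (1 / 81 * Z ^ (γ - 4)) * (1 / 2) * (l1 - l2) := by ring
      _ ≤ _ := by
        gcongr
        exact hlm.1.le
  · calc _ ≤ l1 ^ 3 * (16 * Z ^ (γ - 4)) * 4 * (l1 - l2) := by
          gcongr
          exact hlm.2.le
      _ = _ := by ring

/-- type II correlation sum -/
lemma typeII_core (γ : ℝ) (hγ : 97 / 100 < γ) (hγ1 : γ < 1) :
    ∃ C : ℝ, 1 ≤ C ∧ ∀ (Z : ℝ), 1 ≤ Z → ∀ (α h u : ℝ) (l1 l2 a b N : ℕ), 1 ≤ h →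
    h ≤ Z ^ (1 / 16 : ℝ) → 0 ≤ u → u ≤ 1 → 0 < l2 → l2 < l1 →
    Z / 2 ≤ (a : ℝ) * l2 → (b : ℝ) * l1 ≤ 2 * Z →
    b ≤ a + N → Z ≤ 16 * (N : ℝ) ^ 2 → Z ≤ 2 * ((N : ℝ) * l2) → (N : ℝ) * l1 ≤ 2 * Z →
    ‖∑ m ∈ Finset.Ioc a b, Fph γ α h u (m * l1) * (starRingEnd ℂ) (Fph γ α h u (m * l2))‖ ≤
      C * (N * Z ^ (-(56 / 1000) : ℝ)) := by
  set K := γ * (1 - γ) * (2 - γ) * (3 - γ) with hK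
  have hK0 : 0 < K := by
    have : 0 < 1 - γ := by linarith
    have : 0 < 2 - γ := by linarith
    have : 0 < 3 - γ := by linarith
    positivity
  obtain ⟨C, hC, H⟩ := E_apply γ (K * (1 / 162)) (K * 4096) hγ hγ1 (by positivity)
    (by gcongr; norm_num)
  refine ⟨C, hC, ?_⟩
  intro Z hZ α h u l1 l2 a b N h1 h2 hu0 hu1 hl hll ha hb hab hNZ hNl1 hNl2
  have hZ0 : 0 < Z := by linarith
  have hl0 : (0 : ℝ) < l2 := by exact_mod_cast hl
  have hl1 : (1 : ℝ) ≤ l2 := by exact_mod_cast hl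
  have hll' : (l2 : ℝ) < l1 := by exact_mod_cast hll
  have hl10 : (0 : ℝ) < l1 := by linarith
  have hd1 : (1 : ℝ) ≤ (l1 : ℝ) - l2 := by
    have : (l2 : ℝ) + 1 ≤ l1 := by exact_mod_cast hll
    linarith
  have hN0 : 0 < (N : ℝ) := by
    rcases Nat.eq_zero_or_pos N with rfl | h
    · norm_num at hNZ; linarith
    · exact_mod_cast h
  have hrat : (l1 : ℝ) ≤ 4 * l2 := by
    have : (N : ℝ) * l1 ≤ N * (4 * l2) := by linarith
    exact le_of_mul_le_mul_left this hN0
  have hwin : ∀ x ∈ Set.Icc (a : ℝ) b, 0 ≤ x ∧ Z / 2 ≤ x * l2 + u ∧ x * l1 + u ≤ 3 * Z ∧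
      Z / 2 ≤ x * l1 + u := by
    intro x hx
    have hx0 : 0 ≤ x := le_trans (Nat.cast_nonneg a) hx.1
    have i1 : (a : ℝ) * l2 ≤ x * l2 := by gcongr; exact hx.1
    have i2 : x * l1 ≤ (b : ℝ) * l1 := by gcongr; exact hx.2
    have i3 : x * l2 ≤ x * l1 := by gcongr
    exact ⟨hx0, by linarith, by linarith, by linarith⟩
  have hh0 : 0 < h := by linarith
  have key := H Z hZ (fun x => (α * (l1 ^ 3 - l2 ^ 3)) * x ^ 3 -
      h * ((x * l1 + u) ^ γ - 1 * (x * l2 + u) ^ γ))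
    h (((l1 : ℝ) - l2) * (l2 : ℝ) ^ 3) a b N h1 h2 (by positivity) hab hNZ (by nlinarith) ?_ ?_ ?_
  · refine le_trans (le_of_eq ?_) key
    congr 1
    refine Finset.sum_congr rfl fun m _ => ?_
    unfold Fph
    rw [eexp_conj, ← eexp_add]
    congr 1
    push_cast; ring
  · calc Z ^ 3 ≤ (2 * ((N : ℝ) * l2)) ^ 3 := by gcongr
      _ = 8 * ((1 * (l2 : ℝ) ^ 3) * N ^ 3) := by ring
      _ ≤ _ := by gcongr
  · calc ((l1 : ℝ) - l2) * (l2 : ℝ) ^ 3 * (N : ℝ) ^ 4 ≤ ((l1 : ℝ) * l1 ^ 3) * (N : ℝ) ^ 4 := by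
          gcongr; linarith
      _ = ((N : ℝ) * (l1 : ℝ)) ^ 4 := by ring
      _ ≤ (2 * Z) ^ 4 := by gcongr
      _ ≤ _ := by nlinarith [pow_pos hZ0 4]
  · apply nice_phase
    · intro x hx; have := (hwin x hx).2.2.2; linarith
    · intro x hx; have := (hwin x hx).2.1; linarith
    · intro x hx
      obtain ⟨w0, w1, w2, -⟩ := hwin x hx
      obtain ⟨r1, r2⟩ := phi_diff γ Z x u l1 l2 hγ hγ1 hZ w0 hu0 hl0 hll' w1 w2
      rw [← hK, one_mul]
      have hW : 0 < Z ^ (γ - 4) := by positivity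
      constructor
      · calc K * (1 / 162) * (h * (((l1 : ℝ) - l2) * (l2 : ℝ) ^ 3) * Z ^ (γ - 4)) =
            h * K * (1 / 162 * (((l1 : ℝ) - l2) * (l2 : ℝ) ^ 3 * Z ^ (γ - 4))) := by ring
          _ ≤ _ := by gcongr
      · calc _ ≤ h * K * (64 * (((l1 : ℝ) - l2) * l1 ^ 3 * Z ^ (γ - 4))) := by gcongr
          _ ≤ h * K * (64 * (((l1 : ℝ) - l2) * (4 * l2) ^ 3 * Z ^ (γ - 4))) := by
            have : 0 < (l1 : ℝ) - l2 := by linarith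
            gcongr
          _ = _ := by ring
    · rw [← hK]
      apply antitoneOn_of_deriv_nonpos (convex_Icc _ _)
      · intro x hx
        have q1 := (hwin x hx).2.2.2
        have q2 := (hwin x hx).2.1
        have d1 := hasDerivAt_lin_pow 1 l1 u (γ - 4) x 4 (by linarith)
        have d2 := hasDerivAt_lin_pow 1 l2 u (γ - 4) x 4 (by linarith)
        refine ContinuousAt.continuousWithinAt ?_
        have := ((d1.sub d2).const_mul (h * K)).continuousAt
        refine this.congr (Filter.Eventually.of_forall fun y => ?_)
        simp
      · intro x hx
        rw [interior_Icc] at hx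
        have hx' := Set.Ioo_subset_Icc_self hx
        have q1 := (hwin x hx').2.2.2
        have q2 := (hwin x hx').2.1
        have d1 := hasDerivAt_lin_pow 1 l1 u (γ - 4) x 4 (by linarith)
        have d2 := hasDerivAt_lin_pow 1 l2 u (γ - 4) x 4 (by linarith)
        have := ((d1.sub d2).const_mul (h * K))
        have d3 := hda_congr (g := fun x : ℝ => h * K * ((l1 : ℝ) ^ 4 * (x * l1 + u) ^ (γ - 4) -
          1 * ((l2 : ℝ) ^ 4 * (x * l2 + u) ^ (γ - 4)))) this (fun y => by simp) rfl
        exact d3.differentiableAt.differentiableWithinAt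
      · intro x hx
        rw [interior_Icc] at hx
        have hx' := Set.Ioo_subset_Icc_self hx
        have q1 := (hwin x hx').2.2.2
        have q2 := (hwin x hx').2.1
        have d1 := hasDerivAt_lin_pow 1 l1 u (γ - 4) x 4 (by linarith)
        have d2 := hasDerivAt_lin_pow 1 l2 u (γ - 4) x 4 (by linarith)
        have := ((d1.sub d2).const_mul (h * K))
        have d3 := hda_congr (g := fun x : ℝ => h * K * ((l1 : ℝ) ^ 4 * (x * l1 + u) ^ (γ - 4) -
          1 * ((l2 : ℝ) ^ 4 * (x * l2 + u) ^ (γ - 4)))) this (fun y => by simp) rfl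
        rw [d3.deriv]
        have pm := phi_mono (γ - 4 - 1) x u l1 l2 5 (by linarith) (by push_cast; linarith)
          (hwin x hx').1 hu0 hl0 hll'.le (by linarith)
        have e : h * K * (1 * (γ - 4) * ((l1 : ℝ) ^ (4 + 1) * (x * l1 + u) ^ (γ - 4 - 1)) -
            1 * (γ - 4) * ((l2 : ℝ) ^ (4 + 1) * (x * l2 + u) ^ (γ - 4 - 1))) =
          -(h * K * (4 - γ) * ((l1 : ℝ) ^ 5 * (x * l1 + u) ^ (γ - 4 - 1) -
            ((l2 : ℝ) ^ 5 * (x * l2 + u) ^ (γ - 4 - 1)))) := by ring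
        rw [e, neg_nonpos]
        have t1 : 0 < 4 - γ := by linarith
        have t2 := sub_nonneg.mpr pm
        positivity


lemma corr_all (γ : ℝ) (hγ : 97 / 100 < γ) (hγ1 : γ < 1) :
    ∃ C : ℝ, 1 ≤ C ∧ ∀ (Z Z' M : ℕ), 1 ≤ Z → Z' ≤ 2 * Z → Z ≤ 16 * M ^ 2 →
    ∀ (α h u : ℝ), 1 ≤ h → h ≤ (Z : ℝ) ^ (1 / 16 : ℝ) → 0 ≤ u → u ≤ 1 →
    ∀ l1 l2 : ℕ, l1 ≠ l2 → Z < 2 * (M * l1) → M * l1 < 2 * Z → Z < 2 * (M * l2) → M * l2 < 2 * Z →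
    ‖∑ m ∈ Finset.Ioc M (2 * M), (if Z < m * l1 ∧ m * l1 ≤ Z' then Fph γ α h u (m * l1) else 0) *
      (starRingEnd ℂ) (if Z < m * l2 ∧ m * l2 ≤ Z' then Fph γ α h u (m * l2) else 0)‖ ≤
      C * (M * (Z : ℝ) ^ (-(56 / 1000) : ℝ)) := by
  obtain ⟨C, hC, H⟩ := typeII_core γ hγ hγ1
  refine ⟨C, hC, ?_⟩
  intro Z Z' M hZ hZ' hM α h u h1 h2 hu0 hu1
  have main : ∀ l1 l2 : ℕ, l2 < l1 → Z < 2 * (M * l1) → M * l1 < 2 * Z → Z < 2 * (M * l2) →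
      M * l2 < 2 * Z →
    ‖∑ m ∈ Finset.Ioc M (2 * M), (if Z < m * l1 ∧ m * l1 ≤ Z' then Fph γ α h u (m * l1) else 0) *
      (starRingEnd ℂ) (if Z < m * l2 ∧ m * l2 ≤ Z' then Fph γ α h u (m * l2) else 0)‖ ≤
      C * (M * (Z : ℝ) ^ (-(56 / 1000) : ℝ)) := by
    intro l1 l2 hl a1 a2 a3 a4
    have hl2 : 0 < l2 := by
      rcases Nat.eq_zero_or_pos l2 with rfl | h
      · simp at a3
      · exact h
    have hl1 : 0 < l1 := by omega
    have key := H Z (by exact_mod_cast hZ) α h u l1 l2 (max M (max (Z / l1) (Z / l2)))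
      (min (2 * M) (min (Z' / l1) (Z' / l2))) M h1 h2 hu0 hu1 hl2 hl ?_ ?_ ?_ ?_ ?_ ?_
    · refine le_trans (le_of_eq ?_) key
      congr 1
      have hs : Finset.Ioc (max M (max (Z / l1) (Z / l2))) (min (2 * M) (min (Z' / l1) (Z' / l2))) =
          (Finset.Ioc M (2 * M)).filter
            (fun m => (Z < m * l1 ∧ m * l1 ≤ Z') ∧ (Z < m * l2 ∧ m * l2 ≤ Z')) := by
        ext m
        simp only [Finset.mem_Ioc, Finset.mem_filter, max_lt_iff, le_min_iff,
          Nat.div_lt_iff_lt_mul hl1, Nat.div_lt_iff_lt_mul hl2, Nat.le_div_iff_mul_le hl1,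
          Nat.le_div_iff_mul_le hl2]
        tauto
      rw [hs, Finset.sum_filter]
      refine Finset.sum_congr rfl fun m _ => ?_
      by_cases c1 : Z < m * l1 ∧ m * l1 ≤ Z' <;> by_cases c2 : Z < m * l2 ∧ m * l2 ≤ Z' <;>
        simp [c1, c2]
    · have : (M : ℝ) ≤ ((max M (max (Z / l1) (Z / l2)) : ℕ) : ℝ) := by
        exact_mod_cast le_max_left _ _
      have h3 : (Z : ℝ) ≤ 2 * (M * l2) := by exact_mod_cast a3.le
      calc (Z : ℝ) / 2 ≤ M * l2 := by linarith
        _ ≤ _ := by gcongr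
    · have : (min (2 * M) (min (Z' / l1) (Z' / l2))) * l1 ≤ 2 * Z := by
        calc _ ≤ (Z' / l1) * l1 := by
              gcongr; exact (min_le_right _ _).trans (min_le_left _ _)
          _ ≤ Z' := Nat.div_mul_le_self _ _
          _ ≤ _ := hZ'
      exact_mod_cast this
    · have := min_le_left (2 * M) (min (Z' / l1) (Z' / l2))
      have := le_max_left M (max (Z / l1) (Z / l2))
      omega
    · exact_mod_cast hM
    · exact_mod_cast a3.le
    · exact_mod_cast a2.le
  intro l1 l2 hne a1 a2 a3 a4
  rcases lt_or_gt_of_ne hne with hl | hl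
  · have := main l2 l1 hl a3 a4 a1 a2
    rw [← Complex.norm_conj, map_sum] at this
    refine le_trans (le_of_eq ?_) this
    congr 1
    refine Finset.sum_congr rfl fun m _ => ?_
    rw [map_mul, Complex.conj_conj, mul_comm]
  · exact main l1 l2 hl a1 a2 a3 a4

lemma bilinear (γ : ℝ) (hγ : 97 / 100 < γ) (hγ1 : γ < 1) :
    ∃ C : ℝ, 1 ≤ C ∧ ∀ (Z Z' M : ℕ), 1 ≤ Z → Z' ≤ 2 * Z → Z ≤ 16 * M ^ 2 →
    (M : ℝ) ≤ (Z : ℝ) ^ (9 / 10 : ℝ) →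
    ∀ (α h u : ℝ), 1 ≤ h → h ≤ (Z : ℝ) ^ (1 / 16 : ℝ) → 0 ≤ u → u ≤ 1 →
    ∀ (a b : ℕ → ℂ) (A B : ℝ), 0 ≤ A → 0 ≤ B → (∀ m ≤ 2 * Z, ‖a m‖ ≤ A) → (∀ l ≤ 2 * Z, ‖b l‖ ≤ B) →
    ‖∑ m ∈ Finset.Ioc M (2 * M), ∑ l ∈ Finset.Ioc 0 (2 * Z),
      (if Z < m * l ∧ m * l ≤ Z' then a m * b l * Fph γ α h u (m * l) else 0)‖ ≤
      C * (A * B * (Z : ℝ) ^ (1 - 28 / 1000 : ℝ)) := by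
  obtain ⟨C, hC, H⟩ := corr_all γ hγ hγ1
  refine ⟨6 * C, by linarith, ?_⟩
  intro Z Z' M hZ hZ' hM hMZ α h u h1 h2 hu0 hu1 a b A B hA hB ha hb
  have hZr : (1 : ℝ) ≤ Z := by exact_mod_cast hZ
  have hZ0 : (0 : ℝ) < Z := by linarith
  have hM0 : 0 < M := by
    rcases Nat.eq_zero_or_pos M with rfl | h
    · simp at hM; omega
    · exact h
  have hMr : (0 : ℝ) < M := by exact_mod_cast hM0
  set S := (Finset.Ioc 0 (2 * Z)).filter (fun l => Z < 2 * (M * l) ∧ M * l < 2 * Z) with hS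
  set G : ℕ → ℕ → ℂ := fun m l => if Z < m * l ∧ m * l ≤ Z' then Fph γ α h u (m * l) else 0 with hG
  have hG1 : ∀ m l, ‖G m l‖ ≤ 1 := by
    intro m l
    simp only [hG]
    split_ifs
    · exact (Fph_norm _ _ _ _ _).le
    · simp
  have hMle : M ≤ Z := by
    have : (M : ℝ) ≤ Z := hMZ.trans (by
      calc (Z : ℝ) ^ (9 / 10 : ℝ) ≤ (Z : ℝ) ^ (1 : ℝ) :=
            Real.rpow_le_rpow_of_exponent_le hZr (by norm_num)
        _ = Z := Real.rpow_one _)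
    exact_mod_cast this
  have hrw : (∑ m ∈ Finset.Ioc M (2 * M), ∑ l ∈ Finset.Ioc 0 (2 * Z),
      (if Z < m * l ∧ m * l ≤ Z' then a m * b l * Fph γ α h u (m * l) else 0)) =
      ∑ m ∈ Finset.Ioc M (2 * M), a m * ∑ l ∈ S, b l * G m l := by
    refine Finset.sum_congr rfl fun m hm => ?_
    rw [Finset.mem_Ioc] at hm
    rw [hS, Finset.sum_filter, Finset.mul_sum]
    refine Finset.sum_congr rfl fun l _ => ?_
    by_cases c : Z < m * l ∧ m * l ≤ Z'
    · have c1 : Z < 2 * (M * l) := by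
        calc Z < m * l := c.1
          _ ≤ (2 * M) * l := by gcongr; exact hm.2
          _ = _ := by ring
      have hl0 : 0 < l := by
        rcases Nat.eq_zero_or_pos l with rfl | h
        · simp at c
        · exact h
      have c2 : M * l < 2 * Z := by
        calc M * l < m * l := by gcongr; exact hm.1
          _ ≤ _ := c.2.trans hZ'
      rw [if_pos c, if_pos ⟨c1, c2⟩]
      simp only [hG, if_pos c]; ring
    · rw [if_neg c]
      simp only [hG, if_neg c]; simp
  rw [hrw]
  have hcard : (S.card : ℝ) * M ≤ 2 * Z := by
    have h3 : S ⊆ Finset.Ioc 0 (2 * Z / M) := by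
      intro l hl
      rw [hS, Finset.mem_filter, Finset.mem_Ioc] at hl
      rw [Finset.mem_Ioc]
      refine ⟨hl.1.1, ?_⟩
      rw [Nat.le_div_iff_mul_le hM0, mul_comm]
      exact hl.2.2.le
    have h4 := Finset.card_le_card h3
    rw [Nat.card_Ioc, Nat.sub_zero] at h4
    have h5 : S.card * M ≤ 2 * Z :=
      le_trans (Nat.mul_le_mul_right _ h4) (Nat.div_mul_le_self _ _)
    exact_mod_cast h5
  have s1 : ‖∑ m ∈ Finset.Ioc M (2 * M), a m * ∑ l ∈ S, b l * G m l‖ ^ 2 ≤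
      M * (A ^ 2 * ∑ m ∈ Finset.Ioc M (2 * M), ‖∑ l ∈ S, b l * G m l‖ ^ 2) := by
    refine (norm_sum_sq_le _ _).trans ?_
    have : ((Finset.Ioc M (2 * M)).card : ℝ) = M := by
      rw [Nat.card_Ioc]; congr 1; omega
    rw [this]
    refine mul_le_mul_of_nonneg_left ?_ hMr.le
    rw [Finset.mul_sum]
    refine Finset.sum_le_sum fun m hm => ?_
    rw [Finset.mem_Ioc] at hm
    rw [norm_mul, mul_pow]
    gcongr
    exact ha m (by omega)
  have s2 := sum_norm_sq_le (Finset.Ioc M (2 * M)) S (fun m l => b l * G m l)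
  have hbS : ∀ l ∈ S, ‖b l‖ ≤ B := by
    intro l hl
    rw [hS, Finset.mem_filter, Finset.mem_Ioc] at hl
    exact hb l hl.1.2
  set W := (Z : ℝ) ^ (-(56 / 1000) : ℝ) with hW
  have hW0 : 0 < W := by positivity
  have s3 : ∀ l1 ∈ S, ∀ l2 ∈ S, ‖∑ m ∈ Finset.Ioc M (2 * M),
      b l1 * G m l1 * (starRingEnd ℂ) (b l2 * G m l2)‖ ≤
      B ^ 2 * ((if l1 = l2 then (M : ℝ) else 0) + C * (M * W)) := by
    intro l1 m1 l2 m2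
    have e : ∑ m ∈ Finset.Ioc M (2 * M), b l1 * G m l1 * (starRingEnd ℂ) (b l2 * G m l2) =
        (b l1 * (starRingEnd ℂ) (b l2)) *
          ∑ m ∈ Finset.Ioc M (2 * M), G m l1 * (starRingEnd ℂ) (G m l2) := by
      rw [Finset.mul_sum]
      refine Finset.sum_congr rfl fun m _ => ?_
      rw [map_mul]; ring
    rw [e, norm_mul, norm_mul, Complex.norm_conj]
    have hb1 := hbS l1 m1
    have hb2 := hbS l2 m2
    rw [hS, Finset.mem_filter] at m1 m2
    have q : ‖∑ m ∈ Finset.Ioc M (2 * M), G m l1 * (starRingEnd ℂ) (G m l2)‖ ≤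
        (if l1 = l2 then (M : ℝ) else 0) + C * (M * W) := by
      split_ifs with hl
      · have : ‖∑ m ∈ Finset.Ioc M (2 * M), G m l1 * (starRingEnd ℂ) (G m l2)‖ ≤
            ∑ m ∈ Finset.Ioc M (2 * M), (1 : ℝ) := by
          refine norm_sum_le_of_le _ fun m _ => ?_
          rw [norm_mul, Complex.norm_conj]
          exact mul_le_one₀ (hG1 _ _) (norm_nonneg _) (hG1 _ _)
        rw [Finset.sum_const, Nat.card_Ioc, nsmul_eq_mul, mul_one] at this
        have e2 : 2 * M - M = M := by omega
        rw [e2] at this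
        have : 0 < C * (M * W) := by positivity
        linarith
      · rw [zero_add]
        exact H Z Z' M hZ hZ' hM α h u h1 h2 hu0 hu1 l1 l2 hl m1.2.1 m1.2.2 m2.2.1 m2.2.2
    calc _ ≤ B * B * ((if l1 = l2 then (M : ℝ) else 0) + C * (M * W)) := by gcongr
      _ = _ := by ring
  have s4 : ∑ m ∈ Finset.Ioc M (2 * M), ‖∑ l ∈ S, b l * G m l‖ ^ 2 ≤
      B ^ 2 * (S.card * M + S.card * (S.card * (C * (M * W)))) := by
    refine s2.trans ?_
    calc _ ≤ ∑ l1 ∈ S, ∑ l2 ∈ S, B ^ 2 * ((if l1 = l2 then (M : ℝ) else 0) + C * (M * W)) :=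
          Finset.sum_le_sum fun l1 m1 => Finset.sum_le_sum fun l2 m2 => s3 l1 m1 l2 m2
      _ = _ := by
        simp_rw [← Finset.mul_sum, Finset.sum_add_distrib]
        congr 1
        simp only [Finset.sum_ite_eq, Finset.sum_const, nsmul_eq_mul]
        congr 1
        rw [Finset.sum_congr rfl (fun x hx => if_pos hx)]
        simp
  have hsc : (0 : ℝ) ≤ S.card := Nat.cast_nonneg _
  have s5 : M * (S.card * M + S.card * (S.card * (C * (M * W)))) ≤ 6 * C * (Z ^ 2 * W) := by
    have e1 : (M : ℝ) * Z ≤ Z ^ 2 * W := by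
      have : (M : ℝ) ≤ Z * W := by
        refine hMZ.trans ?_
        rw [hW]
        nth_rewrite 2 [← Real.rpow_one (Z : ℝ)]
        rw [← Real.rpow_add hZ0]
        exact Real.rpow_le_rpow_of_exponent_le hZr (by norm_num)
      calc (M : ℝ) * Z ≤ Z * W * Z := by gcongr
        _ = _ := by ring
    calc (M : ℝ) * (S.card * M + S.card * (S.card * (C * (M * W)))) =
          M * (S.card * M) + C * W * ((S.card * M) * (S.card * M)) := by ring
      _ ≤ M * (2 * Z) + C * W * ((2 * Z) * (2 * Z)) := by gcongr
      _ = 2 * (M * Z) + 4 * C * (Z ^ 2 * W) := by ring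
      _ ≤ 2 * (Z ^ 2 * W) + 4 * C * (Z ^ 2 * W) := by gcongr
      _ ≤ 6 * C * (Z ^ 2 * W) := by
        have : 0 < (Z : ℝ) ^ 2 * W := by positivity
        nlinarith
  have s6 : (Z : ℝ) ^ 2 * W = ((Z : ℝ) ^ (1 - 28 / 1000 : ℝ)) ^ 2 := by
    rw [hW, ← Real.rpow_natCast, ← Real.rpow_natCast, ← Real.rpow_mul hZ0.le, ← Real.rpow_add hZ0]
    norm_num
  have s7 : ‖∑ m ∈ Finset.Ioc M (2 * M), a m * ∑ l ∈ S, b l * G m l‖ ^ 2 ≤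
      (6 * C * (A * B * (Z : ℝ) ^ (1 - 28 / 1000 : ℝ))) ^ 2 := by
    refine s1.trans ?_
    calc _ ≤ M * (A ^ 2 * (B ^ 2 * (S.card * M + S.card * (S.card * (C * (M * W)))))) := by
          gcongr
      _ = A ^ 2 * B ^ 2 * (M * (S.card * M + S.card * (S.card * (C * (M * W))))) := by ring
      _ ≤ A ^ 2 * B ^ 2 * (6 * C * (Z ^ 2 * W)) := by gcongr
      _ = (6 * C) * (A * B * (Z : ℝ) ^ (1 - 28 / 1000 : ℝ)) ^ 2 := by rw [s6]; ring
      _ ≤ (6 * C) ^ 2 * (A * B * (Z : ℝ) ^ (1 - 28 / 1000 : ℝ)) ^ 2 := by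
        gcongr
        exact le_self_pow₀ (by linarith) (by norm_num)
      _ = _ := by ring
  exact le_of_pow_le_pow_left₀ (by norm_num) (by positivity) s7


lemma divisor_bound (ε : ℝ) (hε : 0 < ε) : ∃ C : ℝ, 1 ≤ C ∧ ∀ n : ℕ, n ≠ 0 →
    (n.divisors.card : ℝ) ≤ C * (n : ℝ) ^ ε := by
  set K : ℝ := 1 + 1 / (ε * Real.log 2) with hK
  have hl2 : 0 < Real.log 2 := Real.log_pos (by norm_num)
  have hK1 : 1 ≤ K := by rw [hK]; have : 0 < 1 / (ε * Real.log 2) := by positivity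
                         linarith
  set P0 : ℕ := ⌈(2 : ℝ) ^ (1 / ε)⌉₊ with hP0
  have hfac : ∀ p k : ℕ, p.Prime → ((k : ℝ) + 1) ≤ (if p < P0 then K else 1) * ((p : ℝ) ^ k) ^ ε := by
    intro p k hp
    have hp2 : (2 : ℝ) ≤ p := by exact_mod_cast hp.two_le
    have e : ((p : ℝ) ^ k) ^ ε = (p : ℝ) ^ (k * ε) := by
      rw [← Real.rpow_natCast, ← Real.rpow_mul (by positivity)]
    have hk : (0 : ℝ) ≤ k := by positivity
    rw [e]
    split_ifs with h
    · have h1 : (2 : ℝ) ^ (k * ε) ≤ (p : ℝ) ^ (k * ε) := by gcongr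
      have h2 : 1 + k * ε * Real.log 2 ≤ (2 : ℝ) ^ (k * ε) := by
        rw [Real.rpow_def_of_pos (by norm_num)]
        have := Real.add_one_le_exp (Real.log 2 * (k * ε))
        linarith
      have h3 : (k : ℝ) + 1 ≤ K * (1 + k * ε * Real.log 2) := by
        have : K * (1 + k * ε * Real.log 2) = 1 + k * ε * Real.log 2 + 1 / (ε * Real.log 2) + k := by
          rw [hK]; field_simp; ring
        rw [this]
        have : 0 < 1 / (ε * Real.log 2) := by positivity
        have : 0 ≤ k * ε * Real.log 2 := by positivity
        linarith
      calc (k : ℝ) + 1 ≤ K * (1 + k * ε * Real.log 2) := h3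
        _ ≤ K * (2 : ℝ) ^ (k * ε) := by gcongr
        _ ≤ _ := by gcongr
    · rw [one_mul]
      have h1 : (2 : ℝ) ^ (1 / ε) ≤ p := by
        push Not at h
        exact (Nat.le_ceil _).trans (by exact_mod_cast h)
      have h2 : (2 : ℝ) ^ (k : ℝ) ≤ (p : ℝ) ^ (k * ε) := by
        calc (2 : ℝ) ^ (k : ℝ) = ((2 : ℝ) ^ (1 / ε)) ^ (k * ε) := by
              rw [← Real.rpow_mul (by norm_num)]; congr 1; field_simp
          _ ≤ _ := by gcongr
      refine le_trans ?_ h2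
      rw [Real.rpow_natCast]
      have : k + 1 ≤ 2 ^ k := Nat.lt_two_pow_self
      exact_mod_cast this
  refine ⟨K ^ P0, one_le_pow₀ hK1, ?_⟩
  intro n hn
  rw [Nat.card_divisors hn]
  push_cast
  have e1 : (n : ℝ) ^ ε = ∏ p ∈ n.primeFactors, ((p : ℝ) ^ (n.factorization p)) ^ ε := by
    rw [Real.finsetProd_rpow _ _ (fun i _ => by positivity)]
    congr 1
    conv_lhs => rw [← Nat.prod_factorization_pow_eq_self hn]
    rw [Finsupp.prod]
    push_cast
    rfl
  calc _ ≤ ∏ p ∈ n.primeFactors, ((if p < P0 then K else 1) *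
        ((p : ℝ) ^ (n.factorization p)) ^ ε) := by
        apply Finset.prod_le_prod
        · intro i _; positivity
        · intro p hp
          exact hfac p _ (Nat.prime_of_mem_primeFactors hp)
    _ = (∏ p ∈ n.primeFactors, (if p < P0 then K else 1)) * (n : ℝ) ^ ε := by
        rw [Finset.prod_mul_distrib, ← e1]
    _ ≤ _ := by
        gcongr
        rw [Finset.prod_ite, Finset.prod_const, Finset.prod_const_one, mul_one]
        apply pow_le_pow_right₀ hK1
        calc _ ≤ (Finset.range P0).card := by
              apply Finset.card_le_card
              intro p hp
              rw [Finset.mem_filter] at hp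
              exact Finset.mem_range.mpr hp.2
          _ = _ := Finset.card_range _

lemma abel_id (w : ℕ → ℝ) (z : ℕ → ℂ) (Z k : ℕ) :
    ∑ n ∈ Finset.Ioc Z (Z + k + 1), (w n : ℂ) * z n =
      (w (Z + k + 1) : ℂ) * ∑ n ∈ Finset.Ioc Z (Z + k + 1), z n +
      ∑ j ∈ Finset.range k, ((w (Z + j + 1) - w (Z + j + 2) : ℝ) : ℂ) *
        ∑ n ∈ Finset.Ioc Z (Z + j + 1), z n := by
  induction k with
  | zero => simp
  | succ k ih =>
    have hz : ∑ n ∈ Finset.Ioc Z (Z + k + 1 + 1), z n =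
        ∑ n ∈ Finset.Ioc Z (Z + k + 1), z n + z (Z + k + 1 + 1) :=
      Finset.sum_Ioc_succ_top (by omega) z
    rw [show Z + (k + 1) + 1 = (Z + k + 1) + 1 by ring, hz,
      Finset.sum_Ioc_succ_top (by omega), ih, Finset.sum_range_succ]
    push_cast
    ring

lemma abel_gen (w : ℕ → ℝ) (z : ℕ → ℂ) (Z k : ℕ) (B : ℝ)
    (hB : ∀ y, Z ≤ y → y ≤ Z + k + 1 → ‖∑ n ∈ Finset.Ioc Z y, z n‖ ≤ B) :
    ‖∑ n ∈ Finset.Ioc Z (Z + k + 1), (w n : ℂ) * z n‖ ≤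
      (|w (Z + k + 1)| + ∑ j ∈ Finset.range k, |w (Z + j + 1) - w (Z + j + 2)|) * B := by
  rw [abel_id, add_mul, Finset.sum_mul]
  refine (norm_add_le _ _).trans (add_le_add ?_ ?_)
  · rw [norm_mul, Complex.norm_real, Real.norm_eq_abs]
    gcongr
    exact hB _ (by omega) (by omega)
  · refine norm_sum_le_of_le _ fun j hj => ?_
    rw [norm_mul, Complex.norm_real, Real.norm_eq_abs]
    gcongr
    rw [Finset.mem_range] at hj
    exact hB _ (by omega) (by omega)

lemma abel_anti (w : ℕ → ℝ) (z : ℕ → ℂ) (Z Z' : ℕ) (B : ℝ) (hB0 : 0 ≤ B) (hw0 : ∀ n, Z < n → 0 ≤ w n)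
    (hw : ∀ n, Z < n → w (n + 1) ≤ w n)
    (hB : ∀ y, Z ≤ y → y ≤ Z' → ‖∑ n ∈ Finset.Ioc Z y, z n‖ ≤ B) :
    ‖∑ n ∈ Finset.Ioc Z Z', (w n : ℂ) * z n‖ ≤ w (Z + 1) * B := by
  rcases Nat.lt_or_ge Z Z' with h | h
  · obtain ⟨k, rfl⟩ : ∃ k, Z' = Z + k + 1 := ⟨Z' - Z - 1, by omega⟩
    refine (abel_gen w z Z k B hB).trans ?_
    gcongr
    rw [abs_of_nonneg (hw0 _ (by omega))]
    have : ∑ j ∈ Finset.range k, |w (Z + j + 1) - w (Z + j + 2)| =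
        ∑ j ∈ Finset.range k, (w (Z + j + 1) - w (Z + (j + 1) + 1)) := by
      refine Finset.sum_congr rfl fun j _ => ?_
      rw [abs_of_nonneg (sub_nonneg.mpr (hw _ (by omega)))]
      rw [show Z + (j + 1) + 1 = Z + j + 1 + 1 by ring]
    rw [this, Finset.sum_range_sub' (fun j => w (Z + j + 1))]
    simp
  · rw [Finset.Ioc_eq_empty (by omega)]
    simp only [Finset.sum_empty, norm_zero]
    exact mul_nonneg (hw0 _ (by omega)) hB0

lemma abel_mono (w : ℕ → ℝ) (z : ℕ → ℂ) (Z Z' : ℕ) (B : ℝ) (hB0 : 0 ≤ B) (hw0 : ∀ n, 0 ≤ w n)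
    (hw : ∀ n, Z < n → w n ≤ w (n + 1))
    (hB : ∀ y, Z ≤ y → y ≤ Z' → ‖∑ n ∈ Finset.Ioc Z y, z n‖ ≤ B) :
    ‖∑ n ∈ Finset.Ioc Z Z', (w n : ℂ) * z n‖ ≤ 2 * w Z' * B := by
  rcases Nat.lt_or_ge Z Z' with h | h
  · obtain ⟨k, rfl⟩ : ∃ k, Z' = Z + k + 1 := ⟨Z' - Z - 1, by omega⟩
    refine (abel_gen w z Z k B hB).trans ?_
    gcongr
    rw [abs_of_nonneg (hw0 _)]
    have : ∑ j ∈ Finset.range k, |w (Z + j + 1) - w (Z + j + 2)| =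
        ∑ j ∈ Finset.range k, (w (Z + (j + 1) + 1) - w (Z + j + 1)) := by
      refine Finset.sum_congr rfl fun j _ => ?_
      rw [abs_of_nonpos (sub_nonpos.mpr (hw _ (by omega)))]
      rw [show Z + (j + 1) + 1 = Z + j + 2 by ring]; ring
    rw [this, Finset.sum_range_sub (fun j => w (Z + j + 1))]
    have := hw0 (Z + 0 + 1)
    linarith
  · rw [Finset.Ioc_eq_empty (by omega)]
    simp only [Finset.sum_empty, norm_zero]
    have := hw0 Z'
    positivity

lemma conv_sum (f g : ArithmeticFunction ℝ) (F : ℕ → ℂ) (Z Z' X : ℕ) (hX : Z' ≤ X) :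
    ∑ n ∈ Finset.Ioc Z Z', (((f * g) n : ℝ) : ℂ) * F n =
      ∑ m ∈ Finset.Ioc 0 X, ∑ l ∈ Finset.Ioc 0 X,
        (if Z < m * l ∧ m * l ≤ Z' then (f m : ℂ) * (g l : ℂ) * F (m * l) else 0) := by
  have h1 : ∀ n ∈ Finset.Ioc Z Z', (((f * g) n : ℝ) : ℂ) * F n =
      ∑ p ∈ Finset.Ioc 0 X ×ˢ Finset.Ioc 0 X,
        (if p.1 * p.2 = n then (f p.1 : ℂ) * (g p.2 : ℂ) * F (p.1 * p.2) else 0) := by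
    intro n hn
    rw [Finset.mem_Ioc] at hn
    rw [ArithmeticFunction.mul_apply, ← Finset.sum_filter]
    push_cast
    rw [Finset.sum_mul]
    have : n.divisorsAntidiagonal =
        (Finset.Ioc 0 X ×ˢ Finset.Ioc 0 X).filter (fun p => p.1 * p.2 = n) := by
      ext ⟨a, b⟩
      simp only [Nat.mem_divisorsAntidiagonal, Finset.mem_filter, Finset.mem_product,
        Finset.mem_Ioc]
      constructor
      · rintro ⟨h, h0⟩
        have ha : 0 < a := Nat.pos_of_ne_zero (by rintro rfl; simp at h; omega)
        have hb : 0 < b := Nat.pos_of_ne_zero (by rintro rfl; simp at h; omega)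
        have := Nat.le_mul_of_pos_right a hb
        have := Nat.le_mul_of_pos_left b ha
        exact ⟨⟨⟨ha, by omega⟩, hb, by omega⟩, h⟩
      · rintro ⟨-, h⟩
        exact ⟨h, by omega⟩
    rw [this]
    refine Finset.sum_congr rfl fun p hp => ?_
    rw [(Finset.mem_filter.mp hp).2]
  rw [Finset.sum_congr rfl h1, Finset.sum_comm, Finset.sum_product]
  refine Finset.sum_congr rfl fun m _ => Finset.sum_congr rfl fun l _ => ?_
  simp only
  rw [Finset.sum_ite_eq]
  simp only [Finset.mem_Ioc]


lemma typeI_inner (γ : ℝ) (hγ : 97 / 100 < γ) (hγ1 : γ < 1) :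
    ∃ C : ℝ, 1 ≤ C ∧ ∀ (Z : ℕ), 1 ≤ Z →
    ∀ (α h u : ℝ), 1 ≤ h → h ≤ (Z : ℝ) ^ (1 / 16 : ℝ) → 0 ≤ u → u ≤ 1 →
    ∀ d b : ℕ, 0 < d → d ^ 2 ≤ Z → b * d ≤ 2 * Z →
    ‖∑ m ∈ Finset.Ioc (Z / d) b, Fph γ α h u (m * d)‖ ≤
      C * ((Z : ℝ) ^ (1 - 56 / 1000 : ℝ) * (1 / d)) := by
  obtain ⟨C, hC, H⟩ := typeI_core γ hγ hγ1
  refine ⟨2 * C, by linarith, ?_⟩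
  intro Z hZ α h u h1 h2 hu0 hu1 d b hd hdZ hb
  have hZ1 : (1 : ℝ) ≤ Z := by exact_mod_cast hZ
  have hZ0 : (0 : ℝ) < Z := by linarith
  have hd0 : (0 : ℝ) < d := by exact_mod_cast hd
  have hdm := Nat.div_add_mod Z d
  have hml := Nat.mod_lt Z hd
  generalize Z / d = q at hdm ⊢
  generalize Z % d = r at hdm hml
  have hdle : d ≤ Z := le_trans (by nlinarith) hdZ
  have n1 : Z ≤ (q + 1) * d := by nlinarith
  have n2 : (q + 1) * d ≤ 2 * Z := by nlinarith
  have n0 : Z ≤ 2 * (q * d) := by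
    rcases Nat.lt_or_ge d 2 with h | h
    · have : d = 1 := by omega
      subst this; simp; omega
    · nlinarith
  have n3 : Z ≤ 16 * (q + 1) ^ 2 := by
    have : d ≤ q + 1 := by
      by_contra hcon
      push Not at hcon
      have : (q + 1) * d < d * d := by gcongr
      nlinarith
    nlinarith
  have n4 : b ≤ q + (q + 1) := by
    by_contra hcon
    push Not at hcon
    have : (2 * q + 2) * d ≤ b * d := by gcongr; omega
    nlinarith
  have key := H Z hZ1 α h u d q b (q + 1) h1 h2 hu0 hu1 hd ?_ ?_ n4 ?_ ?_ ?_
  · refine key.trans ?_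
    have e : (((q + 1 : ℕ)) : ℝ) ≤ 2 * Z * (1 / d) := by
      rw [mul_one_div, le_div_iff₀ hd0]
      exact_mod_cast n2
    have e2 : (Z : ℝ) ^ (1 - 56 / 1000 : ℝ) = Z * (Z : ℝ) ^ (-(56 / 1000) : ℝ) := by
      rw [sub_eq_add_neg, Real.rpow_add hZ0, Real.rpow_one]
    rw [e2]
    calc _ ≤ C * ((2 * Z * (1 / d)) * (Z : ℝ) ^ (-(56 / 1000) : ℝ)) := by gcongr
      _ = _ := by ring
  · have : (Z : ℝ) ≤ 2 * (((q : ℕ) : ℝ) * d) := by exact_mod_cast n0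
    linarith
  · exact_mod_cast hb
  · exact_mod_cast n3
  · have : (Z : ℝ) ≤ ((q + 1 : ℕ) : ℝ) * d := by exact_mod_cast n1
    linarith
  · exact_mod_cast n2

lemma typeI_log (γ : ℝ) (hγ : 97 / 100 < γ) (hγ1 : γ < 1) :
    ∃ C : ℝ, 1 ≤ C ∧ ∀ (Z : ℕ), 1 ≤ Z →
    ∀ (α h u : ℝ), 1 ≤ h → h ≤ (Z : ℝ) ^ (1 / 16 : ℝ) → 0 ≤ u → u ≤ 1 →
    ∀ d b : ℕ, 0 < d → d ^ 2 ≤ Z → b * d ≤ 2 * Z →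
    ‖∑ m ∈ Finset.Ioc (Z / d) b, (Real.log m : ℂ) * Fph γ α h u (m * d)‖ ≤
      C * (Real.log (2 * Z) * ((Z : ℝ) ^ (1 - 56 / 1000 : ℝ) * (1 / d))) := by
  obtain ⟨C, hC, H⟩ := typeI_inner γ hγ hγ1
  refine ⟨2 * C, by linarith, ?_⟩
  intro Z hZ α h u h1 h2 hu0 hu1 d b hd hdZ hb
  have hZ1 : (1 : ℝ) ≤ Z := by exact_mod_cast hZ
  have hd0 : (0 : ℝ) < d := by exact_mod_cast hd
  have := abel_mono (fun n => Real.log n) (fun m => Fph γ α h u (m * d)) (Z / d) b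
    (C * ((Z : ℝ) ^ (1 - 56 / 1000 : ℝ) * (1 / d))) (by positivity)
    (fun n => Real.log_natCast_nonneg n) ?_ ?_
  · refine this.trans ?_
    have hb2 : Real.log b ≤ Real.log (2 * Z) := by
      rcases Nat.eq_zero_or_pos b with rfl | hb0
      · simp only [Nat.cast_zero, Real.log_zero]
        exact Real.log_nonneg (by linarith)
      · apply Real.log_le_log (by exact_mod_cast hb0)
        have : b ≤ 2 * Z := le_trans (Nat.le_mul_of_pos_right b hd) hb
        exact_mod_cast this
    calc _ ≤ 2 * Real.log (2 * Z) * (C * ((Z : ℝ) ^ (1 - 56 / 1000 : ℝ) * (1 / d))) := by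
          gcongr
      _ = _ := by ring
  · intro n hn
    apply Real.log_le_log
    · exact_mod_cast (Nat.zero_le _).trans_lt hn
    · push_cast; linarith
  · intro y _ hy
    exact H Z hZ α h u h1 h2 hu0 hu1 d y hd hdZ (le_trans (by gcongr) hb)

lemma sum_dyadic (f : ℕ → ℂ) (R J : ℕ) :
    ∑ m ∈ Finset.Ioc R (2 ^ J * R), f m =
      ∑ j ∈ Finset.range J, ∑ m ∈ Finset.Ioc (2 ^ j * R) (2 * (2 ^ j * R)), f m := by
  induction J with
  | zero => simp
  | succ J ih =>
    rw [Finset.sum_range_succ, ← ih, show 2 ^ (J + 1) * R = 2 * (2 ^ J * R) by ring]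
    rw [← Finset.sum_Ioc_consecutive f (m := R) (n := 2 ^ J * R) (k := 2 * (2 ^ J * R))]
    · exact Nat.le_mul_of_pos_left _ (by positivity)
    · omega

/-- Type II sum with the variable `m` large. -/
lemma typeII_half (γ : ℝ) (hγ : 97 / 100 < γ) (hγ1 : γ < 1) :
    ∃ C : ℝ, 1 ≤ C ∧ ∀ (Z Z' R : ℕ), 1024 ≤ Z → Z' ≤ 2 * Z → 1 ≤ R → Z ≤ 16 * R ^ 2 →
    ∀ (α h u : ℝ), 1 ≤ h → h ≤ (Z : ℝ) ^ (1 / 16 : ℝ) → 0 ≤ u → u ≤ 1 →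
    ∀ (a b : ℕ → ℂ) (A B : ℝ), 0 ≤ A → 0 ≤ B → (∀ m ≤ 2 * Z, ‖a m‖ ≤ A) → (∀ l ≤ 2 * Z, ‖b l‖ ≤ B) →
    (∀ l : ℕ, 0 < l → (l : ℝ) < (Z : ℝ) ^ (1 / 5 : ℝ) → b l = 0) → (∀ m ≤ R, a m = 0) →
    ‖∑ m ∈ Finset.Ioc 0 (2 * Z), ∑ l ∈ Finset.Ioc 0 (2 * Z),
      (if Z < m * l ∧ m * l ≤ Z' then a m * b l * Fph γ α h u (m * l) else 0)‖ ≤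
      C * (A * B * (1 + Real.log Z) * (Z : ℝ) ^ (1 - 28 / 1000 : ℝ)) := by
  obtain ⟨C, hC, H⟩ := bilinear γ hγ hγ1
  refine ⟨4 * C, by linarith, ?_⟩
  intro Z Z' R hZ hZ' hR hRZ α h u h1 h2 hu0 hu1 a b A B hA hB ha hb hb0 ha0
  have hZr : (1024 : ℝ) ≤ Z := by exact_mod_cast hZ
  have hZ0 : (0 : ℝ) < Z := by linarith
  set J := Nat.log 2 (2 * Z) + 1 with hJ
  set g : ℕ → ℂ := fun m => ∑ l ∈ Finset.Ioc 0 (2 * Z),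
      (if Z < m * l ∧ m * l ≤ Z' then a m * b l * Fph γ α h u (m * l) else 0) with hg
  have hJ2 : 2 * Z < 2 ^ J := Nat.lt_pow_succ_log_self (by norm_num) _
  have hbig : ∀ m, 2 * Z < m → g m = 0 := by
    intro m hm
    refine Finset.sum_eq_zero fun l hl => ?_
    rw [Finset.mem_Ioc] at hl
    rw [if_neg]
    rintro ⟨-, h⟩
    have := Nat.le_mul_of_pos_right m hl.1
    omega
  have e1 : ∑ m ∈ Finset.Ioc 0 (2 * Z), g m = ∑ m ∈ Finset.Ioc R (2 ^ J * R), g m := by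
    have hle : 2 * Z ≤ 2 ^ J * R := le_trans hJ2.le (Nat.le_mul_of_pos_right _ hR)
    have hRle : R ≤ 2 ^ J * R := Nat.le_mul_of_pos_left _ (by positivity)
    have f1 : ∑ m ∈ Finset.Ioc 0 (2 * Z), g m = ∑ m ∈ Finset.Ioc 0 (2 ^ J * R), g m := by
      apply Finset.sum_subset
      · exact Finset.Ioc_subset_Ioc_right hle
      · intro m hm hm2
        simp only [Finset.mem_Ioc] at hm hm2
        exact hbig m (by omega)
    rw [f1, ← Finset.sum_Ioc_consecutive g (Nat.zero_le R) hRle, Finset.sum_eq_zero, zero_add]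
    intro m hm
    rw [Finset.mem_Ioc] at hm
    refine Finset.sum_eq_zero fun l _ => ?_
    rw [ha0 m hm.2]; simp
  change ‖∑ m ∈ Finset.Ioc 0 (2 * Z), g m‖ ≤ _
  rw [e1, sum_dyadic]
  have hterm : ∀ j ∈ Finset.range J,
      ‖∑ m ∈ Finset.Ioc (2 ^ j * R) (2 * (2 ^ j * R)), g m‖ ≤
        C * (A * B * (Z : ℝ) ^ (1 - 28 / 1000 : ℝ)) := by
    intro j _
    by_cases hM : ((2 ^ j * R : ℕ) : ℝ) ≤ (Z : ℝ) ^ (9 / 10 : ℝ)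
    · refine H Z Z' (2 ^ j * R) (by omega) hZ' ?_ hM α h u h1 h2 hu0 hu1 a b A B hA hB ha hb
      have : R ≤ 2 ^ j * R := Nat.le_mul_of_pos_left _ (by positivity)
      calc Z ≤ 16 * R ^ 2 := hRZ
        _ ≤ _ := by gcongr
    · push Not at hM
      rw [Finset.sum_eq_zero, norm_zero]
      · positivity
      intro m hm
      rw [Finset.mem_Ioc] at hm
      refine Finset.sum_eq_zero fun l hl => ?_
      rw [Finset.mem_Ioc] at hl
      by_cases hl5 : (l : ℝ) < (Z : ℝ) ^ (1 / 5 : ℝ)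
      · rw [hb0 l hl.1 hl5]; simp
      · rw [if_neg]
        rintro ⟨-, hc⟩
        push Not at hl5
        have c1 : (Z : ℝ) ^ (9 / 10 : ℝ) < m := hM.trans (by exact_mod_cast hm.1)
        have c2 : ((m * l : ℕ) : ℝ) ≤ 2 * Z := by exact_mod_cast hc.trans hZ'
        have c3 : (Z : ℝ) ^ (9 / 10 : ℝ) * (Z : ℝ) ^ (1 / 5 : ℝ) < m * l := by
          have : 0 < (Z : ℝ) ^ (1 / 5 : ℝ) := by positivity
          have : 0 < (Z : ℝ) ^ (9 / 10 : ℝ) := by positivity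
          calc _ < (m : ℝ) * (Z : ℝ) ^ (1 / 5 : ℝ) := by gcongr
            _ ≤ _ := by gcongr
        have c4 : (Z : ℝ) ^ (9 / 10 : ℝ) * (Z : ℝ) ^ (1 / 5 : ℝ) = Z * (Z : ℝ) ^ (1 / 10 : ℝ) := by
          rw [← Real.rpow_add hZ0]
          nth_rewrite 2 [← Real.rpow_one (Z : ℝ)]
          rw [← Real.rpow_add hZ0]; norm_num
        have c5 : (2 : ℝ) ≤ (Z : ℝ) ^ (1 / 10 : ℝ) := by
          calc (2 : ℝ) = (1024 : ℝ) ^ (1 / 10 : ℝ) := by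
                rw [show (1024 : ℝ) = 2 ^ (10 : ℝ) by norm_num, ← Real.rpow_mul (by norm_num)]
                norm_num
            _ ≤ _ := by gcongr
        push_cast at c2
        nlinarith
  refine (norm_sum_le_of_le _ hterm).trans ?_
  rw [Finset.sum_const, Finset.card_range, nsmul_eq_mul]
  have hJb : (J : ℝ) ≤ 4 * (1 + Real.log Z) := by
    have h3 : 2 ^ (Nat.log 2 (2 * Z)) ≤ 2 * Z := Nat.pow_log_le_self 2 (by omega)
    have h4 : (Nat.log 2 (2 * Z) : ℝ) * Real.log 2 ≤ Real.log 2 + Real.log Z := by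
      rw [← Real.log_mul (by norm_num) (by linarith), ← Real.log_pow]
      apply Real.log_le_log (by positivity)
      exact_mod_cast h3
    have h5 := Real.log_two_gt_d9
    have h6 : 0 ≤ Real.log Z := Real.log_natCast_nonneg Z
    rw [hJ]; push_cast
    have h7 : (Nat.log 2 (2 * Z) : ℝ) * 0.5 ≤ (Nat.log 2 (2 * Z) : ℝ) * Real.log 2 := by
      gcongr; linarith
    have h8 := Real.log_two_lt_d9
    linarith
  calc (J : ℝ) * (C * (A * B * (Z : ℝ) ^ (1 - 28 / 1000 : ℝ))) ≤
        (4 * (1 + Real.log Z)) * (C * (A * B * (Z : ℝ) ^ (1 - 28 / 1000 : ℝ))) := by gcongr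
    _ = _ := by ring

open scoped ArithmeticFunction.vonMangoldt ArithmeticFunction.Moebius ArithmeticFunction.zeta

lemma typeI_gen (f g : ArithmeticFunction ℝ) (F : ℕ → ℂ) (Z Z' D : ℕ) (hZ : 1 ≤ Z) (hZ' : Z' ≤ 2 * Z)
    (hD : D ^ 2 ≤ Z) (A K : ℝ) (hA : 0 ≤ A) (hK : 0 ≤ K) (hf0 : ∀ d, D < d → f d = 0)
    (hf : ∀ d, d ≤ D → |f d| ≤ A)
    (hin : ∀ d : ℕ, 0 < d → d ^ 2 ≤ Z → ∀ b : ℕ, b * d ≤ 2 * Z →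
      ‖∑ m ∈ Finset.Ioc (Z / d) b, ((g m : ℝ) : ℂ) * F (m * d)‖ ≤ K * (1 / d)) :
    ‖∑ n ∈ Finset.Ioc Z Z', (((f * g) n : ℝ) : ℂ) * F n‖ ≤ A * K * (1 + Real.log ((2 * Z : ℕ) : ℝ)) := by
  rw [conv_sum f g F Z Z' (2 * Z) hZ']
  have hDZ : D ≤ Z := by nlinarith
  have hterm : ∀ d ∈ Finset.Ioc 0 (2 * Z),
      ‖∑ l ∈ Finset.Ioc 0 (2 * Z), (if Z < d * l ∧ d * l ≤ Z' then ((f d : ℝ) : ℂ) * ((g l : ℝ) : ℂ) * F (d * l) else 0)‖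
      ≤ if d ≤ D then A * (K * (1 / d)) else 0 := by
    intro d hd
    rw [Finset.mem_Ioc] at hd
    split_ifs with hdD
    · have e : ∑ l ∈ Finset.Ioc 0 (2 * Z), (if Z < d * l ∧ d * l ≤ Z' then ((f d : ℝ) : ℂ) * ((g l : ℝ) : ℂ) * F (d * l) else 0)
          = ((f d : ℝ) : ℂ) * ∑ m ∈ Finset.Ioc (Z / d) (Z' / d), ((g m : ℝ) : ℂ) * F (m * d) := by
        rw [← Finset.sum_filter, Finset.mul_sum]
        apply Finset.sum_congr
        · ext l
          simp only [Finset.mem_filter, Finset.mem_Ioc]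
          rw [Nat.div_lt_iff_lt_mul hd.1, Nat.le_div_iff_mul_le hd.1, mul_comm d l]
          constructor
          · tauto
          · rintro ⟨h1, h2⟩
            refine ⟨⟨?_, ?_⟩, h1, h2⟩
            · rcases Nat.eq_zero_or_pos l with h | h
              · subst h; simp at h1
              · exact h
            · have : l ≤ l * d := Nat.le_mul_of_pos_right _ hd.1
              omega
        · intro l _
          rw [mul_comm d l]; ring
      rw [e, norm_mul, Complex.norm_real, Real.norm_eq_abs]
      have h2 : d ^ 2 ≤ Z := le_trans (Nat.pow_le_pow_left hdD 2) hD
      have h3 : Z' / d * d ≤ 2 * Z := (Nat.div_mul_le_self _ _).trans hZ'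
      exact mul_le_mul (hf d hdD) (hin d hd.1 h2 _ h3) (norm_nonneg _) hA
    · rw [Finset.sum_eq_zero]
      · simp
      · intro l _
        rw [hf0 d (by omega)]; simp
  refine (norm_sum_le_of_le _ hterm).trans ?_
  rw [← Finset.sum_filter]
  have : (Finset.Ioc 0 (2 * Z)).filter (fun d => d ≤ D) = Finset.Ioo 0 (D + 1) := by
    ext d; simp only [Finset.mem_filter, Finset.mem_Ioc, Finset.mem_Ioo]; omega
  rw [this, ← Finset.mul_sum, ← Finset.mul_sum, mul_assoc]
  gcongr
  exact sum_inv_le (D + 1) (2 * Z) (by omega)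

/-- truncation of an arithmetic function to `n ≤ y` -/
noncomputable def truncLE (y : ℕ) (f : ArithmeticFunction ℝ) : ArithmeticFunction ℝ :=
  ⟨fun n => if n ≤ y then f n else 0, by simp⟩

noncomputable def truncGT (y : ℕ) (f : ArithmeticFunction ℝ) : ArithmeticFunction ℝ :=
  ⟨fun n => if n ≤ y then 0 else f n, by simp⟩

lemma truncLE_apply (y : ℕ) (f : ArithmeticFunction ℝ) (n : ℕ) :
    truncLE y f n = if n ≤ y then f n else 0 := rfl
lemma truncGT_apply (y : ℕ) (f : ArithmeticFunction ℝ) (n : ℕ) :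
    truncGT y f n = if n ≤ y then 0 else f n := rfl
lemma trunc_add (y : ℕ) (f : ArithmeticFunction ℝ) : truncLE y f + truncGT y f = f := by
  ext n
  rw [ArithmeticFunction.add_apply, truncLE_apply, truncGT_apply]
  split_ifs <;> simp

lemma vaughan_id (y : ℕ) :
    (Λ : ArithmeticFunction ℝ) = truncLE y Λ + truncLE y (μ : ArithmeticFunction ℝ) * ArithmeticFunction.log
      - (truncLE y Λ * truncLE y (μ : ArithmeticFunction ℝ)) * (ζ : ArithmeticFunction ℝ)
      + truncGT y Λ * (truncGT y (μ : ArithmeticFunction ℝ) * (ζ : ArithmeticFunction ℝ)) := by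
  have h1 : (μ : ArithmeticFunction ℝ) * (ζ : ArithmeticFunction ℝ) = 1 := ArithmeticFunction.coe_moebius_mul_coe_zeta
  have h2 : (Λ : ArithmeticFunction ℝ) * (ζ : ArithmeticFunction ℝ) = ArithmeticFunction.log := ArithmeticFunction.vonMangoldt_mul_zeta
  have h3 := trunc_add y (Λ : ArithmeticFunction ℝ)
  have h4 := trunc_add y (μ : ArithmeticFunction ℝ)
  rw [← h2]
  set a := truncLE y (Λ : ArithmeticFunction ℝ)
  set b := truncGT y (Λ : ArithmeticFunction ℝ)
  set c := truncLE y (μ : ArithmeticFunction ℝ)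
  set d := truncGT y (μ : ArithmeticFunction ℝ)
  have h5 : (c + d) * (ζ : ArithmeticFunction ℝ) = 1 := by rw [h4]; exact h1
  calc (Λ : ArithmeticFunction ℝ) = a + b * 1 := by rw [mul_one, h3]
    _ = a + b * ((c + d) * (ζ : ArithmeticFunction ℝ)) := by rw [h5]
    _ = _ := by rw [← h3]; ring

lemma abs_moebius_real (n : ℕ) : |((μ : ArithmeticFunction ℝ) n)| ≤ 1 := by
  rw [ArithmeticFunction.intCoe_apply]
  exact_mod_cast ArithmeticFunction.abs_moebius_le_one (n := n)

lemma truncLE_mu_abs (y n : ℕ) : |truncLE y (μ : ArithmeticFunction ℝ) n| ≤ 1 := by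
  rw [truncLE_apply]; split_ifs
  · exact abs_moebius_real n
  · simp
lemma truncGT_mu_abs (y n : ℕ) : |truncGT y (μ : ArithmeticFunction ℝ) n| ≤ 1 := by
  rw [truncGT_apply]; split_ifs
  · simp
  · exact abs_moebius_real n
lemma truncLE_La_abs (y n : ℕ) : |truncLE y Λ n| ≤ Λ n := by
  have : 0 ≤ Λ n := ArithmeticFunction.vonMangoldt_nonneg
  rw [truncLE_apply]; split_ifs
  · rw [abs_of_nonneg this]
  · simpa using this
lemma truncGT_La_abs (y n : ℕ) : |truncGT y Λ n| ≤ Λ n := by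
  have : 0 ≤ Λ n := ArithmeticFunction.vonMangoldt_nonneg
  rw [truncGT_apply]; split_ifs
  · simpa using this
  · rw [abs_of_nonneg this]

lemma conv_abs (y n : ℕ) : |(truncLE y Λ * truncLE y (μ : ArithmeticFunction ℝ)) n| ≤ Real.log n := by
  rw [ArithmeticFunction.mul_apply]
  refine (Finset.abs_sum_le_sum_abs _ _).trans ?_
  rw [← ArithmeticFunction.vonMangoldt_sum, ← Nat.map_div_right_divisors, Finset.sum_map] 
  refine Finset.sum_le_sum fun i _ => ?_
  rw [abs_mul]
  have h1 := truncLE_La_abs y i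
  have h2 := truncLE_mu_abs y (n / i)
  have : 0 ≤ Λ i := ArithmeticFunction.vonMangoldt_nonneg
  change |truncLE y Λ i| * |truncLE y (μ : ArithmeticFunction ℝ) (n / i)| ≤ Λ i
  nlinarith [abs_nonneg (truncLE y Λ i)]

lemma conv_zero (y n : ℕ) (hn : y ^ 2 < n) : (truncLE y Λ * truncLE y (μ : ArithmeticFunction ℝ)) n = 0 := by
  rw [ArithmeticFunction.mul_apply]
  refine Finset.sum_eq_zero fun x hx => ?_
  rw [Nat.mem_divisorsAntidiagonal] at hx
  rw [truncLE_apply, truncLE_apply]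
  split_ifs with h1 h2
  · exfalso
    have : x.1 * x.2 ≤ y * y := Nat.mul_le_mul h1 h2
    nlinarith [hx.1]
  all_goals simp

lemma muz_abs (y n : ℕ) : |(truncGT y (μ : ArithmeticFunction ℝ) * (ζ : ArithmeticFunction ℝ)) n| ≤ n.divisors.card := by
  rw [ArithmeticFunction.coe_mul_zeta_apply]
  refine (Finset.abs_sum_le_sum_abs _ _).trans ?_
  refine (Finset.sum_le_sum fun i _ => truncGT_mu_abs y i).trans ?_
  simp

lemma muz_zero (y n : ℕ) (hn : n ≤ y) : (truncGT y (μ : ArithmeticFunction ℝ) * (ζ : ArithmeticFunction ℝ)) n = 0 := by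
  rw [ArithmeticFunction.coe_mul_zeta_apply]
  refine Finset.sum_eq_zero fun i hi => ?_
  have := Nat.divisor_le hi
  rw [truncGT_apply, if_pos (by omega)]

open scoped ArithmeticFunction.vonMangoldt ArithmeticFunction.Moebius ArithmeticFunction.zeta

lemma typeII_full (γ : ℝ) (hγ : 97 / 100 < γ) (hγ1 : γ < 1) :
    ∃ C : ℝ, 1 ≤ C ∧ ∀ Z Z' : ℕ, 1024 ≤ Z → Z' ≤ 2 * Z → ∀ α h u : ℝ, 1 ≤ h → h ≤ (Z : ℝ) ^ (1 / 16 : ℝ) →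
      0 ≤ u → u ≤ 1 → ∀ f g : ArithmeticFunction ℝ, ∀ A B : ℝ, 0 ≤ A → 0 ≤ B →
      (∀ m ≤ 2 * Z, |f m| ≤ A) → (∀ m ≤ 2 * Z, |g m| ≤ B) →
      (∀ l : ℕ, (l : ℝ) < (Z : ℝ) ^ (1 / 5 : ℝ) → f l = 0) →
      (∀ l : ℕ, (l : ℝ) < (Z : ℝ) ^ (1 / 5 : ℝ) → g l = 0) →
      ‖∑ n ∈ Finset.Ioc Z Z', (((f * g) n : ℝ) : ℂ) * Fph γ α h u n‖ ≤
        C * (A * B * (1 + Real.log Z) * (Z : ℝ) ^ (1 - 28 / 1000 : ℝ)) := by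
  obtain ⟨C, hC, H⟩ := typeII_half γ hγ hγ1
  refine ⟨2 * C, by linarith, ?_⟩
  intro Z Z' hZ hZ' α h u h1 h2 hu0 hu1 f g A B hA hB hf hg hf0 hg0
  have hR1 : 1 ≤ Nat.sqrt Z := by rw [Nat.le_sqrt]; omega
  have hR2 : Z < (Nat.sqrt Z + 1) * (Nat.sqrt Z + 1) := Nat.lt_succ_sqrt Z
  have hR3 : Z ≤ 16 * Nat.sqrt Z ^ 2 := by nlinarith
  have hRR : Nat.sqrt Z * Nat.sqrt Z ≤ Z := Nat.sqrt_le Z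
  generalize Nat.sqrt Z = R at hRR hR1 hR2 hR3
  rw [conv_sum f g _ Z Z' (2 * Z) hZ']
  have X1 := H Z Z' R hZ hZ' hR1 hR3 α h u h1 h2 hu0 hu1
    (fun m => if R < m then ((f m : ℝ) : ℂ) else 0) (fun l => ((g l : ℝ) : ℂ)) A B hA hB
    (by intro m hm
        try dsimp only
        split_ifs
        · rw [Complex.norm_real]; exact hf m hm
        · simpa using hA)
    (by intro m hm; rw [Complex.norm_real]; exact hg m hm)
    (by intro l _ hl
        try dsimp only
        rw [hg0 l hl]; simp)
    (by intro m hm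
        try dsimp only
        rw [if_neg (by omega)])
  have X2 := H Z Z' R hZ hZ' hR1 hR3 α h u h1 h2 hu0 hu1
    (fun m => if R < m then ((g m : ℝ) : ℂ) else 0) (fun l => if R < l then 0 else ((f l : ℝ) : ℂ)) B A hB hA
    (by intro m hm
        try dsimp only
        split_ifs
        · rw [Complex.norm_real]; exact hg m hm
        · simpa using hB)
    (by intro m hm
        try dsimp only
        split_ifs
        · simpa using hA
        · rw [Complex.norm_real]; exact hf m hm)
    (by intro l _ hl
        try dsimp only
        rw [hf0 l hl]; simp)
    (by intro m hm
        try dsimp only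
        rw [if_neg (by omega)])
  rw [Finset.sum_comm] at X2
  have e : ∀ (F : ℕ → ℂ), ∑ m ∈ Finset.Ioc 0 (2 * Z), ∑ l ∈ Finset.Ioc 0 (2 * Z),
      (if Z < m * l ∧ m * l ≤ Z' then ((f m : ℝ) : ℂ) * ((g l : ℝ) : ℂ) * F (m * l) else 0) =
      (∑ m ∈ Finset.Ioc 0 (2 * Z), ∑ l ∈ Finset.Ioc 0 (2 * Z),
      (if Z < m * l ∧ m * l ≤ Z' then (if R < m then ((f m : ℝ) : ℂ) else 0) * ((g l : ℝ) : ℂ) * F (m * l) else 0)) +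
      ∑ m ∈ Finset.Ioc 0 (2 * Z), ∑ l ∈ Finset.Ioc 0 (2 * Z),
      (if Z < l * m ∧ l * m ≤ Z' then (if R < l then ((g l : ℝ) : ℂ) else 0) * (if R < m then 0 else ((f m : ℝ) : ℂ)) * F (l * m) else 0) := by
    intro F
    rw [← Finset.sum_add_distrib]
    refine Finset.sum_congr rfl fun m _ => ?_
    rw [← Finset.sum_add_distrib]
    refine Finset.sum_congr rfl fun l _ => ?_
    rw [mul_comm l m]
    by_cases hc : Z < m * l ∧ m * l ≤ Z'
    · rw [if_pos hc, if_pos hc, if_pos hc]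
      by_cases hm : R < m
      · simp [hm]
      · have hl : R < l := by
          by_contra hl
          have : m * l ≤ R * R := Nat.mul_le_mul (by omega) (by omega)
          omega
        simp only [hm, hl, if_true, if_false]
        ring
    · rw [if_neg hc, if_neg hc, if_neg hc, add_zero]
  rw [e]
  refine (norm_add_le _ _).trans ((add_le_add X1 X2).trans (le_of_eq ?_))
  ring

lemma vaughan (γ : ℝ) (hγ : 97 / 100 < γ) (hγ1 : γ < 1) :
    ∃ C : ℝ, 1 ≤ C ∧ ∀ Z Z' : ℕ, 1 ≤ Z → Z' ≤ 2 * Z → ∀ α h u : ℝ, 1 ≤ h → h ≤ (Z : ℝ) ^ (1 / 16 : ℝ) →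
      0 ≤ u → u ≤ 1 → ‖∑ n ∈ Finset.Ioc Z Z', ((Λ n : ℝ) : ℂ) * Fph γ α h u n‖ ≤ C * (Z : ℝ) ^ (1 - 275 / 10000 : ℝ) := by
  obtain ⟨C1, hC1, H1⟩ := typeI_log γ hγ hγ1
  obtain ⟨C2, hC2, H2⟩ := typeI_inner γ hγ hγ1
  obtain ⟨C3, hC3, H3⟩ := divisor_bound (1 / 10000) (by norm_num)
  obtain ⟨C4, hC4, H4⟩ := typeII_full γ hγ hγ1
  refine ⟨10002 ^ 3 * (C1 + C2 + C4 * C3) + 2048 * 2048, by nlinarith, ?_⟩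
  intro Z Z' hZ hZ' α h u h1 h2 hu0 hu1
  have hZr : (1 : ℝ) ≤ Z := by exact_mod_cast hZ
  have hZ0 : (0 : ℝ) < Z := by linarith
  have hlogmono : ∀ n : ℕ, n ≤ 2 * Z → Real.log n ≤ Real.log ((2 * Z : ℕ) : ℝ) := by
    intro n hn
    rcases Nat.eq_zero_or_pos n with h | h
    · subst h; simp only [Nat.cast_zero, Real.log_zero]; exact Real.log_natCast_nonneg _
    · apply Real.log_le_log (by exact_mod_cast h) (by exact_mod_cast hn)
  by_cases hbig : Z < 1024
  · have hb : ∀ n ∈ Finset.Ioc Z Z', ‖((Λ n : ℝ) : ℂ) * Fph γ α h u n‖ ≤ 2048 := by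
      intro n hn
      rw [Finset.mem_Ioc] at hn
      rw [norm_mul, Fph_norm, mul_one, Complex.norm_real, Real.norm_eq_abs, abs_of_nonneg ArithmeticFunction.vonMangoldt_nonneg]
      refine ArithmeticFunction.vonMangoldt_le_log.trans ?_
      have hn1 : (n : ℝ) ≤ 2048 := by exact_mod_cast (by omega : n ≤ 2048)
      exact (Real.log_le_self (by positivity)).trans hn1
    refine (norm_sum_le_of_le _ hb).trans ?_
    rw [Finset.sum_const, nsmul_eq_mul, Nat.card_Ioc]
    have hc : ((Z' - Z : ℕ) : ℝ) ≤ 2048 := by exact_mod_cast (by omega : Z' - Z ≤ 2048)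
    have hp : (1 : ℝ) ≤ (Z : ℝ) ^ (1 - 275 / 10000 : ℝ) := Real.one_le_rpow hZr (by norm_num)
    have : 0 ≤ 10002 ^ 3 * (C1 + C2 + C4 * C3) := by positivity
    calc ((Z' - Z : ℕ) : ℝ) * 2048 ≤ 2048 * 2048 := by gcongr
      _ ≤ (10002 ^ 3 * (C1 + C2 + C4 * C3) + 2048 * 2048) * 1 := by linarith
      _ ≤ _ := by gcongr
  push Not at hbig
  set y : ℕ := ⌊(Z : ℝ) ^ (1 / 5 : ℝ)⌋₊ with hy
  have hyle : (y : ℝ) ≤ (Z : ℝ) ^ (1 / 5 : ℝ) := Nat.floor_le (by positivity)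
  have hlt : ∀ l : ℕ, (l : ℝ) < (Z : ℝ) ^ (1 / 5 : ℝ) → l ≤ y := fun l hl => Nat.le_floor hl.le
  have hy4 : (y ^ 2) ^ 2 ≤ Z := by
    have : (((y ^ 2) ^ 2 : ℕ) : ℝ) ≤ Z := by
      push_cast
      calc (((y : ℝ) ^ 2) ^ 2) ≤ (((Z : ℝ) ^ (1 / 5 : ℝ)) ^ 2) ^ 2 := by gcongr
        _ = (Z : ℝ) ^ (4 / 5 : ℝ) := by
          rw [← pow_mul, ← Real.rpow_natCast, ← Real.rpow_mul hZ0.le]; norm_num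
        _ ≤ (Z : ℝ) ^ (1 : ℝ) := Real.rpow_le_rpow_of_exponent_le hZr (by norm_num)
        _ = Z := Real.rpow_one _
    exact_mod_cast this
  have hy2 : y ^ 2 ≤ Z := by nlinarith
  have hy1 : y ≤ Z := by nlinarith
  set E : ℝ := (Z : ℝ) ^ (1 / 10000 : ℝ) with hE
  have hE1 : 1 ≤ E := Real.one_le_rpow hZr (by norm_num)
  set M : ℝ := 10002 * E with hM
  have hL : 1 + Real.log ((2 * Z : ℕ) : ℝ) ≤ M := by
    push_cast
    rw [Real.log_mul (by norm_num) hZ0.ne']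
    have := Real.log_le_rpow_div hZ0.le (by norm_num : (0 : ℝ) < 1 / 10000)
    have h8 := Real.log_two_lt_d9
    rw [← hE] at this
    rw [hM]; linarith
  have hL0 : 0 ≤ Real.log ((2 * Z : ℕ) : ℝ) := Real.log_natCast_nonneg _
  have hM1 : 1 ≤ M := by linarith
  have hLZ : 1 + Real.log Z ≤ M := by
    have := hlogmono Z (by omega); linarith
  have hLZ0 : 0 ≤ Real.log Z := Real.log_natCast_nonneg _
  -- split
  have hsplit : ∑ n ∈ Finset.Ioc Z Z', ((Λ n : ℝ) : ℂ) * Fph γ α h u n =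
      ∑ n ∈ Finset.Ioc Z Z', (((truncLE y (μ : ArithmeticFunction ℝ) * ArithmeticFunction.log) n : ℝ) : ℂ) * Fph γ α h u n
      - ∑ n ∈ Finset.Ioc Z Z', ((((truncLE y Λ * truncLE y (μ : ArithmeticFunction ℝ)) * (ζ : ArithmeticFunction ℝ)) n : ℝ) : ℂ) * Fph γ α h u n
      + ∑ n ∈ Finset.Ioc Z Z', (((truncGT y Λ * (truncGT y (μ : ArithmeticFunction ℝ) * (ζ : ArithmeticFunction ℝ))) n : ℝ) : ℂ) * Fph γ α h u n := by
    rw [← Finset.sum_sub_distrib, ← Finset.sum_add_distrib]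
    refine Finset.sum_congr rfl fun n hn => ?_
    rw [Finset.mem_Ioc] at hn
    have h3 := congrArg (fun f : ArithmeticFunction ℝ => f n) (vaughan_id y)
    simp only [ArithmeticFunction.add_apply, sub_eq_add_neg, ArithmeticFunction.neg_apply] at h3
    have h4 : truncLE y Λ n = 0 := by rw [truncLE_apply, if_neg (by omega)]
    rw [h4, zero_add] at h3
    rw [h3]; push_cast; ring
  set W : ℝ := (Z : ℝ) ^ (1 - 28 / 1000 : ℝ) with hW
  have hWle : (Z : ℝ) ^ (1 - 56 / 1000 : ℝ) ≤ W := Real.rpow_le_rpow_of_exponent_le hZr (by norm_num)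
  have hW0 : 0 < W := by positivity
  have hV0 : 0 < (Z : ℝ) ^ (1 - 56 / 1000 : ℝ) := by positivity
  have B1 : ‖∑ n ∈ Finset.Ioc Z Z', (((truncLE y (μ : ArithmeticFunction ℝ) * ArithmeticFunction.log) n : ℝ) : ℂ) * Fph γ α h u n‖ ≤ C1 * (M ^ 3 * W) := by
    refine (typeI_gen _ _ _ Z Z' y hZ hZ' hy2 1 (C1 * (Real.log (2 * Z) * (Z : ℝ) ^ (1 - 56 / 1000 : ℝ))) zero_le_one ?_ ?_ ?_ ?_).trans ?_
    · push_cast at hL0; positivity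
    · intro d hd; rw [truncLE_apply, if_neg (by omega)]
    · intro d _; exact truncLE_mu_abs y d
    · intro d hd hd2 b hb
      refine le_trans (le_of_eq ?_) ((H1 Z hZ α h u h1 h2 hu0 hu1 d b hd hd2 hb).trans (le_of_eq ?_))
      · congr 1
      · ring
    · push_cast at hL hL0 ⊢
      rw [one_mul, mul_assoc]
      have : Real.log (2 * Z) * (Z : ℝ) ^ (1 - 56 / 1000 : ℝ) * (1 + Real.log (2 * Z)) ≤ M * W * M := by
        gcongr; linarith
      have h5 : M * W * M ≤ M ^ 3 * W := by
        have : M ^ 2 * W * 1 ≤ M ^ 2 * W * M := by gcongr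
        nlinarith
      have := this.trans h5
      gcongr
  have B2 : ‖∑ n ∈ Finset.Ioc Z Z', ((((truncLE y Λ * truncLE y (μ : ArithmeticFunction ℝ)) * (ζ : ArithmeticFunction ℝ)) n : ℝ) : ℂ) * Fph γ α h u n‖ ≤ C2 * (M ^ 3 * W) := by
    refine (typeI_gen _ _ _ Z Z' (y ^ 2) hZ hZ' hy4 (Real.log ((2 * Z : ℕ) : ℝ)) (C2 * (Z : ℝ) ^ (1 - 56 / 1000 : ℝ)) hL0 ?_ ?_ ?_ ?_).trans ?_
    · positivity
    · intro d hd; exact conv_zero y d hd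
    · intro d hd; exact (conv_abs y d).trans (hlogmono d (by omega))
    · intro d hd hd2 b hb
      refine le_trans (le_of_eq ?_) ((H2 Z hZ α h u h1 h2 hu0 hu1 d b hd hd2 hb).trans (le_of_eq ?_))
      · congr 1
        refine Finset.sum_congr rfl fun m hm => ?_
        rw [Finset.mem_Ioc] at hm
        rw [ArithmeticFunction.natCoe_apply, ArithmeticFunction.zeta_apply_ne (Nat.ne_of_gt (lt_of_le_of_lt (Nat.zero_le _) hm.1))]
        simp
      · ring
    · have : Real.log ((2 * Z : ℕ) : ℝ) * (Z : ℝ) ^ (1 - 56 / 1000 : ℝ) * (1 + Real.log ((2 * Z : ℕ) : ℝ)) ≤ M * W * M := by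
        gcongr; linarith
      have h5 : M * W * M ≤ M ^ 3 * W := by
        have : M ^ 2 * W * 1 ≤ M ^ 2 * W * M := by gcongr
        nlinarith
      have := this.trans h5
      calc _ = C2 * (Real.log ((2 * Z : ℕ) : ℝ) * (Z : ℝ) ^ (1 - 56 / 1000 : ℝ) * (1 + Real.log ((2 * Z : ℕ) : ℝ))) := by ring
        _ ≤ _ := by gcongr
  have B3 : ‖∑ n ∈ Finset.Ioc Z Z', (((truncGT y Λ * (truncGT y (μ : ArithmeticFunction ℝ) * (ζ : ArithmeticFunction ℝ))) n : ℝ) : ℂ) * Fph γ α h u n‖ ≤ C4 * C3 * (M ^ 3 * W) := by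
    refine (H4 Z Z' hbig hZ' α h u h1 h2 hu0 hu1 _ _ M (C3 * M) (by linarith) (by positivity) ?_ ?_ ?_ ?_).trans ?_
    · intro m hm
      refine (truncGT_La_abs y m).trans (ArithmeticFunction.vonMangoldt_le_log.trans ?_)
      have := hlogmono m hm; linarith
    · intro m hm
      refine (muz_abs y m).trans ?_
      rcases Nat.eq_zero_or_pos m with h | h
      · subst h; simp only [Nat.divisors_zero, Finset.card_empty, Nat.cast_zero]; positivity
      · refine (H3 m (by omega)).trans ?_
        have : (m : ℝ) ^ (1 / 10000 : ℝ) ≤ M := by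
          have hm' : (m : ℝ) ≤ 2 * Z := by exact_mod_cast hm
          calc (m : ℝ) ^ (1 / 10000 : ℝ) ≤ (2 * (Z : ℝ)) ^ (1 / 10000 : ℝ) := by gcongr
            _ = 2 ^ (1 / 10000 : ℝ) * E := by rw [Real.mul_rpow (by norm_num) hZ0.le]
            _ ≤ 2 ^ (1 : ℝ) * E := by gcongr <;> norm_num
            _ ≤ M := by rw [hM, Real.rpow_one]; gcongr; norm_num
        gcongr
    · intro l hl; rw [truncGT_apply, if_pos (hlt l hl)]
    · intro l hl; exact muz_zero y l (hlt l hl)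
    · calc _ ≤ C4 * (M * (C3 * M) * M * W) := by gcongr
        _ = _ := by ring
  rw [hsplit]
  refine (norm_add_le _ _).trans ((add_le_add (norm_sub_le _ _) le_rfl).trans ((add_le_add (add_le_add B1 B2) B3).trans ?_))
  have hfin : E ^ 3 * W ≤ (Z : ℝ) ^ (1 - 275 / 10000 : ℝ) := by
    rw [hE, hW, ← Real.rpow_natCast, ← Real.rpow_mul hZ0.le, ← Real.rpow_add hZ0]
    exact Real.rpow_le_rpow_of_exponent_le hZr (by norm_num)
  calc C1 * (M ^ 3 * W) + C2 * (M ^ 3 * W) + C4 * C3 * (M ^ 3 * W) = (10002 ^ 3 * (C1 + C2 + C4 * C3)) * (E ^ 3 * W) := by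
        rw [hM]; ring
    _ ≤ (10002 ^ 3 * (C1 + C2 + C4 * C3) + 2048 * 2048) * (E ^ 3 * W) := by
        have : 0 ≤ E ^ 3 * W := by positivity
        gcongr; linarith
    _ ≤ _ := by gcongr

open scoped ArithmeticFunction.vonMangoldt

lemma Fph_neg (γ α h u : ℝ) (n : ℕ) : Fph γ α (-h) u n = (starRingEnd ℂ) (Fph γ (-α) h u n) := by
  unfold Fph
  rw [eexp_conj]; congr 1; ring

lemma not_prime_sum (Z Z' : ℕ) (hZ : 1 ≤ Z) (hZ' : Z' ≤ 2 * Z) :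
    ∑ n ∈ (Finset.Ioc Z Z').filter (fun n => ¬ n.Prime), Λ n ≤ 16 * (Z : ℝ) ^ (1 - 275 / 10000 : ℝ) := by
  have hZr : (1 : ℝ) ≤ Z := by exact_mod_cast hZ
  have h1 : ∑ n ∈ (Finset.Ioc Z Z').filter (fun n => ¬ n.Prime), Λ n ≤
      ∑ n ∈ (Finset.Ioc 0 ⌊((2 * Z : ℕ) : ℝ)⌋₊).filter (fun n => ¬ n.Prime), Λ n := by
    apply Finset.sum_le_sum_of_subset_of_nonneg
    · rw [Nat.floor_natCast]
      intro n; simp only [Finset.mem_filter, Finset.mem_Ioc]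
      rintro ⟨⟨_, _⟩, h⟩; exact ⟨⟨by omega, by omega⟩, h⟩
    · intro i _ _; exact ArithmeticFunction.vonMangoldt_nonneg
  refine h1.trans ?_
  rw [← Chebyshev.psi_sub_theta_eq_sum_not_prime]
  have h2 : (1 : ℝ) ≤ ((2 * Z : ℕ) : ℝ) := by exact_mod_cast (by omega : 1 ≤ 2 * Z)
  refine (Chebyshev.psi_sub_theta_le h2).trans ?_
  have h3 := Real.log_le_rpow_div (by linarith : (0 : ℝ) ≤ ((2 * Z : ℕ) : ℝ)) (by norm_num : (0 : ℝ) < 1 / 4)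
  set x : ℝ := ((2 * Z : ℕ) : ℝ) with hx
  have hx0 : 0 < x := by linarith
  calc 2 * √x * Real.log x ≤ 2 * √x * (x ^ (1 / 4 : ℝ) / (1 / 4)) := by gcongr
    _ = 8 * x ^ (3 / 4 : ℝ) := by
      rw [Real.sqrt_eq_rpow, show (3 / 4 : ℝ) = 1 / 2 + 1 / 4 by norm_num, Real.rpow_add hx0]; ring
    _ = 8 * (2 ^ (3 / 4 : ℝ) * (Z : ℝ) ^ (3 / 4 : ℝ)) := by
      rw [hx]; push_cast; rw [Real.mul_rpow (by norm_num) (by linarith)]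
    _ ≤ 8 * (2 ^ (1 : ℝ) * (Z : ℝ) ^ (1 - 275 / 10000 : ℝ)) := by
      have := Real.rpow_le_rpow_of_exponent_le hZr (by norm_num : (3 / 4 : ℝ) ≤ 1 - 275 / 10000)
      have h5 := Real.rpow_le_rpow_of_exponent_le (by norm_num : (1 : ℝ) ≤ 2) (by norm_num : (3 / 4 : ℝ) ≤ 1)
      gcongr
    _ = _ := by rw [Real.rpow_one]; ring

lemma primes_bound_pos (γ : ℝ) (hγ : 97 / 100 < γ) (hγ1 : γ < 1) :
    ∃ C : ℝ, 1 ≤ C ∧ ∀ Z Z' : ℕ, 1 ≤ Z → Z' ≤ 2 * Z → ∀ α h u : ℝ, 1 ≤ h → h ≤ (Z : ℝ) ^ (1 / 16 : ℝ) →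
      0 ≤ u → u ≤ 1 → ‖∑ n ∈ Finset.Ioc Z Z', (((n : ℝ) ^ (1 - γ) : ℝ) : ℂ) * ((if n.Prime then 1 else 0) * Fph γ α h u n)‖
        ≤ C * ((Z : ℝ) ^ (1 - γ) * (Z : ℝ) ^ (1 - 275 / 10000 : ℝ)) := by
  obtain ⟨C, hC, H⟩ := vaughan γ hγ hγ1
  refine ⟨8 * (C + 16), by linarith, ?_⟩
  intro Z Z' hZ hZ' α h u h1 h2 hu0 hu1
  have hZr : (1 : ℝ) ≤ Z := by exact_mod_cast hZ
  set V : ℝ := (Z : ℝ) ^ (1 - 275 / 10000 : ℝ) with hV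
  have hV0 : 0 < V := by positivity
  have hL : ∀ n : ℕ, Z < n → 0 < Real.log n := fun n hn => Real.log_pos (by exact_mod_cast (by omega : 1 < n))
  have s1 : ∀ y, Z ≤ y → y ≤ Z' → ‖∑ n ∈ Finset.Ioc Z y, (Real.log n : ℂ) * ((if n.Prime then 1 else 0) * Fph γ α h u n)‖ ≤ (C + 16) * V := by
    intro y hy1 hy2
    have e : ∑ n ∈ Finset.Ioc Z y, (Real.log n : ℂ) * ((if n.Prime then 1 else 0) * Fph γ α h u n) =
        ∑ n ∈ Finset.Ioc Z y, ((Λ n : ℝ) : ℂ) * Fph γ α h u n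
        - ∑ n ∈ (Finset.Ioc Z y).filter (fun n => ¬ n.Prime), ((Λ n : ℝ) : ℂ) * Fph γ α h u n := by
      rw [Finset.sum_filter, ← Finset.sum_sub_distrib]
      refine Finset.sum_congr rfl fun n _ => ?_
      by_cases hp : n.Prime
      · simp [hp, ArithmeticFunction.vonMangoldt_apply_prime hp]
      · simp [hp]
    rw [e]
    have b1 := H Z y hZ (by omega) α h u h1 h2 hu0 hu1
    have b2 : ‖∑ n ∈ (Finset.Ioc Z y).filter (fun n => ¬ n.Prime), ((Λ n : ℝ) : ℂ) * Fph γ α h u n‖ ≤ 16 * V := by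
      refine (norm_sum_le _ _).trans (le_trans (le_of_eq ?_) (not_prime_sum Z y hZ (by omega)))
      refine Finset.sum_congr rfl fun n _ => ?_
      rw [norm_mul, Fph_norm, mul_one, Complex.norm_real, Real.norm_eq_abs, abs_of_nonneg ArithmeticFunction.vonMangoldt_nonneg]
    refine (norm_sub_le _ _).trans ((add_le_add b1 b2).trans (le_of_eq ?_))
    ring
  have s2 : ∀ y, Z ≤ y → y ≤ Z' → ‖∑ n ∈ Finset.Ioc Z y, ((if n.Prime then 1 else 0) * Fph γ α h u n)‖ ≤ 2 * ((C + 16) * V) := by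
    intro y hy1 hy2
    have := abel_anti (fun n => 1 / Real.log n) (fun n => (Real.log n : ℂ) * ((if n.Prime then 1 else 0) * Fph γ α h u n))
      Z y ((C + 16) * V) (by positivity) (fun n hn => by have := hL n hn; positivity)
      (fun n hn => by
        have h3 := hL n hn
        have h4 : Real.log n ≤ Real.log ((n + 1 : ℕ) : ℝ) :=
          Real.log_le_log (by exact_mod_cast (by omega : 0 < n)) (by push_cast; linarith)
        exact one_div_le_one_div_of_le h3 h4)
      (fun y' h3 h4 => s1 y' h3 (by omega))
    have e : ∑ n ∈ Finset.Ioc Z y, ((if n.Prime then 1 else 0) * Fph γ α h u n) =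
        ∑ n ∈ Finset.Ioc Z y, ((1 / Real.log n : ℝ) : ℂ) * ((Real.log n : ℂ) * ((if n.Prime then 1 else 0) * Fph γ α h u n)) := by
      refine Finset.sum_congr rfl fun n hn => ?_
      rw [Finset.mem_Ioc] at hn
      have h3 : (Real.log n : ℂ) ≠ 0 := by exact_mod_cast (hL n hn.1).ne'
      rw [← mul_assoc (_ : ℂ) (Real.log n : ℂ)]
      rw [Complex.ofReal_div, Complex.ofReal_one, one_div_mul_cancel h3, one_mul]
    rw [e]
    refine this.trans ?_
    have h4 : Real.log 2 ≤ Real.log ((Z + 1 : ℕ) : ℝ) :=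
      Real.log_le_log (by norm_num) (by push_cast; linarith)
    have h5 := Real.log_two_gt_d9
    have h6 : 1 / Real.log ((Z + 1 : ℕ) : ℝ) ≤ 2 := by
      rw [div_le_iff₀ (by linarith)]; linarith
    gcongr
  have s3 := abel_mono (fun n => (n : ℝ) ^ (1 - γ)) (fun n => ((if n.Prime then 1 else 0) * Fph γ α h u n))
      Z Z' (2 * ((C + 16) * V)) (by positivity) (fun n => by positivity)
      (fun n hn => by
        apply Real.rpow_le_rpow (by positivity) (by push_cast; linarith) (by linarith)) s2
  refine s3.trans ?_
  have h7 : (Z' : ℝ) ^ (1 - γ) ≤ 2 * (Z : ℝ) ^ (1 - γ) := by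
    have hz : (Z' : ℝ) ≤ 2 * Z := by exact_mod_cast hZ'
    calc (Z' : ℝ) ^ (1 - γ) ≤ (2 * (Z : ℝ)) ^ (1 - γ) := Real.rpow_le_rpow (by positivity) hz (by linarith)
      _ = 2 ^ (1 - γ) * (Z : ℝ) ^ (1 - γ) := by rw [Real.mul_rpow (by norm_num) (by positivity)]
      _ ≤ 2 ^ (1 : ℝ) * (Z : ℝ) ^ (1 - γ) := by
        have := Real.rpow_le_rpow_of_exponent_le (by norm_num : (1 : ℝ) ≤ 2) (by linarith : (1 - γ : ℝ) ≤ 1)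
        gcongr
      _ = _ := by rw [Real.rpow_one]
  calc 2 * (Z' : ℝ) ^ (1 - γ) * (2 * ((C + 16) * V)) ≤ 2 * (2 * (Z : ℝ) ^ (1 - γ)) * (2 * ((C + 16) * V)) := by gcongr
    _ = _ := by ring

lemma primes_bound (γ : ℝ) (hγ : 97 / 100 < γ) (hγ1 : γ < 1) :
    ∃ C : ℝ, 1 ≤ C ∧ ∀ Z Z' : ℕ, 1 ≤ Z → Z' ≤ 2 * Z → ∀ α h u : ℝ, 1 ≤ |h| → |h| ≤ (Z : ℝ) ^ (1 / 16 : ℝ) →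
      0 ≤ u → u ≤ 1 → ‖∑ n ∈ Finset.Ioc Z Z', (((n : ℝ) ^ (1 - γ) : ℝ) : ℂ) * ((if n.Prime then 1 else 0) * Fph γ α h u n)‖
        ≤ C * ((Z : ℝ) ^ (1 - γ) * (Z : ℝ) ^ (1 - 275 / 10000 : ℝ)) := by
  obtain ⟨C, hC, H⟩ := primes_bound_pos γ hγ hγ1
  refine ⟨C, hC, ?_⟩
  intro Z Z' hZ hZ' α h u h1 h2 hu0 hu1
  rcases le_total 0 h with hh | hh
  · rw [abs_of_nonneg hh] at h1 h2
    exact H Z Z' hZ hZ' α h u h1 h2 hu0 hu1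
  · rw [abs_of_nonpos hh] at h1 h2
    have := H Z Z' hZ hZ' (-α) (-h) u h1 h2 hu0 hu1
    refine le_trans (le_of_eq ?_) this
    rw [← Complex.norm_conj, map_sum]
    congr 1
    refine Finset.sum_congr rfl fun n _ => ?_
    have e : Fph γ (-α) (-h) u n = (starRingEnd ℂ) (Fph γ α h u n) := by
      have := Fph_neg γ (-α) h u n
      rwa [neg_neg] at this
    rw [e, map_mul, map_mul, Complex.conj_ofReal]
    congr 2
    split_ifs <;> simp

/-- the same without primes, `α = 0` -/
lemma all_bound (γ : ℝ) (hγ : 97 / 100 < γ) (hγ1 : γ < 1) :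
    ∃ C : ℝ, 1 ≤ C ∧ ∀ Z Z' : ℕ, 1 ≤ Z → Z' ≤ 2 * Z → ∀ h u : ℝ, 1 ≤ |h| → |h| ≤ (Z : ℝ) ^ (1 / 16 : ℝ) →
      0 ≤ u → u ≤ 1 → ‖∑ n ∈ Finset.Ioc Z Z', Fph γ 0 h u n‖ ≤ C * (Z : ℝ) ^ (1 - 275 / 10000 : ℝ) := by
  obtain ⟨C, hC, H⟩ := typeI_inner γ hγ hγ1
  refine ⟨C, hC, ?_⟩
  intro Z Z' hZ hZ' h u h1 h2 hu0 hu1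
  have hZr : (1 : ℝ) ≤ Z := by exact_mod_cast hZ
  have key : ∀ h : ℝ, 1 ≤ h → h ≤ (Z : ℝ) ^ (1 / 16 : ℝ) →
      ‖∑ n ∈ Finset.Ioc Z Z', Fph γ 0 h u n‖ ≤ C * (Z : ℝ) ^ (1 - 275 / 10000 : ℝ) := by
    intro h h1 h2
    have := H Z hZ 0 h u h1 h2 hu0 hu1 1 Z' one_pos (by simpa using hZ) (by omega)
    simp only [Nat.div_one, mul_one, Nat.cast_one, div_one] at this
    refine this.trans ?_
    have := Real.rpow_le_rpow_of_exponent_le hZr (by norm_num : (1 - 56 / 1000 : ℝ) ≤ 1 - 275 / 10000)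
    gcongr
  rcases le_total 0 h with hh | hh
  · rw [abs_of_nonneg hh] at h1 h2
    exact key h h1 h2
  · rw [abs_of_nonpos hh] at h1 h2
    refine le_trans (le_of_eq ?_) (key (-h) h1 h2)
    rw [← Complex.norm_conj, map_sum]
    congr 1
    refine Finset.sum_congr rfl fun n _ => ?_
    have := Fph_neg γ 0 h u n
    rw [neg_zero] at this
    exact this.symm


noncomputable def saw (x : ℝ) : ℝ := Int.fract x - 1 / 2
noncomputable def Bq (x : ℝ) : ℝ := Int.fract x ^ 2 - Int.fract x + 1 / 6
noncomputable def sawS (η x : ℝ) : ℝ := (Bq (x + η) - Bq x) / (2 * η)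

lemma sawS_lower (η x : ℝ) (h0 : 0 < η) (h1 : η ≤ 1) : sawS η x - η / 2 ≤ saw x := by
  have t0 := Int.fract_nonneg x
  have t1 := Int.fract_lt_one x
  unfold sawS saw Bq
  rw [sub_le_iff_le_add, div_le_iff₀ (by linarith)]
  by_cases hc : Int.fract x + η < 1
  · have e : Int.fract (x + η) = Int.fract x + η := by
      rw [Int.fract_eq_iff]
      exact ⟨by linarith, hc, ⌊x⌋, by rw [Int.fract]; ring⟩
    rw [e]; nlinarith
  · push Not at hc
    have e : Int.fract (x + η) = Int.fract x + η - 1 := by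
      rw [Int.fract_eq_iff]
      exact ⟨by linarith, by linarith, ⌊x⌋ + 1, by rw [Int.fract]; push_cast; ring⟩
    rw [e]; nlinarith

lemma sawS_upper (η x : ℝ) (h0 : 0 < η) (h1 : η ≤ 1) : saw x ≤ sawS η (x - η) + η / 2 := by
  have t0 := Int.fract_nonneg x
  have t1 := Int.fract_lt_one x
  unfold sawS saw Bq
  rw [sub_add_cancel, ← sub_le_iff_le_add, le_div_iff₀ (by linarith)]
  by_cases hc : η ≤ Int.fract x
  · have e : Int.fract (x - η) = Int.fract x - η := by
      rw [Int.fract_eq_iff]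
      exact ⟨by linarith, by linarith, ⌊x⌋, by rw [Int.fract]; ring⟩
    rw [e]; nlinarith
  · push Not at hc
    have e : Int.fract (x - η) = Int.fract x - η + 1 := by
      rw [Int.fract_eq_iff]
      exact ⟨by linarith, by linarith, ⌊x⌋ - 1, by rw [Int.fract]; push_cast; ring⟩
    rw [e]; nlinarith

lemma saw_err (η x : ℝ) (h0 : 0 < η) (h1 : η ≤ 1) :
    |saw x - sawS η x| ≤ sawS η (x - η) - sawS η x + 3 / 2 * η := by
  have a := sawS_lower η x h0 h1
  have b := sawS_upper η x h0 h1
  rw [abs_le]; constructor <;> linarith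

lemma Bq_hasSum (x : ℝ) : HasSum (fun n : ℕ => 1 / (n : ℝ) ^ 2 * Real.cos (2 * Real.pi * n * x)) (Real.pi ^ 2 * Bq x) := by
  have h := hasSum_one_div_nat_pow_mul_cos (k := 1) one_ne_zero (x := Int.fract x)
    ⟨Int.fract_nonneg x, (Int.fract_lt_one x).le⟩
  have e1 : (fun n : ℕ => 1 / (n : ℝ) ^ 2 * Real.cos (2 * Real.pi * n * x)) =
      (fun n : ℕ => 1 / (n : ℝ) ^ (2 * 1) * Real.cos (2 * Real.pi * n * Int.fract x)) := by
    funext n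
    have : 2 * Real.pi * n * Int.fract x = 2 * Real.pi * n * x - ((n * ⌊x⌋ : ℤ) : ℝ) * (2 * Real.pi) := by
      rw [Int.fract]; push_cast; ring
    rw [this, Real.cos_sub_int_mul_two_pi]
  rw [e1]
  convert h using 1
  have : Polynomial.eval (Int.fract x) (Polynomial.map (algebraMap ℚ ℝ) (Polynomial.bernoulli (2 * 1))) = Bq x := by
    unfold Bq
    simp [Polynomial.bernoulli, Finset.sum_range_succ, bernoulli_one, bernoulli_two, bernoulli_zero]
    ring
  rw [this]
  simp only [Nat.factorial]
  push_cast
  ring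

lemma sawS_hasSum (η x : ℝ) : HasSum (fun n : ℕ => (1 / (2 * Real.pi ^ 2 * η)) * (1 / (n : ℝ) ^ 2 * (Real.cos (2 * Real.pi * n * (x + η)) - Real.cos (2 * Real.pi * n * x))))
    (sawS η x) := by
  have h := ((Bq_hasSum (x + η)).sub (Bq_hasSum x)).mul_left (1 / (2 * Real.pi ^ 2 * η))
  have e1 : (fun n : ℕ => (1 / (2 * Real.pi ^ 2 * η)) * (1 / (n : ℝ) ^ 2 * (Real.cos (2 * Real.pi * n * (x + η)) - Real.cos (2 * Real.pi * n * x)))) =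
      fun n : ℕ => (1 / (2 * Real.pi ^ 2 * η)) * (1 / (n : ℝ) ^ 2 * Real.cos (2 * Real.pi * n * (x + η)) - 1 / (n : ℝ) ^ 2 * Real.cos (2 * Real.pi * n * x)) := by
    funext n; ring
  have e2 : sawS η x = 1 / (2 * Real.pi ^ 2 * η) * (Real.pi ^ 2 * Bq (x + η) - Real.pi ^ 2 * Bq x) := by
    unfold sawS
    have := Real.pi_pos
    by_cases hη : η = 0
    · subst hη; simp
    field_simp
  rw [e1, e2]
  exact h

lemma cos_eexp (y : ℝ) : ((Real.cos (2 * Real.pi * y) : ℝ) : ℂ) = (eexp y + eexp (-y)) / 2 := by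
  rw [eexp_eq_cos_sin, eexp_eq_cos_sin]
  rw [show 2 * Real.pi * -y = -(2 * Real.pi * y) by ring, Real.cos_neg, Real.sin_neg]
  push_cast; ring

lemma eexp_sub_one (y : ℝ) : ‖eexp y - 1‖ ≤ 2 * Real.pi * |y| := by
  unfold eexp
  rw [show (2 * Real.pi * Complex.I * y : ℂ) = Complex.I * ((2 * Real.pi * y : ℝ) : ℂ) by push_cast; ring]
  refine Real.norm_exp_I_mul_ofReal_sub_one_le.trans ?_
  rw [Real.norm_eq_abs, abs_mul, abs_of_pos (by have := Real.pi_pos; positivity)]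

lemma lemF (S : Finset ℕ) (z : ℕ → ℂ) (x : ℕ → ℝ) (η s : ℝ) (hη : 0 < η) (H : ℕ) (B I : ℝ) (hB : 0 ≤ B)
    (hI : ∑ n ∈ S, ‖z n‖ ≤ I)
    (h1 : ∀ h : ℕ, 1 ≤ h → h ≤ H → ‖∑ n ∈ S, z n * eexp (h * x n)‖ ≤ B)
    (h2 : ∀ h : ℕ, 1 ≤ h → h ≤ H → ‖∑ n ∈ S, z n * eexp (-(h * x n))‖ ≤ B) :
    ‖∑ n ∈ S, z n * ((sawS η (x n + s) : ℝ) : ℂ)‖ ≤ (1 + Real.log ((H + 1 : ℕ) : ℝ)) * B + I / ((H + 1) * η) := by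
  have hpi := Real.pi_gt_three
  have hI0 : 0 ≤ I := le_trans (Finset.sum_nonneg fun _ _ => norm_nonneg _) hI
  set c : ℕ → ℝ → ℝ := fun h y => (1 / (2 * Real.pi ^ 2 * η)) * (1 / (h : ℝ) ^ 2 * (Real.cos (2 * Real.pi * h * (y + η)) - Real.cos (2 * Real.pi * h * y))) with hc
  have hs : HasSum (fun h : ℕ => ∑ n ∈ S, z n * ((c h (x n + s) : ℝ) : ℂ)) (∑ n ∈ S, z n * ((sawS η (x n + s) : ℝ) : ℂ)) := by
    apply hasSum_sum
    intro n _
    apply HasSum.mul_left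
    exact Complex.hasSum_ofReal.mpr (sawS_hasSum η (x n + s))
  have ht := hs.tendsto_sum_nat.norm
  refine le_of_tendsto ht (Filter.Eventually.of_forall fun K => ?_)
  -- small h
  have bs : ∀ h : ℕ, 1 ≤ h → h ≤ H → ‖∑ n ∈ S, z n * ((c h (x n + s) : ℝ) : ℂ)‖ ≤ B * (1 / h) := by
    intro h hh hH
    have hh0 : (0 : ℝ) < h := by exact_mod_cast hh
    set k : ℝ := (1 / (2 * Real.pi ^ 2 * η)) * (1 / (h : ℝ) ^ 2) / 2 with hk
    have hk0 : 0 ≤ k := by positivity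
    have e : ∑ n ∈ S, z n * ((c h (x n + s) : ℝ) : ℂ) =
        (k : ℂ) * ((eexp (h * s) * (eexp (h * η) - 1)) * ∑ n ∈ S, z n * eexp (h * x n)
        + (eexp (-(h * s)) * (eexp (-(h * η)) - 1)) * ∑ n ∈ S, z n * eexp (-(h * x n))) := by
      rw [Finset.mul_sum, Finset.mul_sum, ← Finset.sum_add_distrib, Finset.mul_sum]
      refine Finset.sum_congr rfl fun n _ => ?_
      have : c h (x n + s) = k * 2 * (Real.cos (2 * Real.pi * (h * x n + h * s + h * η)) - Real.cos (2 * Real.pi * (h * x n + h * s))) := by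
        rw [hc, hk]; dsimp only
        rw [show 2 * Real.pi * h * (x n + s + η) = 2 * Real.pi * (h * x n + h * s + h * η) by ring,
          show 2 * Real.pi * h * (x n + s) = 2 * Real.pi * (h * x n + h * s) by ring]
        ring
      rw [this, Complex.ofReal_mul, Complex.ofReal_sub, cos_eexp, cos_eexp]
      rw [show -(h * x n + h * s + h * η) = -(h * x n) + -(h * s) + -(h * η) by ring,
        show -(h * x n + h * s) = -(h * x n) + -(h * s) by ring]
      simp only [eexp_add]
      push_cast; ring
    rw [e, norm_mul, Complex.norm_real, Real.norm_eq_abs, abs_of_nonneg hk0]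
    have d1 : ‖eexp (h * s) * (eexp (h * η) - 1)‖ ≤ 2 * Real.pi * (h * η) := by
      rw [norm_mul, eexp_norm, one_mul]
      refine (eexp_sub_one _).trans (le_of_eq ?_)
      rw [abs_of_pos (by positivity)]
    have d2 : ‖eexp (-(h * s)) * (eexp (-(h * η)) - 1)‖ ≤ 2 * Real.pi * (h * η) := by
      rw [norm_mul, eexp_norm, one_mul]
      refine (eexp_sub_one _).trans (le_of_eq ?_)
      rw [abs_neg, abs_of_pos (by positivity)]
    calc k * _ ≤ k * (2 * Real.pi * (h * η) * B + 2 * Real.pi * (h * η) * B) := by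
          gcongr
          refine (norm_add_le _ _).trans ?_
          refine add_le_add ?_ ?_
          · rw [norm_mul]
            exact mul_le_mul d1 (h1 h hh hH) (norm_nonneg _) (by positivity)
          · rw [norm_mul]
            exact mul_le_mul d2 (h2 h hh hH) (norm_nonneg _) (by positivity)
      _ = B * (1 / h) * (1 / Real.pi) := by rw [hk]; field_simp; ring
      _ ≤ B * (1 / h) * 1 := by
          gcongr
          rw [div_le_one (by linarith)]; linarith
      _ = _ := mul_one _
  have bl : ∀ h : ℕ, ‖∑ n ∈ S, z n * ((c h (x n + s) : ℝ) : ℂ)‖ ≤ I / (2 * η) * ((h : ℝ) ^ 2)⁻¹ := by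
    intro h
    have hb : ∀ y, |c h y| ≤ 1 / (2 * η) * ((h : ℝ) ^ 2)⁻¹ := by
      intro y
      rw [hc]; dsimp only
      rw [abs_mul, abs_mul, abs_of_nonneg (by positivity : (0 : ℝ) ≤ 1 / (2 * Real.pi ^ 2 * η)),
        abs_of_nonneg (by positivity : (0 : ℝ) ≤ 1 / (h : ℝ) ^ 2)]
      have : |Real.cos (2 * Real.pi * h * (y + η)) - Real.cos (2 * Real.pi * h * y)| ≤ 2 := by
        have a1 := Real.abs_cos_le_one (2 * Real.pi * h * (y + η))
        have a2 := Real.abs_cos_le_one (2 * Real.pi * h * y)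
        rw [abs_le] at *; constructor <;> linarith
      have q : 1 / (2 * Real.pi ^ 2 * η) * 2 ≤ 1 / (2 * η) := by
        rw [div_mul_eq_mul_div, div_le_div_iff₀ (by positivity) (by positivity)]
        nlinarith [mul_pos hη hη, mul_le_mul_of_nonneg_right (by nlinarith : (4 : ℝ) ≤ 2 * Real.pi ^ 2) hη.le]
      calc _ ≤ 1 / (2 * Real.pi ^ 2 * η) * (1 / (h : ℝ) ^ 2 * 2) := by gcongr
        _ = (1 / (2 * Real.pi ^ 2 * η) * 2) * ((h : ℝ) ^ 2)⁻¹ := by ring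
        _ ≤ _ := by gcongr
    refine (norm_sum_le _ _).trans ?_
    calc ∑ n ∈ S, ‖z n * ((c h (x n + s) : ℝ) : ℂ)‖ ≤ ∑ n ∈ S, ‖z n‖ * (1 / (2 * η) * ((h : ℝ) ^ 2)⁻¹) := by
          refine Finset.sum_le_sum fun n _ => ?_
          rw [norm_mul, Complex.norm_real, Real.norm_eq_abs]
          gcongr
          exact hb _
      _ = (∑ n ∈ S, ‖z n‖) * (1 / (2 * η) * ((h : ℝ) ^ 2)⁻¹) := by rw [Finset.sum_mul]
      _ ≤ I * (1 / (2 * η) * ((h : ℝ) ^ 2)⁻¹) := by gcongr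
      _ = _ := by ring
  have hterm : ∀ h ∈ Finset.range K, ‖∑ n ∈ S, z n * ((c h (x n + s) : ℝ) : ℂ)‖ ≤
      (if h ∈ Finset.Ioo 0 (H + 1) then B * (1 / h) else 0) + (if h ∈ Finset.Ioo H K then I / (2 * η) * ((h : ℝ) ^ 2)⁻¹ else 0) := by
    intro h hh
    rw [Finset.mem_range] at hh
    by_cases c1 : h ∈ Finset.Ioo 0 (H + 1)
    · have := c1
      rw [Finset.mem_Ioo] at c1
      rw [if_pos this, if_neg (by rw [Finset.mem_Ioo]; omega), add_zero]
      exact bs h (by omega) (by omega)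
    · rw [if_neg c1, zero_add]
      rw [Finset.mem_Ioo] at c1
      by_cases c2 : h = 0
      · subst c2
        have := bl 0
        simp only [Nat.cast_zero, ne_eq, OfNat.ofNat_ne_zero, not_false_eq_true, zero_pow, inv_zero, mul_zero] at this ⊢
        simpa using this
      · rw [if_pos (by rw [Finset.mem_Ioo]; omega)]
        exact bl h
  refine (norm_sum_le_of_le _ hterm).trans ?_
  rw [Finset.sum_add_distrib]
  have g1 : ∑ h ∈ Finset.range K, (if h ∈ Finset.Ioo 0 (H + 1) then B * (1 / (h : ℝ)) else 0) ≤ (1 + Real.log ((H + 1 : ℕ) : ℝ)) * B := by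
    rw [← Finset.sum_filter]
    calc _ ≤ ∑ h ∈ Finset.Ioo 0 (H + 1), B * (1 / (h : ℝ)) := by
          apply Finset.sum_le_sum_of_subset_of_nonneg
          · intro a ha; exact (Finset.mem_filter.mp ha).2
          · intro i _ _; positivity
      _ = B * ∑ h ∈ Finset.Ioo 0 (H + 1), (1 / (h : ℝ)) := by rw [Finset.mul_sum]
      _ ≤ B * (1 + Real.log ((H + 1 : ℕ) : ℝ)) := by
          gcongr
          exact sum_inv_le (H + 1) (H + 1) le_rfl
      _ = _ := mul_comm _ _
  have g2 : ∑ h ∈ Finset.range K, (if h ∈ Finset.Ioo H K then I / (2 * η) * ((h : ℝ) ^ 2)⁻¹ else 0) ≤ I / ((H + 1) * η) := by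
    rw [← Finset.sum_filter]
    calc _ ≤ ∑ h ∈ Finset.Ioo H K, I / (2 * η) * ((h : ℝ) ^ 2)⁻¹ := by
          apply Finset.sum_le_sum_of_subset_of_nonneg
          · intro a ha; exact (Finset.mem_filter.mp ha).2
          · intro i _ _; positivity
      _ = I / (2 * η) * ∑ h ∈ Finset.Ioo H K, ((h : ℝ) ^ 2)⁻¹ := by rw [Finset.mul_sum]
      _ ≤ I / (2 * η) * (2 / (H + 1)) := by
          gcongr
          exact sum_Ioo_inv_sq_le H K
      _ = _ := by field_simp
  exact add_le_add g1 g2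

lemma saw_main (S : Finset ℕ) (z : ℕ → ℂ) (x : ℕ → ℝ) (η : ℝ) (hη : 0 < η) (hη1 : η ≤ 1) (H : ℕ) (B1 B2 W M : ℝ)
    (hB1 : 0 ≤ B1) (hB2 : 0 ≤ B2) (hW : 0 ≤ W) (hz : ∀ n ∈ S, ‖z n‖ ≤ W) (hM : (S.card : ℝ) ≤ M)
    (h1 : ∀ h : ℕ, 1 ≤ h → h ≤ H → ‖∑ n ∈ S, z n * eexp (h * x n)‖ ≤ B1)
    (h2 : ∀ h : ℕ, 1 ≤ h → h ≤ H → ‖∑ n ∈ S, z n * eexp (-(h * x n))‖ ≤ B1)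
    (h3 : ∀ h : ℕ, 1 ≤ h → h ≤ H → ‖∑ n ∈ S, eexp (h * x n)‖ ≤ B2)
    (h4 : ∀ h : ℕ, 1 ≤ h → h ≤ H → ‖∑ n ∈ S, eexp (-(h * x n))‖ ≤ B2) :
    ‖∑ n ∈ S, z n * ((saw (x n) : ℝ) : ℂ)‖ ≤ (1 + Real.log ((H + 1 : ℕ) : ℝ)) * (B1 + 2 * (W * B2))
      + 3 * (W * M) / ((H + 1) * η) + 3 / 2 * η * (W * M) := by
  have F1 := lemF S z x η 0 hη H B1 (W * M) hB1 (by
    calc ∑ n ∈ S, ‖z n‖ ≤ ∑ n ∈ S, W := Finset.sum_le_sum hz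
      _ = S.card * W := by rw [Finset.sum_const, nsmul_eq_mul]
      _ ≤ M * W := by gcongr
      _ = _ := mul_comm _ _) h1 h2
  have F2 : ∀ s, |∑ n ∈ S, sawS η (x n + s)| ≤ (1 + Real.log ((H + 1 : ℕ) : ℝ)) * B2 + M / ((H + 1) * η) := by
    intro s
    have := lemF S (fun _ => 1) x η s hη H B2 M hB2 (by simpa using hM) (by simpa using h3) (by simpa using h4)
    rw [← Real.norm_eq_abs, ← Complex.norm_real]
    push_cast
    simpa using this
  simp only [add_zero] at F1
  have e : ∑ n ∈ S, z n * ((saw (x n) : ℝ) : ℂ) = ∑ n ∈ S, z n * ((sawS η (x n) : ℝ) : ℂ)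
      + ∑ n ∈ S, z n * ((saw (x n) - sawS η (x n) : ℝ) : ℂ) := by
    rw [← Finset.sum_add_distrib]
    refine Finset.sum_congr rfl fun n _ => ?_
    push_cast; ring
  have G : ‖∑ n ∈ S, z n * ((saw (x n) - sawS η (x n) : ℝ) : ℂ)‖ ≤
      W * (2 * ((1 + Real.log ((H + 1 : ℕ) : ℝ)) * B2 + M / ((H + 1) * η)) + 3 / 2 * η * M) := by
    refine (norm_sum_le _ _).trans ?_
    calc ∑ n ∈ S, ‖z n * ((saw (x n) - sawS η (x n) : ℝ) : ℂ)‖ ≤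
        ∑ n ∈ S, W * (sawS η (x n - η) - sawS η (x n) + 3 / 2 * η) := by
          refine Finset.sum_le_sum fun n hn => ?_
          rw [norm_mul, Complex.norm_real, Real.norm_eq_abs]
          exact mul_le_mul (hz n hn) (saw_err η (x n) hη hη1) (abs_nonneg _) hW
      _ = W * (∑ n ∈ S, sawS η (x n + -η) - ∑ n ∈ S, sawS η (x n + 0) + S.card * (3 / 2 * η)) := by
          rw [← Finset.mul_sum, Finset.sum_add_distrib, Finset.sum_sub_distrib, Finset.sum_const, nsmul_eq_mul]
          simp only [add_zero, sub_eq_add_neg]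
      _ ≤ _ := by
          have q1 := (abs_le.mp (F2 (-η))).2
          have q2 := (abs_le.mp (F2 0)).1
          have q3 : (S.card : ℝ) * (3 / 2 * η) ≤ M * (3 / 2 * η) := by gcongr
          apply mul_le_mul_of_nonneg_left _ hW
          linarith
  rw [e]
  refine (norm_add_le _ _).trans ((add_le_add F1 G).trans (le_of_eq ?_))
  ring


lemma block_saw (γ δ : ℝ) (hγ : 97 / 100 < γ) (hγ1 : γ < 1) (hδ : 0 < δ)
    (hθ : (1 - γ) + δ ≤ 2684 / 100000) :
    ∃ C : ℝ, 1 ≤ C ∧ ∀ Z Z' : ℕ, 1 ≤ Z → Z' ≤ 2 * Z → ∀ α u : ℝ, 0 ≤ u → u ≤ 1 →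
      ‖∑ n ∈ Finset.Ioc Z Z', ((((n : ℝ) ^ (1 - γ) : ℝ) : ℂ) * ((if n.Prime then 1 else 0) * eexp (α * (n : ℝ) ^ 3)))
        * ((saw (-((n : ℝ) + u) ^ γ) : ℝ) : ℂ)‖ ≤ C * (Z : ℝ) ^ (1 - δ - 3 / 10000) := by
  obtain ⟨C1, hC1, H1⟩ := primes_bound γ hγ hγ1
  obtain ⟨C2, hC2, H2⟩ := all_bound γ hγ hγ1
  refine ⟨10002 * (C1 + 4 * C2) + 6 + 3, by linarith, ?_⟩
  intro Z Z' hZ hZ' α u hu0 hu1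
  have hZr : (1 : ℝ) ≤ Z := by exact_mod_cast hZ
  have hZ0 : (0 : ℝ) < Z := by linarith
  set η : ℝ := (Z : ℝ) ^ (-((1 - γ) + δ + 3 / 10000)) with hη
  have hη0 : 0 < η := by positivity
  have hη1 : η ≤ 1 := Real.rpow_le_one_of_one_le_of_nonpos hZr (by linarith)
  set H : ℕ := ⌊(Z : ℝ) ^ (1 / 16 : ℝ)⌋₊ with hH
  have hHle : (H : ℝ) ≤ (Z : ℝ) ^ (1 / 16 : ℝ) := Nat.floor_le (by positivity)
  have hHge : (Z : ℝ) ^ (1 / 16 : ℝ) ≤ H + 1 := (Nat.lt_floor_add_one _).le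
  set V : ℝ := (Z : ℝ) ^ (1 - 275 / 10000 : ℝ) with hV
  set G : ℝ := (Z : ℝ) ^ (1 - γ) with hG
  have hV0 : 0 < V := by positivity
  have hG0 : 0 < G := by positivity
  have hh : ∀ h : ℕ, 1 ≤ h → h ≤ H → (1 : ℝ) ≤ |(h : ℝ)| ∧ |(h : ℝ)| ≤ (Z : ℝ) ^ (1 / 16 : ℝ) := by
    intro h h1 h2
    rw [abs_of_nonneg (by positivity)]
    refine ⟨by exact_mod_cast h1, le_trans (by exact_mod_cast h2) hHle⟩
  have hcast : ∀ n : ℕ, Z < n → n ≤ Z' → (n : ℝ) ^ (1 - γ) ≤ 2 * G := by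
    intro n _ hn
    have hz : (n : ℝ) ≤ 2 * Z := by exact_mod_cast hn.trans hZ'
    calc (n : ℝ) ^ (1 - γ) ≤ (2 * (Z : ℝ)) ^ (1 - γ) := Real.rpow_le_rpow (by positivity) hz (by linarith)
      _ = 2 ^ (1 - γ) * G := by rw [Real.mul_rpow (by norm_num) (by positivity)]
      _ ≤ 2 ^ (1 : ℝ) * G := by
        have := Real.rpow_le_rpow_of_exponent_le (by norm_num : (1 : ℝ) ≤ 2) (by linarith : (1 - γ : ℝ) ≤ 1)
        gcongr
      _ = _ := by rw [Real.rpow_one]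
  have eF : ∀ (a h : ℝ) (n : ℕ), eexp (a * (n : ℝ) ^ 3) * eexp (h * (-((n : ℝ) + u) ^ γ)) = Fph γ a h u n := by
    intro a h n
    rw [← eexp_add]; unfold Fph; congr 1; ring
  have eF0 : ∀ (h : ℝ) (n : ℕ), eexp (h * (-((n : ℝ) + u) ^ γ)) = Fph γ 0 h u n := by
    intro h n
    unfold Fph; congr 1; ring
  have key := saw_main (Finset.Ioc Z Z')
    (fun n => (((n : ℝ) ^ (1 - γ) : ℝ) : ℂ) * ((if n.Prime then 1 else 0) * eexp (α * (n : ℝ) ^ 3)))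
    (fun n => -((n : ℝ) + u) ^ γ) η hη0 hη1 H (C1 * (G * V)) (C2 * V) (2 * G) Z
    (by positivity) (by positivity) (by positivity)
    (by
      intro n hn
      rw [Finset.mem_Ioc] at hn
      rw [norm_mul, norm_mul, eexp_norm, mul_one, Complex.norm_real, Real.norm_eq_abs, abs_of_nonneg (by positivity)]
      have : ‖(if n.Prime then (1 : ℂ) else 0)‖ ≤ 1 := by split_ifs <;> simp
      calc (n : ℝ) ^ (1 - γ) * ‖(if n.Prime then (1 : ℂ) else 0)‖ ≤ (n : ℝ) ^ (1 - γ) * 1 := by gcongr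
        _ ≤ _ := by rw [mul_one]; exact hcast n hn.1 hn.2)
    (by rw [Nat.card_Ioc]; exact_mod_cast (by omega : Z' - Z ≤ Z))
    (by
      intro h h1 h2
      obtain ⟨q1, q2⟩ := hh h h1 h2
      refine le_trans (le_of_eq ?_) (H1 Z Z' hZ hZ' α h u q1 q2 hu0 hu1)
      congr 1
      refine Finset.sum_congr rfl fun n _ => ?_
      rw [← eF]; ring)
    (by
      intro h h1 h2
      obtain ⟨q1, q2⟩ := hh h h1 h2
      refine le_trans (le_of_eq ?_) (H1 Z Z' hZ hZ' α (-h) u (by rwa [abs_neg]) (by rwa [abs_neg]) hu0 hu1)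
      congr 1
      refine Finset.sum_congr rfl fun n _ => ?_
      rw [← eF, ← neg_mul]; ring)
    (by
      intro h h1 h2
      obtain ⟨q1, q2⟩ := hh h h1 h2
      refine le_trans (le_of_eq ?_) (H2 Z Z' hZ hZ' h u q1 q2 hu0 hu1)
      congr 1
      exact Finset.sum_congr rfl fun n _ => eF0 _ _)
    (by
      intro h h1 h2
      obtain ⟨q1, q2⟩ := hh h h1 h2
      refine le_trans (le_of_eq ?_) (H2 Z Z' hZ hZ' (-h) u (by rwa [abs_neg]) (by rwa [abs_neg]) hu0 hu1)
      congr 1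
      refine Finset.sum_congr rfl fun n _ => ?_
      rw [← eF0, ← neg_mul])
  refine key.trans ?_
  set T : ℝ := (Z : ℝ) ^ (1 - δ - 3 / 10000) with hT
  set E : ℝ := (Z : ℝ) ^ (1 / 10000 : ℝ) with hE
  have hE1 : 1 ≤ E := Real.one_le_rpow hZr (by norm_num)
  have hlog : 1 + Real.log ((H + 1 : ℕ) : ℝ) ≤ 10002 * E := by
    have h1 : ((H + 1 : ℕ) : ℝ) ≤ 2 * Z := by
      push_cast
      have : (Z : ℝ) ^ (1 / 16 : ℝ) ≤ (Z : ℝ) ^ (1 : ℝ) := Real.rpow_le_rpow_of_exponent_le hZr (by norm_num)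
      rw [Real.rpow_one] at this
      linarith
    have h2 : Real.log ((H + 1 : ℕ) : ℝ) ≤ Real.log (2 * Z) := Real.log_le_log (by positivity) h1
    rw [Real.log_mul (by norm_num) hZ0.ne'] at h2
    have := Real.log_le_rpow_div hZ0.le (by norm_num : (0 : ℝ) < 1 / 10000)
    have h8 := Real.log_two_lt_d9
    rw [← hE] at this
    linarith
  have t1 : E * (G * V) ≤ T := by
    rw [hE, hG, hV, hT, ← Real.rpow_add hZ0, ← Real.rpow_add hZ0]
    exact Real.rpow_le_rpow_of_exponent_le hZr (by linarith)
  have t2 : G * Z / ((H + 1) * η) ≤ T := by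
    calc G * Z / ((H + 1) * η) ≤ G * Z / ((Z : ℝ) ^ (1 / 16 : ℝ) * η) := by gcongr
      _ = (Z : ℝ) ^ ((1 - γ) + 1 - (1 / 16 + -((1 - γ) + δ + 3 / 10000))) := by
        rw [Real.rpow_sub hZ0, Real.rpow_add hZ0, Real.rpow_add hZ0, Real.rpow_one]
      _ ≤ T := Real.rpow_le_rpow_of_exponent_le hZr (by linarith)
  have t3 : η * (G * Z) ≤ T := by
    have : η * (G * Z) = (Z : ℝ) ^ (-((1 - γ) + δ + 3 / 10000) + ((1 - γ) + 1)) := by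
      rw [Real.rpow_add hZ0, Real.rpow_add hZ0, Real.rpow_one]
    rw [this]
    exact Real.rpow_le_rpow_of_exponent_le hZr (by linarith)
  have hpos : 0 ≤ C1 * (G * V) + 2 * (2 * G * (C2 * V)) := by positivity
  calc _ ≤ (10002 * E) * (C1 * (G * V) + 2 * (2 * G * (C2 * V))) + 3 * (2 * G * Z) / ((H + 1) * η) + 3 / 2 * η * (2 * G * Z) := by
        gcongr
    _ = 10002 * (C1 + 4 * C2) * (E * (G * V)) + 6 * (G * Z / ((H + 1) * η)) + 3 * (η * (G * Z)) := by ring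
    _ ≤ 10002 * (C1 + 4 * C2) * T + 6 * T + 3 * T := by gcongr
    _ = _ := by ring

lemma ind_eq (γ : ℝ) (hγ : 0 < γ) (hγ1 : γ ≤ 1) (p : ℕ) (hp : p.Prime) :
    (if p ∈ PiatetskiShapiroSet γ then (1 : ℝ) else 0) =
      ((p : ℝ) + 1) ^ γ - (p : ℝ) ^ γ + saw (-((p : ℝ) + 1) ^ γ) - saw (-((p : ℝ) + 0) ^ γ) := by
  rw [add_zero]
  set a : ℝ := (p : ℝ) ^ γ with ha
  set b : ℝ := ((p : ℝ) + 1) ^ γ with hb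
  have hp1 : (1 : ℝ) ≤ p := by exact_mod_cast hp.one_lt.le
  have hab : a ≤ b := Real.rpow_le_rpow (by positivity) (by linarith) hγ.le
  have ha1 : 1 ≤ a := Real.one_le_rpow hp1 hγ.le
  have hba : b ≤ a + 1 := by
    have := Real.rpow_add_le_add_rpow (by positivity : (0 : ℝ) ≤ p) zero_le_one hγ.le hγ1
    rwa [Real.one_rpow] at this
  have hmem : p ∈ PiatetskiShapiroSet γ ↔ ∃ k : ℕ, a ≤ k ∧ (k : ℝ) < b := by
    have iff1 : ∀ k : ℕ, p = ⌊(k : ℝ) ^ ((1 : ℝ) / γ)⌋₊ ↔ (a ≤ k ∧ (k : ℝ) < b) := by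
      intro k
      rw [eq_comm, Nat.floor_eq_iff (by positivity)]
      have i1 : (p : ℝ) ≤ (k : ℝ) ^ ((1 : ℝ) / γ) ↔ a ≤ k := by
        rw [one_div, Real.le_rpow_inv_iff_of_pos (by positivity) (by positivity) hγ]
      have i2 : (k : ℝ) ^ ((1 : ℝ) / γ) < (p : ℝ) + 1 ↔ (k : ℝ) < b := by
        rw [one_div, Real.rpow_inv_lt_iff_of_pos (by positivity) (by positivity) hγ]
      rw [i1, i2]
    constructor
    · rintro ⟨_, k, _, hk⟩
      exact ⟨k, (iff1 k).mp hk⟩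
    · rintro ⟨k, hk⟩
      refine ⟨hp, k, ?_, (iff1 k).mpr hk⟩
      have : (0 : ℝ) < k := by linarith [hk.1]
      exact_mod_cast this
  have hs : ∀ y : ℝ, saw (-y) = -y + ⌈y⌉ - 1 / 2 := by
    intro y
    unfold saw
    rw [Int.fract, Int.floor_neg]; push_cast; ring
  rw [hs, hs]
  have c1 : ⌈a⌉ ≤ ⌈b⌉ := Int.ceil_mono hab
  have c2 : ⌈b⌉ ≤ ⌈a⌉ + 1 := by
    rw [← Int.ceil_add_one]; exact Int.ceil_mono hba
  have c3 : 0 ≤ ⌈a⌉ := Int.ceil_nonneg (by linarith)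
  split_ifs with hm
  · obtain ⟨k, hk1, hk2⟩ := hmem.mp hm
    have d1 : ⌈a⌉ ≤ k := Int.ceil_le.mpr (by exact_mod_cast hk1)
    have d2 : (k : ℤ) < ⌈b⌉ := Int.lt_ceil.mpr (by exact_mod_cast hk2)
    have : ⌈b⌉ = ⌈a⌉ + 1 := by omega
    rw [this]; push_cast; ring
  · have : ⌈b⌉ = ⌈a⌉ := by
      by_contra hne
      apply hm
      rw [hmem]
      refine ⟨⌈a⌉.toNat, ?_, ?_⟩
      · have : ((⌈a⌉.toNat : ℤ) : ℝ) = (⌈a⌉ : ℝ) := by rw [Int.toNat_of_nonneg c3]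
        rw [← Int.cast_natCast, this]; exact Int.le_ceil a
      · have : ((⌈a⌉.toNat : ℤ) : ℝ) = (⌈a⌉ : ℝ) := by rw [Int.toNat_of_nonneg c3]
        rw [← Int.cast_natCast, this, ← Int.lt_ceil]; omega
    rw [this]; ring

lemma main_term (γ : ℝ) (hγ : 0 < γ) (hγ1 : γ ≤ 1) (n : ℕ) (hn : 1 ≤ n) :
    |γ⁻¹ * (n : ℝ) ^ (1 - γ) * (((n : ℝ) + 1) ^ γ - (n : ℝ) ^ γ) - 1| ≤ 1 / n := by
  have hn1 : (1 : ℝ) ≤ n := by exact_mod_cast hn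
  have hn0 : (0 : ℝ) < n := by linarith
  set t : ℝ := 1 / n with ht
  have ht0 : 0 < t := by positivity
  have e : (n : ℝ) ^ (1 - γ) * (((n : ℝ) + 1) ^ γ - (n : ℝ) ^ γ) = n * ((1 + t) ^ γ - 1) := by
    have h1 : (n : ℝ) + 1 = n * (1 + t) := by rw [ht]; field_simp
    rw [h1, Real.mul_rpow hn0.le (by positivity)]
    have h2 : (n : ℝ) ^ (1 - γ) * (n : ℝ) ^ γ = n := by
      rw [← Real.rpow_add hn0]; simp
    calc _ = ((n : ℝ) ^ (1 - γ) * (n : ℝ) ^ γ) * ((1 + t) ^ γ - 1) := by ring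
      _ = _ := by rw [h2]
  have up : (1 + t) ^ γ ≤ 1 + γ * t := rpow_one_add_le_one_add_mul_self (by linarith) hγ.le hγ1
  have up2 : (1 + t) ^ (1 - γ) ≤ 1 + (1 - γ) * t := rpow_one_add_le_one_add_mul_self (by linarith) (by linarith) (by linarith)
  have prod : (1 + t) ^ γ * (1 + t) ^ (1 - γ) = 1 + t := by
    rw [← Real.rpow_add (by linarith)]; simp
  have lo : 1 + γ * t * (1 - t) ≤ (1 + t) ^ γ := by
    by_contra hc
    push Not at hc
    have hq : 0 < (1 + t) ^ (1 - γ) := by positivity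
    have h1 : 1 + t < (1 + γ * t * (1 - t)) * (1 + (1 - γ) * t) := by
      rw [← prod]
      have : 0 ≤ 1 + γ * t * (1 - t) := by
        have : 0 < (1 + t) ^ γ := by positivity
        linarith
      calc _ < (1 + γ * t * (1 - t)) * (1 + t) ^ (1 - γ) := by gcongr
        _ ≤ _ := by gcongr
    have h2 : (1 + γ * t * (1 - t)) * (1 + (1 - γ) * t) = 1 + t - γ * t ^ 2 * (γ + (1 - γ) * t) := by ring
    have : 0 ≤ γ * t ^ 2 * (γ + (1 - γ) * t) := by
      have : 0 ≤ 1 - γ := by linarith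
      positivity
    linarith
  have hnt : (n : ℝ) * t = 1 := by rw [ht]; field_simp
  rw [mul_assoc, e]
  have u1 : γ⁻¹ * (n * ((1 + t) ^ γ - 1)) ≤ 1 := by
    calc γ⁻¹ * (n * ((1 + t) ^ γ - 1)) ≤ γ⁻¹ * (n * (γ * t)) := by gcongr; linarith
      _ = (γ⁻¹ * γ) * (n * t) := by ring
      _ = 1 := by rw [hnt, inv_mul_cancel₀ hγ.ne', one_mul]
  have u2 : 1 - t ≤ γ⁻¹ * (n * ((1 + t) ^ γ - 1)) := by
    calc 1 - t = (γ⁻¹ * γ) * (n * t) * (1 - t) := by rw [hnt, inv_mul_cancel₀ hγ.ne']; ring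
      _ = γ⁻¹ * (n * (γ * t * (1 - t))) := by ring
      _ ≤ _ := by gcongr; linarith
  rw [abs_le]; constructor <;> linarith


noncomputable def aTerm (γ α : ℝ) (n : ℕ) : ℂ :=
  (if n.Prime then 1 else 0) * eexp (α * (n : ℝ) ^ 3) *
    (((γ⁻¹ * (n : ℝ) ^ (1 - γ) * (if n ∈ PiatetskiShapiroSet γ then (1 : ℝ) else 0) - 1 : ℝ)) : ℂ)

lemma block_all (γ δ : ℝ) (hγ : 97 / 100 < γ) (hγ1 : γ < 1) (hδ : 0 < δ)
    (hθ : (1 - γ) + δ ≤ 2684 / 100000) :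
    ∃ C : ℝ, 1 ≤ C ∧ ∀ Z Z' : ℕ, 1 ≤ Z → Z' ≤ 2 * Z → ∀ α : ℝ,
      ‖∑ n ∈ Finset.Ioc Z Z', aTerm γ α n‖ ≤ C * (Z : ℝ) ^ (1 - δ - 3 / 10000) := by
  obtain ⟨C, hC, H⟩ := block_saw γ δ hγ hγ1 hδ hθ
  refine ⟨1 + 4 * C, by linarith, ?_⟩
  intro Z Z' hZ hZ' α
  have hZr : (1 : ℝ) ≤ Z := by exact_mod_cast hZ
  have hγ0 : 0 < γ := by linarith
  have hγi : γ⁻¹ ≤ 2 := by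
    rw [inv_le_comm₀ hγ0 (by norm_num)]; linarith
  set T : ℝ := (Z : ℝ) ^ (1 - δ - 3 / 10000) with hT
  have hT1 : 1 ≤ T := Real.one_le_rpow hZr (by linarith)
  have s1 := H Z Z' hZ hZ' α 1 zero_le_one le_rfl
  have s0 := H Z Z' hZ hZ' α 0 le_rfl zero_le_one
  set X : ℝ → ℕ → ℂ := fun u n => ((((n : ℝ) ^ (1 - γ) : ℝ) : ℂ) * ((if n.Prime then 1 else 0) * eexp (α * (n : ℝ) ^ 3)))
        * ((saw (-((n : ℝ) + u) ^ γ) : ℝ) : ℂ) with hX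
  have e : ∑ n ∈ Finset.Ioc Z Z', aTerm γ α n =
      ∑ n ∈ Finset.Ioc Z Z', (if n.Prime then 1 else 0) * eexp (α * (n : ℝ) ^ 3) *
        ((γ⁻¹ * (n : ℝ) ^ (1 - γ) * (((n : ℝ) + 1) ^ γ - (n : ℝ) ^ γ) - 1 : ℝ) : ℂ)
      + ((γ⁻¹ : ℝ) : ℂ) * (∑ n ∈ Finset.Ioc Z Z', X 1 n - ∑ n ∈ Finset.Ioc Z Z', X 0 n) := by
    rw [← Finset.sum_sub_distrib, Finset.mul_sum, ← Finset.sum_add_distrib]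
    refine Finset.sum_congr rfl fun n _ => ?_
    by_cases hp : n.Prime
    · unfold aTerm
      rw [ind_eq γ hγ0 hγ1.le n hp, hX]
      simp only [hp, if_true]
      generalize saw (-((n : ℝ) + 1) ^ γ) = A
      generalize saw (-((n : ℝ) + 0) ^ γ) = B
      generalize ((n : ℝ) + 1) ^ γ = D
      generalize (n : ℝ) ^ γ = D'
      generalize (n : ℝ) ^ (1 - γ) = D''
      push_cast; ring
    · unfold aTerm
      rw [hX]; simp [hp]
  have m : ‖∑ n ∈ Finset.Ioc Z Z', (if n.Prime then 1 else 0) * eexp (α * (n : ℝ) ^ 3) *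
        ((γ⁻¹ * (n : ℝ) ^ (1 - γ) * (((n : ℝ) + 1) ^ γ - (n : ℝ) ^ γ) - 1 : ℝ) : ℂ)‖ ≤ 1 := by
    have hb : ∀ n ∈ Finset.Ioc Z Z', ‖(if n.Prime then 1 else 0) * eexp (α * (n : ℝ) ^ 3) *
        ((γ⁻¹ * (n : ℝ) ^ (1 - γ) * (((n : ℝ) + 1) ^ γ - (n : ℝ) ^ γ) - 1 : ℝ) : ℂ)‖ ≤ 1 / Z := by
      intro n hn
      rw [Finset.mem_Ioc] at hn
      rw [norm_mul, norm_mul, eexp_norm, mul_one, Complex.norm_real, Real.norm_eq_abs]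
      have h1 : ‖(if n.Prime then (1 : ℂ) else 0)‖ ≤ 1 := by split_ifs <;> simp
      have h2 := main_term γ hγ0 hγ1.le n (by omega)
      have h3 : (1 : ℝ) / n ≤ 1 / Z := by
        have : (Z : ℝ) ≤ n := by exact_mod_cast hn.1.le
        apply one_div_le_one_div_of_le (by linarith) this
      calc _ ≤ 1 * (1 / (n : ℝ)) := mul_le_mul h1 h2 (abs_nonneg _) zero_le_one
        _ ≤ _ := by rw [one_mul]; exact h3
    refine (norm_sum_le_of_le _ hb).trans ?_
    rw [Finset.sum_const, nsmul_eq_mul, Nat.card_Ioc]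
    have : ((Z' - Z : ℕ) : ℝ) ≤ Z := by exact_mod_cast (by omega : Z' - Z ≤ Z)
    rw [mul_one_div, div_le_one (by linarith)]; exact this
  rw [e]
  refine (norm_add_le _ _).trans ?_
  rw [norm_mul, Complex.norm_real, Real.norm_eq_abs, abs_of_pos (inv_pos.mpr hγ0)]
  have d : ‖∑ n ∈ Finset.Ioc Z Z', X 1 n - ∑ n ∈ Finset.Ioc Z Z', X 0 n‖ ≤ C * T + C * T :=
    (norm_sub_le _ _).trans (add_le_add s1 s0)
  calc _ ≤ 1 + 2 * (C * T + C * T) := by gcongr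
    _ ≤ T + 4 * C * T := by linarith
    _ = _ := by ring

lemma cumul (γ δ : ℝ) (hγ : 97 / 100 < γ) (hγ1 : γ < 1) (hδ : 0 < δ)
    (hθ : (1 - γ) + δ ≤ 2684 / 100000) :
    ∃ C : ℝ, 1 ≤ C ∧ ∀ α : ℝ, ∀ X : ℕ,
      ‖∑ n ∈ Finset.Ioc 0 X, aTerm γ α n‖ ≤ C * (X : ℝ) ^ (1 - δ - 3 / 10000) := by
  obtain ⟨C, hC, H⟩ := block_all γ δ hγ hγ1 hδ hθ
  refine ⟨10 * C, by linarith, ?_⟩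
  intro α X
  set e : ℝ := 1 - δ - 3 / 10000 with he
  have he2 : 1 / 2 ≤ e := by linarith
  induction X using Nat.strong_induction_on with
  | _ X ih =>
    rcases Nat.lt_or_ge X 2 with hX | hX
    · rw [Finset.sum_eq_zero]
      · rw [norm_zero]; positivity
      intro n hn
      rw [Finset.mem_Ioc] at hn
      have : n = 1 := by omega
      subst this
      simp [aTerm, Nat.not_prime_one]
    · obtain ⟨Z, hZ⟩ : ∃ Z, Z = (X + 1) / 2 := ⟨_, rfl⟩
      have hZ1 : 1 ≤ Z := by omega
      have hZX : Z < X := by omega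
      have hXZ : X ≤ 2 * Z := by omega
      have hZ4 : 4 * Z ≤ 3 * X := by omega
      have i1 := ih Z hZX
      have i2 := H Z X hZ1 hXZ α
      have hXr : (2 : ℝ) ≤ X := by exact_mod_cast hX
      have q1 : (Z : ℝ) ^ e ≤ 87 / 100 * (X : ℝ) ^ e := by
        have : (Z : ℝ) ≤ 3 / 4 * X := by
          have : (4 : ℝ) * Z ≤ 3 * X := by exact_mod_cast hZ4
          linarith
        calc (Z : ℝ) ^ e ≤ (3 / 4 * (X : ℝ)) ^ e := Real.rpow_le_rpow (by positivity) this (by linarith)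
          _ = (3 / 4) ^ e * (X : ℝ) ^ e := by rw [Real.mul_rpow (by norm_num) (by positivity)]
          _ ≤ (3 / 4) ^ (1 / 2 : ℝ) * (X : ℝ) ^ e := by
            have := Real.rpow_le_rpow_of_exponent_ge (by norm_num : (0 : ℝ) < 3 / 4) (by norm_num) he2
            gcongr
          _ ≤ _ := by
            rw [← Real.sqrt_eq_rpow]
            have : √(3 / 4 : ℝ) ≤ 87 / 100 := by
              rw [Real.sqrt_le_left (by norm_num)]; norm_num
            gcongr
      rw [← Finset.sum_Ioc_consecutive _ (Nat.zero_le Z) hZX.le]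
      refine (norm_add_le _ _).trans ((add_le_add i1 i2).trans ?_)
      have hXe : 0 ≤ (X : ℝ) ^ e := by positivity
      calc 10 * C * (Z : ℝ) ^ e + C * (Z : ℝ) ^ e = 11 * C * (Z : ℝ) ^ e := by ring
        _ ≤ 11 * C * (87 / 100 * (X : ℝ) ^ e) := by gcongr
        _ = (957 / 1000) * (10 * C * (X : ℝ) ^ e) := by ring
        _ ≤ 1 * (10 * C * (X : ℝ) ^ e) := by
          gcongr; norm_num
        _ = _ := one_mul _

lemma T_sub_S (γ : ℝ) (N : ℕ) (hN : 2 ≤ N) (α : ℝ) :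
    T₃ γ N α - S₃ N α = ∑ n ∈ Finset.Ioc 0 ⌊(N : ℝ) ^ ((1 : ℝ) / 3)⌋₊, aTerm γ α n := by
  have hN1 : (1 : ℝ) ≤ N := by exact_mod_cast (by omega : 1 ≤ N)
  have hP : (N : ℝ) ^ ((1 : ℝ) / 3) ≤ N := by
    have := Real.rpow_le_rpow_of_exponent_le hN1 (by norm_num : (1 : ℝ) / 3 ≤ 1)
    rwa [Real.rpow_one] at this
  have hset : Finset.Ioc 0 ⌊(N : ℝ) ^ ((1 : ℝ) / 3)⌋₊ =
      (Finset.range (N + 1)).filter (fun n : ℕ => 0 < n ∧ (n : ℝ) ≤ (N : ℝ) ^ ((1 : ℝ) / 3)) := by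
    ext n
    rw [Finset.mem_Ioc, Finset.mem_filter, Finset.mem_range, Nat.le_floor_iff (by positivity)]
    constructor
    · rintro ⟨h1, h2⟩
      have : (n : ℝ) ≤ N := h2.trans hP
      have : n ≤ N := by exact_mod_cast this
      exact ⟨by omega, h1, h2⟩
    · rintro ⟨_, h1, h2⟩; exact ⟨h1, h2⟩
  unfold T₃ S₃
  rw [hset, Finset.sum_filter, Finset.sum_filter, Finset.sum_filter, Finset.mul_sum, ← Finset.sum_sub_distrib]
  refine Finset.sum_congr rfl fun n _ => ?_
  by_cases hp : n.Prime
  · by_cases hle : (n : ℝ) ≤ (N : ℝ) ^ ((1 : ℝ) / 3)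
    · unfold aTerm
      simp only [hp, hp.pos, hle, and_true, if_true]
      split_ifs <;> push_cast <;> ring
    · simp only [hle, and_false, if_false, sub_zero, mul_zero]
  · have : n ∉ PiatetskiShapiroSet γ := fun h => hp h.1
    unfold aTerm
    simp [hp, this]

theorem T₃_approx_S₃ (γ δ : ℝ) (hγ : 0 < γ) (hγ' : γ ≤ 1) (hδ : 0 < δ)
    (h : 1714 * (1 - γ) + 1725 * δ < 46) :
    ∃ ε > (0 : ℝ), ∃ C > (0 : ℝ), ∀ N : ℕ, 2 ≤ N → ∀ α : ℝ,
      ‖T₃ γ N α - S₃ N α‖ ≤ C * ((N : ℝ) ^ ((1 : ℝ) / 3)) ^ (1 - δ - ε) := by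
  rcases hγ'.lt_or_eq with hlt | heq
  · obtain ⟨C, hC, H⟩ := cumul γ δ (by linarith) hlt hδ (by linarith)
    refine ⟨3 / 10000, by norm_num, C, by linarith, ?_⟩
    intro N hN α
    rw [T_sub_S γ N hN α]
    refine (H α _).trans ?_
    have : ((⌊(N : ℝ) ^ ((1 : ℝ) / 3)⌋₊ : ℕ) : ℝ) ≤ (N : ℝ) ^ ((1 : ℝ) / 3) := Nat.floor_le (by positivity)
    have := Real.rpow_le_rpow (by positivity) this (by linarith : (0 : ℝ) ≤ 1 - δ - 3 / 10000)
    gcongr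
  · subst heq
    refine ⟨1, one_pos, 1, one_pos, ?_⟩
    intro N hN α
    rw [T_sub_S 1 N hN α, Finset.sum_eq_zero]
    · rw [norm_zero]; positivity
    intro n _
    unfold aTerm
    by_cases hp : n.Prime
    · have : n ∈ PiatetskiShapiroSet 1 := ⟨hp, n, hp.pos, by simp⟩
      simp [this]
    · simp [hp]
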